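/- For any triple (M,R,I), where R is a finitely generated ℕ-graded algebra over a field k of characteristic p > 0, I ⊆ R is a homogeneous ideal with R/I of finite length, and M is a finitely generated ℤ-graded R-module, the sequence of functions F_n(M,R,I,dim M) converges at every complex number y; moreover the convergence is uniform on every compact subset of the complex plane, and the limit function is entire (holomorphic on all of ℂ). -/

import Mathlib

open Filter Complex

noncomputable section

/-- The Frobenius bracket power `I^{[q]}` of an ideal: the ideal generated by
`q`-th powers of elements of `I`. -/
def bracketPow {R : Type*} [CommSemiring R] (I : Ideal R) (q : ℕ) : Ideal R :=
  Ideal.span ((fun x : R => x ^ q) '' (I : Set R))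

/-- The dimension over `k` of the image of the degree-`j` graded piece `ℳ j` in the
quotient `M ⧸ N`, i.e. `λ_k((M/N)_j)` when `N` is a graded submodule. -/
def quotPieceDim (k : Type*) {R M : Type*} [Field k] [CommRing R] [Algebra k R]
    [AddCommGroup M] [Module R M] [Module k M] [IsScalarTower k R M]
    (ℳ : ℤ → Submodule k M) (N : Submodule R M) (j : ℤ) : ℕ :=
  Module.finrank k ((ℳ j).map (N.mkQ.restrictScalars k))

/-- `F_n(M,R,I,d)(y) = p^{-nd} Σ_{j∈ℤ} λ_k((M/I^{[p^n]}M)_j) e^{-iyj/p^n}`. -/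
def FnGen (k : Type*) {R M : Type*} [Field k] [CommRing R] [Algebra k R]
    [AddCommGroup M] [Module R M] [Module k M] [IsScalarTower k R M]
    (ℳ : ℤ → Submodule k M) (I : Ideal R) (p d n : ℕ) (y : ℂ) : ℂ :=
  (1 / (p : ℂ) ^ n) ^ d *
    ∑' j : ℤ, (quotPieceDim k (R := R) ℳ (bracketPow I (p ^ n) • ⊤) j : ℂ) *
      Complex.exp (-Complex.I * y * (j : ℂ) / (p : ℂ) ^ n)

section rdsec
variable {k V V' : Type*} [Field k] [AddCommGroup V'] [Module k V'] [AddCommGroup V] [Module k V]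

/-- The dimension of `U / (U ∩ W)`, as an extended natural number. -/
def rd (U W : Submodule k V) : ℕ∞ := Module.length k (U.map W.mkQ)

lemma rd_mono_left {U U' : Submodule k V} (W : Submodule k V) (h : U ≤ U') : rd U W ≤ rd U' W := by
  unfold rd
  exact Module.length_le_of_injective (Submodule.inclusion (Submodule.map_mono h))
    (Submodule.inclusion_injective _)

lemma rd_map (φ : V →ₗ[k] V') (U : Submodule k V) (W : Submodule k V') :
    rd (U.map φ) W = rd U (W.comap φ) := by
  unfold rd
  have hinj : Function.Injective (Submodule.mapQ (W.comap φ) W φ le_rfl) := by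
    rw [← LinearMap.ker_eq_bot, Submodule.ker_mapQ]
    simp
  have e := Submodule.equivMapOfInjective _ hinj (U.map (W.comap φ).mkQ)
  rw [e.length_eq]
  have : (U.map φ).map W.mkQ =
      (U.map (W.comap φ).mkQ).map (Submodule.mapQ (W.comap φ) W φ le_rfl) := by
    rw [← Submodule.map_comp, ← Submodule.map_comp, Submodule.mapQ_mkQ]
  rw [this]

lemma rd_anti_inf {U W W' : Submodule k V} (h : U ⊓ W' ≤ W) : rd U W ≤ rd U W' := by
  have h1 := rd_map U.subtype ⊤ W
  have h2 := rd_map U.subtype ⊤ W'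
  simp only [Submodule.map_top, Submodule.range_subtype] at h1 h2
  rw [h1, h2]
  have h3 : W'.comap U.subtype ≤ W.comap U.subtype := fun x hx => h ⟨x.2, hx⟩
  unfold rd
  have : ((⊤ : Submodule k U).map (Submodule.mkQ (W'.comap U.subtype))).map
      (Submodule.factor h3) = (⊤ : Submodule k U).map (Submodule.mkQ (W.comap U.subtype)) := by
    rw [← Submodule.map_comp]; rfl
  rw [← this]
  exact Module.length_le_of_surjective
    ((Submodule.factor h3).submoduleMap _) (LinearMap.submoduleMap_surjective _ _)

lemma rd_anti {U W W' : Submodule k V} (h : W' ≤ W) : rd U W ≤ rd U W' :=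
  rd_anti_inf (inf_le_right.trans h)

lemma rd_le_length (U W : Submodule k V) : rd U W ≤ Module.length k U :=
  Module.length_le_of_surjective ((W.mkQ).submoduleMap U) (LinearMap.submoduleMap_surjective _ _)

lemma rd_add {U' U : Submodule k V} (W : Submodule k V) (h : U' ≤ U) :
    rd U W = rd U' W + rd U (U' ⊔ W) := by
  unfold rd
  set X := U.map W.mkQ
  have hm : U'.map W.mkQ ≤ X := Submodule.map_mono h
  have hle : W ≤ U' ⊔ W := le_sup_right
  let g : X →ₗ[k] (U.map (U' ⊔ W).mkQ) :=
    (Submodule.factor hle).restrict (p := X) (q := U.map (U' ⊔ W).mkQ) (by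
      rintro _ ⟨u, hu, rfl⟩
      exact ⟨u, hu, rfl⟩)
  refine Module.length_eq_add_of_exact (Submodule.inclusion hm) g
    (Submodule.inclusion_injective _) ?_ ?_
  · rintro ⟨_, u, hu, rfl⟩
    exact ⟨⟨W.mkQ u, u, hu, rfl⟩, rfl⟩
  · rintro ⟨_, u, hu, rfl⟩
    constructor
    · intro h0
      have h0' : (U' ⊔ W).mkQ u = 0 := congrArg Subtype.val h0
      rw [Submodule.mkQ_apply, Submodule.Quotient.mk_eq_zero, Submodule.mem_sup] at h0'
      obtain ⟨a, ha, b, hb, rfl⟩ := h0'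
      refine ⟨⟨W.mkQ a, a, ha, rfl⟩, ?_⟩
      apply Subtype.ext
      simp [hb]
    · rintro ⟨⟨_, a, ha, rfl⟩, h1⟩
      have h1' : W.mkQ a = W.mkQ u := congrArg Subtype.val h1
      apply Subtype.ext
      change (U' ⊔ W).mkQ u = 0
      rw [Submodule.mkQ_apply, Submodule.Quotient.mk_eq_zero]
      rw [Submodule.mkQ_apply, Submodule.mkQ_apply, Submodule.Quotient.eq] at h1'
      have : u = a - (a - u) := by abel
      rw [this]
      exact sub_mem (Submodule.mem_sup_left ha) (Submodule.mem_sup_right h1')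

lemma rd_sup_le (U U' W : Submodule k V) : rd (U ⊔ U') W ≤ rd U W + rd U' W := by
  rw [rd_add W (le_sup_left : U ≤ U ⊔ U')]
  gcongr
  have : rd (U ⊔ U') (U ⊔ W) ≤ rd U' (U ⊔ W) := by
    unfold rd
    have h0 : U.map (U ⊔ W).mkQ = ⊥ := by
      rw [eq_bot_iff, Submodule.map_le_iff_le_comap, ← LinearMap.ker, Submodule.ker_mkQ]; exact le_sup_left
    rw [Submodule.map_sup, h0, bot_sup_eq]
  exact this.trans (rd_anti le_sup_right)

lemma rd_eq_zero {U W : Submodule k V} (h : U ≤ W) : rd U W = 0 := by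
  unfold rd
  have h0 : U.map W.mkQ = ⊥ := by
    rw [eq_bot_iff, Submodule.map_le_iff_le_comap, ← LinearMap.ker, Submodule.ker_mkQ]; exact h
  rw [h0]
  exact Module.length_bot

lemma rd_sup_right (U W : Submodule k V) : rd (U ⊔ W) W = rd U W := by
  refine le_antisymm ?_ (rd_mono_left _ le_sup_left)
  refine (rd_sup_le _ _ _).trans ?_
  rw [rd_eq_zero (le_refl W), add_zero]

/-- splitting through an intermediate space -/
lemma rd_le_add (U W W' : Submodule k V) : rd U W ≤ rd (U ⊓ W') W + rd U W' := by
  rw [rd_add W (inf_le_left : U ⊓ W' ≤ U)]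
  gcongr 1
  exact rd_anti_inf le_sup_left

lemma rd_le_card {ι : Type*} [Fintype ι] (v : ι → V) {U W : Submodule k V}
    (h : U ≤ Submodule.span k (Set.range v) ⊔ W) : rd U W ≤ Fintype.card ι := by
  refine (rd_mono_left W h).trans ?_
  rw [rd_sup_right]
  refine (rd_le_length _ _).trans ?_
  have : Module.Finite k (Submodule.span k (Set.range v)) :=
    FiniteDimensional.span_of_finite k (Set.finite_range v)
  rw [Module.length_eq_finrank]
  exact_mod_cast finrank_range_le_card v

lemma rd_exists {U W : Submodule k V} (h : rd U W ≠ ⊤) :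
    ∃ v : Fin (rd U W).toNat → V, (∀ i, v i ∈ U) ∧
      U ≤ Submodule.span k (Set.range v) ⊔ W := by
  have hfl : IsFiniteLength k (U.map W.mkQ) := Module.length_ne_top_iff.1 h
  have hfin : Module.Finite k (U.map W.mkQ) := by
    have := (isFiniteLength_iff_isNoetherian_isArtinian.1 hfl).1
    infer_instance
  have hr : (rd U W).toNat = Module.finrank k (U.map W.mkQ) := by
    unfold rd; rw [Module.length_eq_finrank]; rfl
  rw [hr]
  let b := Module.finBasis k (U.map W.mkQ)
  have hb : ∀ i, ∃ u ∈ U, W.mkQ u = b i := fun i => (b i).2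
  choose v hvU hv using hb
  refine ⟨v, hvU, fun u hu => ?_⟩
  have h1 := b.sum_repr ⟨W.mkQ u, u, hu, rfl⟩
  set c := b.repr ⟨W.mkQ u, u, hu, rfl⟩
  have h2 : W.mkQ (∑ i, c i • v i) = W.mkQ u := by
    have := congrArg Subtype.val h1
    simp only [AddSubmonoidClass.coe_finsetSum, Submodule.coe_smul] at this
    rw [map_sum, ← this]
    exact Finset.sum_congr rfl fun i _ => by rw [map_smul, hv]
  rw [Submodule.mkQ_apply, Submodule.mkQ_apply, Submodule.Quotient.eq] at h2
  have : u = (∑ i, c i • v i) - ((∑ i, c i • v i) - u) := by abel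
  rw [this]
  refine sub_mem (Submodule.mem_sup_left ?_) (Submodule.mem_sup_right h2)
  exact sum_mem fun i _ => Submodule.smul_mem _ _ (Submodule.subset_span ⟨i, rfl⟩)

lemma rd_ker_coker (s : V →ₗ[k] V) {U W : Submodule k V} (hU : U.map s ≤ U)
    (hW : W.map s ≤ W) (hfin : rd U W ≠ ⊤) :
    rd (U ⊓ W.comap s) W ≤ rd U (U.map s ⊔ W) := by
  have h1 := rd_add W (inf_le_left : U ⊓ W.comap s ≤ U)
  have h2 := rd_add W hU
  have h3 : rd (U.map s) W ≤ rd U (U ⊓ W.comap s ⊔ W) := by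
    rw [rd_map]
    apply rd_anti_inf
    refine inf_le_right.trans (sup_le inf_le_right ?_)
    exact Submodule.map_le_iff_le_comap.1 hW
  have h4 : rd (U ⊓ W.comap s) W + rd U (U ⊓ W.comap s ⊔ W) ≤
      rd U (U.map s ⊔ W) + rd U (U ⊓ W.comap s ⊔ W) := by
    rw [← h1, h2, add_comm]
    gcongr
  refine (ENat.add_le_add_iff_right ?_).1 h4
  intro htop
  rw [htop] at h1
  exact hfin (by rw [h1]; simp)

/-- A semilinear map does not increase `rd`. -/
lemma rd_semilinear {σ : k →+* k} (φ : V →ₛₗ[σ] V') (U W : Submodule k V)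
    (W' : Submodule k V') (hW : ∀ w ∈ W, φ w ∈ W') :
    rd (Submodule.span k (φ '' U)) W' ≤ rd U W := by
  by_cases h : rd U W = ⊤
  · rw [h]; exact le_top
  obtain ⟨v, hv, hle⟩ := rd_exists h
  have h1 : Submodule.span k (φ '' U) ≤ Submodule.span k (Set.range (fun i => φ (v i))) ⊔ W' := by
    rw [Submodule.span_le]
    rintro _ ⟨u, hu, rfl⟩
    obtain ⟨a, ha, w, hw, rfl⟩ := Submodule.mem_sup.1 (hle hu)
    rw [map_add]
    refine add_mem (Submodule.mem_sup_left ?_) (Submodule.mem_sup_right (hW w hw))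
    clear hu hw
    induction ha using Submodule.span_induction with
    | mem x hx => obtain ⟨i, rfl⟩ := hx; exact Submodule.subset_span ⟨i, rfl⟩
    | zero => rw [map_zero]; exact zero_mem _
    | add x y _ _ hx hy => rw [map_add]; exact add_mem hx hy
    | smul c x _ hx => rw [map_smulₛₗ]; exact Submodule.smul_mem _ _ hx
  refine (rd_le_card _ h1).trans ?_
  rw [Fintype.card_fin, ENat.natCast_toNat h]

lemma rd_finset_sup_le {ι : Type*} (s : Finset ι) (U : ι → Submodule k V) (W : Submodule k V) :
    rd (s.sup U) W ≤ ∑ i ∈ s, rd (U i) W := by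
  classical
  induction s using Finset.induction_on with
  | empty => simp [rd_eq_zero]
  | insert a s ha ih =>
    rw [Finset.sup_insert, Finset.sum_insert ha]
    exact (rd_sup_le _ _ _).trans (by gcongr)

/-- projection to a graded piece -/
def grP (𝒱 : ℤ → Submodule k V) [DirectSum.Decomposition 𝒱] (j : ℤ) : V →ₗ[k] V :=
  (𝒱 j).subtype ∘ₗ (DirectSum.component k ℤ (fun i => 𝒱 i) j) ∘ₗ
    (DirectSum.decomposeLinearEquiv 𝒱).toLinearMap

section gr
variable (𝒱 : ℤ → Submodule k V) [DirectSum.Decomposition 𝒱]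

lemma grP_apply (j : ℤ) (v : V) : grP 𝒱 j v = (DirectSum.decompose 𝒱 v j : V) := rfl

lemma grP_mem (j : ℤ) (v : V) : grP 𝒱 j v ∈ 𝒱 j := by rw [grP_apply]; exact Subtype.mem _

lemma grP_same {j : ℤ} {v : V} (h : v ∈ 𝒱 j) : grP 𝒱 j v = v :=
  DirectSum.decompose_of_mem_same 𝒱 h

lemma grP_ne {i j : ℤ} {v : V} (h : v ∈ 𝒱 i) (hij : i ≠ j) : grP 𝒱 j v = 0 :=
  DirectSum.decompose_of_mem_ne 𝒱 h hij

lemma grP_sum (v : V) : ∃ s : Finset ℤ, v = ∑ j ∈ s, grP 𝒱 j v := by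
  classical
  exact ⟨_, (DirectSum.sum_support_decompose 𝒱 v).symm⟩

lemma grP_ind {v : V} {W : Submodule k V} (h : ∀ j, grP 𝒱 j v ∈ W) : v ∈ W := by
  obtain ⟨s, hs⟩ := grP_sum 𝒱 v
  rw [hs]
  exact sum_mem fun j _ => h j

/-- graded subspaces -/
def IsGr (W : Submodule k V) : Prop :=
  ∀ w ∈ W, ∀ j, grP 𝒱 j w ∈ W

variable {𝒱}

lemma IsGr.sup {W W' : Submodule k V} (h : IsGr 𝒱 W) (h' : IsGr 𝒱 W') : IsGr 𝒱 (W ⊔ W') := by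
  intro w hw j
  obtain ⟨a, ha, b, hb, rfl⟩ := Submodule.mem_sup.1 hw
  rw [map_add]
  exact add_mem (Submodule.mem_sup_left (h a ha j)) (Submodule.mem_sup_right (h' b hb j))

lemma IsGr.inf {W W' : Submodule k V} (h : IsGr 𝒱 W) (h' : IsGr 𝒱 W') : IsGr 𝒱 (W ⊓ W') :=
  fun w hw j => ⟨h w hw.1 j, h' w hw.2 j⟩

lemma IsGr.span {S : Set V} (h : ∀ v ∈ S, ∀ j, grP 𝒱 j v ∈ Submodule.span k S) :
    IsGr 𝒱 (Submodule.span k S) := by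
  intro w hw j
  induction hw using Submodule.span_induction with
  | mem x hx => exact h x hx j
  | zero => rw [map_zero]; exact zero_mem _
  | add x y _ _ hx hy => rw [map_add]; exact add_mem hx hy
  | smul c x _ hx => rw [map_smul]; exact Submodule.smul_mem _ _ hx

lemma IsGr.span_hom {S : Set V} (h : ∀ v ∈ S, ∃ i, v ∈ 𝒱 i) :
    IsGr 𝒱 (Submodule.span k S) := by
  refine IsGr.span fun v hv j => ?_
  obtain ⟨i, hi⟩ := h v hv
  by_cases hij : i = j
  · subst hij; rw [grP_same 𝒱 hi]; exact Submodule.subset_span hv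
  · rw [grP_ne 𝒱 hi hij]; exact zero_mem _

lemma rd_sum_gr (U W : Submodule k V)
    (hW : IsGr 𝒱 W) (s : Finset ℤ) : ∑ j ∈ s, rd (U ⊓ 𝒱 j) W ≤ rd U W := by
  have key : ∑ j ∈ s, rd (U ⊓ 𝒱 j) W ≤ rd (s.sup fun j => U ⊓ 𝒱 j) W := by
    induction s using Finset.induction_on with
    | empty => simp
    | insert a s ha ih =>
      rw [Finset.sup_insert, Finset.sum_insert ha, sup_comm,
        rd_add W (le_sup_left : (s.sup fun j => U ⊓ 𝒱 j) ≤ _ ⊔ (U ⊓ 𝒱 a)), add_comm]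
      gcongr
      refine le_trans ?_ (rd_mono_left _ le_sup_right)
      apply rd_anti_inf
      rintro x ⟨⟨hxU, hxa⟩, hx⟩
      obtain ⟨y, hy, w, hw, rfl⟩ := Submodule.mem_sup.1 hx
      have h1 : grP 𝒱 a y = 0 := by
        have : (s.sup fun j => U ⊓ 𝒱 j) ≤ LinearMap.ker (grP 𝒱 a) := by
          refine Finset.sup_le fun j hj => ?_
          rintro z ⟨_, hz⟩
          exact grP_ne 𝒱 hz (fun h => ha (h ▸ hj))
        exact this hy
      have h2 := grP_same 𝒱 hxa
      rw [map_add, h1, zero_add] at h2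
      rw [← h2]
      exact hW w hw a
  refine key.trans (rd_mono_left _ (Finset.sup_le fun j _ => inf_le_left))

end gr
end rdsec

section mono
variable {k : Type*} [Field k] {d : ℕ}

/-- box of exponents -/
def expBox (d N : ℕ) : Finset (Fin d →₀ ℕ) :=
  (Fintype.piFinset (fun _ : Fin d => Finset.range N)).map Finsupp.equivFunOnFinite.symm.toEmbedding

lemma mem_expBox {N : ℕ} {b : Fin d →₀ ℕ} : b ∈ expBox d N ↔ ∀ i, b i < N := by
  simp only [expBox, Finset.mem_map, Fintype.mem_piFinset, Finset.mem_range]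
  constructor
  · rintro ⟨a, ha, rfl⟩ i
    exact ha i
  · intro h
    exact ⟨b, h, by ext; rfl⟩

lemma card_expBox (N : ℕ) : (expBox d N).card = N ^ d := by
  simp [expBox]

/-- good exponents: in the box and not above `a` -/
def goodExp (a : Fin d →₀ ℕ) (N : ℕ) : Finset (Fin d →₀ ℕ) :=
  (expBox d N).filter (fun b => ¬ a ≤ b)

lemma card_goodExp (a : Fin d →₀ ℕ) (N : ℕ) :
    (goodExp a N).card * N ≤ (∑ i, a i) * N ^ d := by
  have h1 : goodExp a N ⊆ Finset.univ.biUnion (fun i : Fin d =>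
      (Fintype.piFinset (fun l : Fin d => if l = i then Finset.range (a i) else
        Finset.range N)).map Finsupp.equivFunOnFinite.symm.toEmbedding) := by
    intro b hb
    rw [goodExp, Finset.mem_filter, mem_expBox] at hb
    obtain ⟨hb, hab⟩ := hb
    rw [Finsupp.le_def] at hab
    push Not at hab
    obtain ⟨i, hi⟩ := hab
    simp only [Finset.mem_biUnion, Finset.mem_univ, true_and, Finset.mem_map,
      Fintype.mem_piFinset]
    refine ⟨i, b, fun l => ?_, by ext; rfl⟩
    split_ifs with h
    · subst h; simpa using hi
    · simpa using hb l
  have h2 := (Finset.card_le_card h1).trans Finset.card_biUnion_le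
  calc _ ≤ (∑ i : Fin d, a i * N ^ (d - 1)) * N := by
        gcongr
        refine h2.trans (Finset.sum_le_sum fun i _ => ?_)
        rw [Finset.card_map, Fintype.card_piFinset, ← Finset.mul_prod_erase _ _ (Finset.mem_univ i)]
        rw [if_pos rfl, Finset.card_range]
        gcongr
        rw [Finset.prod_congr rfl (g := fun _ => N)]
        · simp
        · intro l hl
          rw [if_neg (Finset.ne_of_mem_erase hl), Finset.card_range]
    _ = (∑ i, a i) * N ^ d := by
        rw [← Finset.sum_mul, mul_assoc]
        rcases d with _ | d
        · simp
        · rw [← pow_succ]; simp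

lemma poly_box (N : ℕ) (P : MvPolynomial (Fin d) k) (S : Finset (Fin d →₀ ℕ))
    (hS : ∀ b ∈ P.support, (∀ i, b i < N) → b ∈ S) :
    ∃ c : (Fin d →₀ ℕ) → k, ∃ Q : Fin d → MvPolynomial (Fin d) k,
      P = ∑ b ∈ S, MvPolynomial.monomial b (c b) + ∑ i, MvPolynomial.X i ^ N * Q i := by
  classical
  have key : ∀ T : Finset (Fin d →₀ ℕ), (∀ b ∈ T, (∀ i, b i < N) → b ∈ S) → ∀ P' : (Fin d →₀ ℕ) → k,
    ∃ c : (Fin d →₀ ℕ) → k, ∃ Q : Fin d → MvPolynomial (Fin d) k,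
      ∑ b ∈ T, MvPolynomial.monomial b (P' b) =
        ∑ b ∈ S, MvPolynomial.monomial b (c b) + ∑ i, MvPolynomial.X i ^ N * Q i := by
    intro T hT P'
    induction T using Finset.induction_on with
    | empty => exact ⟨0, 0, by simp⟩
    | insert a T ha ih =>
      obtain ⟨c, Q, h⟩ := ih (fun b hb => hT b (Finset.mem_insert_of_mem hb))
      rw [Finset.sum_insert ha, h]
      by_cases hbox : ∀ i, a i < N
      · have haS := hT a (Finset.mem_insert_self _ _) hbox
        refine ⟨c + Pi.single a (P' a), Q, ?_⟩
        rw [← add_assoc]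
        congr 1
        simp only [Pi.add_apply, map_add, Finset.sum_add_distrib]
        rw [add_comm]
        congr 1
        rw [Finset.sum_eq_single_of_mem a haS]
        · simp
        · intro b _ hb
          simp [hb]
      · push Not at hbox
        obtain ⟨i, hi⟩ := hbox
        refine ⟨c, Q + Pi.single i (MvPolynomial.monomial (a - Finsupp.single i N) (P' a)), ?_⟩
        simp only [Pi.add_apply, mul_add, Finset.sum_add_distrib]
        rw [Finset.sum_eq_single_of_mem (s := Finset.univ) (f := fun j => MvPolynomial.X j ^ N * (Pi.single i (MvPolynomial.monomial (a - Finsupp.single i N) (P' a)) : Fin d → MvPolynomial (Fin d) k) j) i (Finset.mem_univ i)]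
        · rw [Pi.single_eq_same, MvPolynomial.X_pow_eq_monomial, MvPolynomial.monomial_mul, one_mul,
            add_tsub_cancel_of_le (by simpa using hi)]
          ring
        · intro j _ hj
          simp [hj]
  obtain ⟨c, Q, h⟩ := key P.support hS P.coeff
  exact ⟨c, Q, by rw [← h]; exact P.as_sum⟩

lemma poly_div (f : MvPolynomial (Fin d) k) (hf : f ≠ 0) : ∃ a : Fin d →₀ ℕ,
    ∀ N : ℕ, ∀ P : MvPolynomial (Fin d) k,
    ∃ c : (Fin d →₀ ℕ) → k, ∃ Q : Fin d → MvPolynomial (Fin d) k, ∃ g,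
      P = ∑ b ∈ goodExp a N, MvPolynomial.monomial b (c b) +
        ∑ i, MvPolynomial.X i ^ N * Q i + f * g := by
  refine ⟨MonomialOrder.lex.degree f, fun N P => ?_⟩
  obtain ⟨g, r, h, -, hr⟩ := MonomialOrder.lex.div_single (b := f)
    (IsUnit.mk0 _ (by simpa using hf)) P
  obtain ⟨c, Q, h'⟩ := poly_box N r (goodExp (MonomialOrder.lex.degree f) N) (fun b hb hbN => by
    rw [goodExp, Finset.mem_filter, mem_expBox]
    exact ⟨hbN, hr b hb⟩)
  exact ⟨c, Q, g, by rw [← h', h]; ring⟩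

end mono

section bounds
variable {k R V : Type*} [Field k] [CommRing R] [Algebra k R] [AddCommGroup V] [Module R V]
  [Module k V] [IsScalarTower k R V] {d : ℕ}

open MvPolynomial in
/-- `U ⊆ A • G + W`. -/
def GenBy {ι : Type*} [Fintype ι] (x : Fin d → R) (G : ι → V) (U W : Submodule k V) : Prop :=
  ∀ u ∈ U, ∃ c : ι → MvPolynomial (Fin d) k, u - ∑ i, aeval x (c i) • G i ∈ W

/-- the monomial -/
def xmon (x : Fin d → R) (b : Fin d →₀ ℕ) : R := ∏ i, x i ^ b i

lemma aeval_xmon (x : Fin d → R) (b : Fin d →₀ ℕ) (c : k) :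
    MvPolynomial.aeval x (MvPolynomial.monomial b c) = c • xmon x b := by
  rw [MvPolynomial.aeval_monomial, Algebra.smul_def, xmon, Finsupp.prod_fintype]
  simp

variable {ι : Type*} [Fintype ι]

lemma rd_torsion (x : Fin d → R) (f : MvPolynomial (Fin d) k) (hf : f ≠ 0) :
    ∃ C : ℕ, ∀ (N : ℕ) (G : ι → V) (U W : Submodule k V), GenBy x G U W →
      (∀ i P, MvPolynomial.aeval x (f * P) • G i ∈ W) →
      (∀ i j (P : MvPolynomial (Fin d) k), MvPolynomial.aeval x (MvPolynomial.X j ^ N * P) • G i ∈ W) →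
      rd U W * N ≤ (C * N ^ d : ℕ) := by
  obtain ⟨a, ha⟩ := poly_div f hf
  refine ⟨Fintype.card ι * ∑ i, a i, fun N G U W hU hfW hxW => ?_⟩
  have h1 : U ≤ Submodule.span k (Set.range
      (fun ib : ι × goodExp a N => xmon x ib.2.1 • G ib.1)) ⊔ W := by
    intro u hu
    obtain ⟨c, hc⟩ := hU u hu
    rw [← sub_add_cancel u (∑ i, MvPolynomial.aeval x (c i) • G i)]
    refine add_mem (Submodule.mem_sup_right hc) (sum_mem fun i _ => ?_)
    obtain ⟨e, Q, g, h⟩ := ha N (c i)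
    rw [h, map_add, map_add, map_sum, map_sum, add_smul, add_smul, Finset.sum_smul, Finset.sum_smul]
    refine add_mem (add_mem (Submodule.mem_sup_left (sum_mem fun b hb => ?_))
      (Submodule.mem_sup_right (sum_mem fun j _ => hxW i j _))) (Submodule.mem_sup_right (hfW i g))
    rw [aeval_xmon, smul_assoc]
    exact Submodule.smul_mem _ _ (Submodule.subset_span ⟨(i, ⟨b, hb⟩), rfl⟩)
  have h2 := rd_le_card _ h1
  calc rd U W * N ≤ ((Fintype.card (ι × goodExp a N) : ℕ) : ℕ∞) * N := by gcongr
    _ ≤ _ := by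
      norm_cast
      rw [Fintype.card_prod, Fintype.card_coe, mul_assoc, mul_assoc]
      exact Nat.mul_le_mul_left _ (card_goodExp a N)

lemma rd_bound (x : Fin d → R) (N : ℕ) (G : ι → V) (U W : Submodule k V) (hU : GenBy x G U W)
      (hxW : ∀ i j (P : MvPolynomial (Fin d) k),
        MvPolynomial.aeval x (MvPolynomial.X j ^ N * P) • G i ∈ W) :
      rd U W ≤ (Fintype.card ι * N ^ d : ℕ) := by
  have h1 : U ≤ Submodule.span k (Set.range
      (fun ib : ι × expBox d N => xmon x ib.2.1 • G ib.1)) ⊔ W := by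
    intro u hu
    obtain ⟨c, hc⟩ := hU u hu
    rw [← sub_add_cancel u (∑ i, MvPolynomial.aeval x (c i) • G i)]
    refine add_mem (Submodule.mem_sup_right hc) (sum_mem fun i _ => ?_)
    obtain ⟨e, Q, h⟩ := poly_box N (c i) (expBox d N) (fun b _ hb => mem_expBox.2 hb)
    rw [h, map_add, map_sum, map_sum, add_smul, Finset.sum_smul, Finset.sum_smul]
    refine add_mem (Submodule.mem_sup_left (sum_mem fun b hb => ?_))
      (Submodule.mem_sup_right (sum_mem fun j _ => hxW i j _))
    rw [aeval_xmon, smul_assoc]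
    exact Submodule.smul_mem _ _ (Submodule.subset_span ⟨(i, ⟨b, hb⟩), rfl⟩)
  refine (rd_le_card _ h1).trans ?_
  rw [Fintype.card_prod, Fintype.card_coe, card_expBox]

lemma xmon_mem (𝒜 : ℤ → Submodule k R) [SetLike.GradedMonoid 𝒜] (x : Fin d → R)
    (δ : Fin d → ℕ) (hx : ∀ i, x i ∈ 𝒜 (δ i)) (b : Fin d →₀ ℕ) :
    xmon x b ∈ 𝒜 ((∑ i, b i * δ i : ℕ) : ℤ) := by
  unfold xmon
  push_cast
  apply SetLike.prod_mem_graded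
  intro i _
  have := SetLike.pow_mem_graded (b i) (hx i)
  simpa using this

lemma rd_supp (𝒜 : ℤ → Submodule k R) [SetLike.GradedMonoid 𝒜]
    (𝒱 : ℤ → Submodule k V) [DirectSum.Decomposition 𝒱]
    (h𝒱 : ∀ (a b : ℤ), ∀ r ∈ 𝒜 a, ∀ x ∈ 𝒱 b, r • x ∈ 𝒱 (a + b))
    (x : Fin d → R) (δ : Fin d → ℕ) (hx : ∀ i, x i ∈ 𝒜 (δ i)) (G : ι → V) (γ : ι → ℤ)
    (hG : ∀ i, G i ∈ 𝒱 (γ i)) (U : Submodule k V) :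
    ∃ D : ℕ, ∀ (N : ℕ) (W : Submodule k V), 0 < N → IsGr 𝒱 W → GenBy x G U W →
      (∀ i j (P : MvPolynomial (Fin d) k),
        MvPolynomial.aeval x (MvPolynomial.X j ^ N * P) • G i ∈ W) →
      ∀ j : ℤ, ((D * N : ℕ) : ℤ) < |j| → U ⊓ 𝒱 j ≤ W := by
  refine ⟨∑ i, δ i + ∑ i, (γ i).natAbs, fun N W hN hW hU hxW j hj u hu => ?_⟩
  obtain ⟨c, hc⟩ := hU u hu.1
  have h1 := hW _ hc j
  rw [map_sub, grP_same 𝒱 hu.2, map_sum] at h1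
  rw [← sub_add_cancel u (∑ i, grP 𝒱 j (MvPolynomial.aeval x (c i) • G i))]
  refine add_mem h1 (sum_mem fun i _ => ?_)
  obtain ⟨e, Q, h⟩ := poly_box N (c i) (expBox d N) (fun b _ hb => mem_expBox.2 hb)
  rw [h, map_add, map_sum, map_sum, add_smul, Finset.sum_smul, Finset.sum_smul, map_add, map_sum,
    map_sum]
  refine add_mem (sum_mem fun b hb => ?_) (sum_mem fun l _ => hW _ (hxW i l _) j)
  rw [aeval_xmon, smul_assoc, map_smul]
  have hmem := h𝒱 _ _ _ (xmon_mem 𝒜 x δ hx b) _ (hG i)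
  rw [grP_ne 𝒱 hmem, smul_zero]
  · exact zero_mem _
  · rintro rfl
    rw [mem_expBox] at hb
    have h2 : ∑ i, b i * δ i ≤ N * ∑ i, δ i := by
      rw [Finset.mul_sum]
      exact Finset.sum_le_sum fun l _ => Nat.mul_le_mul_right _ (hb l).le
    have h3 : (γ i).natAbs ≤ N * ∑ i, (γ i).natAbs := by
      refine (Finset.single_le_sum (f := fun i => (γ i).natAbs) (fun _ _ => Nat.zero_le _)
        (Finset.mem_univ i)).trans (Nat.le_mul_of_pos_left _ hN)
    have h4 : (∑ i, δ i + ∑ i, (γ i).natAbs) * N = N * ∑ i, δ i + N * ∑ i, (γ i).natAbs := by ring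
    rw [h4] at hj
    generalize N * ∑ i, δ i = A1 at *
    generalize N * ∑ i, (γ i).natAbs = A2 at *
    generalize ∑ i, b i * δ i = A3 at *
    rw [lt_abs] at hj
    omega

end bounds

section ana

/-- exponential weight -/
def wt (p n : ℕ) (y : ℂ) (j : ℤ) : ℂ := Complex.exp (-Complex.I * y * (j : ℂ) / (p : ℂ) ^ n)

/-- pairing of a finitely supported function with a weight -/
def pair (h : ℤ →₀ ℝ) (φ : ℤ → ℂ) : ℂ := Finsupp.linearCombination ℝ φ h

/-- total mass -/
def mass (h : ℤ →₀ ℝ) : ℝ := Finsupp.linearCombination ℝ (fun _ => (1 : ℝ)) h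

/-- The Frobenius–Poincaré sum -/
def Gn (p d n : ℕ) (h : ℤ →₀ ℝ) (y : ℂ) : ℂ := (1 / (p : ℂ) ^ n) ^ d * pair h (wt p n y)

lemma pair_eq (h : ℤ →₀ ℝ) (φ : ℤ → ℂ) : pair h φ = ∑ j ∈ h.support, h j • φ j := rfl

lemma mass_eq (h : ℤ →₀ ℝ) : mass h = ∑ j ∈ h.support, h j := by
  simp [mass, Finsupp.linearCombination_apply, Finsupp.sum]

lemma mass_eq_of_subset (h : ℤ →₀ ℝ) (s : Finset ℤ) (hs : h.support ⊆ s) :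
    mass h = ∑ j ∈ s, h j := by
  rw [mass_eq]
  exact Finset.sum_subset hs (fun j _ hj => by simpa using hj)

lemma norm_pair_le (h : ℤ →₀ ℝ) (φ : ℤ → ℂ) (E : ℝ) (hE : ∀ j ∈ h.support, ‖φ j‖ ≤ E) :
    ‖pair h φ‖ ≤ E * ∑ j ∈ h.support, |h j| := by
  rw [pair_eq, Finset.mul_sum]
  refine (norm_sum_le _ _).trans (Finset.sum_le_sum fun j hj => ?_)
  rw [norm_smul, Real.norm_eq_abs, mul_comm]
  exact mul_le_mul_of_nonneg_right (hE j hj) (abs_nonneg _)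

lemma norm_pair_le_mass (h : ℤ →₀ ℝ) (hpos : ∀ j, 0 ≤ h j) (φ : ℤ → ℂ) (E : ℝ)
    (hE : ∀ j ∈ h.support, ‖φ j‖ ≤ E) : ‖pair h φ‖ ≤ E * mass h := by
  refine (norm_pair_le h φ E hE).trans_eq ?_
  rw [mass_eq]
  congr 1
  exact Finset.sum_congr rfl fun j _ => abs_of_nonneg (hpos j)

/-- The key one-sided estimate. -/
lemma norm_pair_sub_le (h g : ℤ →₀ ℝ) (τ : ℤ → ℝ) (hτ : ∀ j, 0 ≤ τ j)
    (hle : ∀ j, h j ≤ g j + τ j) (T : ℝ) (hT : ∀ s : Finset ℤ, ∑ j ∈ s, τ j ≤ T)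
    (φ : ℤ → ℂ) (E : ℝ) (hE0 : 0 ≤ E) (hE : ∀ j, (h j ≠ 0 ∨ g j ≠ 0) → ‖φ j‖ ≤ E) :
    ‖pair h φ - pair g φ‖ ≤ E * (2 * T + mass g - mass h) := by
  have h1 : pair h φ - pair g φ = pair (h - g) φ := by simp [pair]
  have h2 : mass g - mass h = - mass (h - g) := by simp [mass]
  rw [h1, add_sub_assoc, h2]
  refine (norm_pair_le _ φ E ?_).trans (mul_le_mul_of_nonneg_left ?_ hE0)
  · intro j hj
    apply hE
    by_contra hcon
    push Not at hcon
    simp [hcon.1, hcon.2] at hj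
  · rw [mass_eq, ← sub_eq_add_neg]
    have := hT (h - g).support
    calc _ ≤ ∑ j ∈ (h - g).support, (2 * τ j - (h - g) j) := by
          refine Finset.sum_le_sum fun j _ => ?_
          have := hle j
          have := hτ j
          rw [Finsupp.sub_apply]
          rw [abs_le]; constructor <;> linarith
      _ = 2 * ∑ j ∈ (h - g).support, τ j - ∑ j ∈ (h - g).support, (h - g) j := by
          rw [Finset.sum_sub_distrib, Finset.mul_sum]
      _ ≤ _ := by linarith

lemma norm_wt_le (p n : ℕ) (hp : 0 < p) (y : ℂ) (j : ℤ) (D Y : ℝ) (hD : |(j : ℝ)| ≤ D * (p : ℝ) ^ n)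
    (hY : ‖y‖ ≤ Y) : ‖wt p n y j‖ ≤ Real.exp (Y * D) := by
  unfold wt
  refine (Complex.norm_exp_le_exp_norm _).trans (Real.exp_le_exp.2 ?_)
  have hq : (0 : ℝ) < (p : ℝ) ^ n := by positivity
  simp only [norm_div, norm_mul, norm_neg, Complex.norm_I, one_mul, norm_pow, Complex.norm_natCast,
    Complex.norm_intCast]
  rw [mul_div_assoc]
  have : |(j : ℝ)| / (p : ℝ) ^ n ≤ D := by rwa [div_le_iff₀ hq]
  have h0 : 0 ≤ ‖y‖ := norm_nonneg y
  have hY0 : 0 ≤ Y := h0.trans hY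
  gcongr

lemma norm_exp_sub_one_le' (z : ℂ) : ‖Complex.exp z - 1‖ ≤ ‖z‖ * Real.exp ‖z‖ := by
  have := Complex.norm_exp_sub_sum_le_norm_mul_exp z 1
  simpa using this

/-- moving by `w` changes the weight little -/
lemma wt_shift (p n : ℕ) (hp : 0 < p) (y : ℂ) (j w : ℤ) (D W Y : ℝ)
    (hD : |(j : ℝ)| ≤ D * (p : ℝ) ^ n) (hW : |(w : ℝ)| ≤ W) (hY : ‖y‖ ≤ Y) :
    ‖wt p n y (j + w) - wt p n y j‖ ≤ Real.exp (Y * D) * (Y * W * Real.exp (Y * W)) / (p : ℝ) ^ n := by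
  have hq : (1 : ℝ) ≤ (p : ℝ) ^ n := by exact_mod_cast Nat.one_le_pow _ _ hp
  have h1 : wt p n y (j + w) - wt p n y j = wt p n y j * (wt p n y w - 1) := by
    unfold wt
    rw [mul_sub, ← Complex.exp_add, mul_one]
    congr 2
    push_cast; ring
  have hY0 : 0 ≤ Y := (norm_nonneg y).trans hY
  have hW0 : 0 ≤ W := (abs_nonneg _).trans hW
  rw [h1, norm_mul, mul_div_assoc]
  refine mul_le_mul (norm_wt_le p n hp y j D Y hD hY) ?_ (norm_nonneg _) (Real.exp_nonneg _)
  refine (norm_exp_sub_one_le' _).trans ?_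
  have hz : ‖-Complex.I * y * (w : ℂ) / (p : ℂ) ^ n‖ ≤ Y * W / (p : ℝ) ^ n := by
    simp only [norm_div, norm_mul, norm_neg, Complex.norm_I, one_mul, norm_pow,
      Complex.norm_natCast, Complex.norm_intCast]
    gcongr
  have hz' : Y * W / (p : ℝ) ^ n ≤ Y * W := div_le_self (by positivity) hq
  calc _ ≤ (Y * W / (p : ℝ) ^ n) * Real.exp (Y * W) := by
        gcongr
        exact hz.trans hz'
    _ = _ := by ring

lemma wt_mul (p n : ℕ) (hp : 0 < p) (y : ℂ) (j : ℤ) : wt p (n + 1) y (p * j) = wt p n y j := by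
  unfold wt
  congr 1
  have : (p : ℂ) ≠ 0 := by exact_mod_cast hp.ne'
  push_cast
  field_simp
  ring

lemma pair_mapDomain (h : ℤ →₀ ℝ) (f : ℤ → ℤ) (φ : ℤ → ℂ) :
    pair (h.mapDomain f) φ = pair h (fun j => φ (f j)) := by
  unfold pair
  rw [Finsupp.linearCombination_mapDomain]
  rfl

lemma mass_mapDomain (h : ℤ →₀ ℝ) (f : ℤ → ℤ) : mass (h.mapDomain f) = mass h := by
  unfold mass
  rw [Finsupp.linearCombination_mapDomain]
  rfl

lemma pair_sum {α : Type*} (s : Finset α) (h : α → ℤ →₀ ℝ) (φ : ℤ → ℂ) :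
    pair (∑ a ∈ s, h a) φ = ∑ a ∈ s, pair (h a) φ := by simp [pair]

lemma mass_sum {α : Type*} (s : Finset α) (h : α → ℤ →₀ ℝ) :
    mass (∑ a ∈ s, h a) = ∑ a ∈ s, mass (h a) := by simp [mass]

lemma pair_sub_weight (h : ℤ →₀ ℝ) (φ ψ : ℤ → ℂ) :
    pair h φ - pair h ψ = pair h (fun j => φ j - ψ j) := by
  simp only [pair_eq, ← Finset.sum_sub_distrib, smul_sub]

theorem conv_cyc (p d n0 : ℕ) (hp : 2 ≤ p) {α : Type*} [Fintype α] (hα : Fintype.card α = p ^ d)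
    (w : α → ℤ) (h : ℕ → ℤ →₀ ℝ) (τ : ℕ → ℤ → ℝ) (C D : ℝ)
    (hpos : ∀ n j, 0 ≤ h n j)
    (hsupp : ∀ n j, h n j ≠ 0 → |(j : ℝ)| ≤ D * (p : ℝ) ^ (n + n0))
    (hT : ∀ n, mass (h n) ≤ C * ((p : ℝ) ^ (n + n0)) ^ d)
    (hτ : ∀ n j, 0 ≤ τ n j)
    (hrec : ∀ n i, h (n + 1) i ≤ (∑ a, (h n).mapDomain (fun j => p * j + w a)) i + τ n i)
    (hτT : ∀ n, ∀ s : Finset ℤ, ∑ j ∈ s, τ n j ≤ C * ((p : ℝ) ^ (n + n0)) ^ d / (p : ℝ) ^ (n + n0)) :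
    ∃ F : ℂ → ℂ, ∀ K : Set ℂ, IsCompact K →
      TendstoUniformlyOn (fun n y => Gn p d (n + n0) (h n) y) F atTop K := by
  have hp0 : 0 < p := by omega
  have hpR : (2 : ℝ) ≤ p := by exact_mod_cast hp
  set f : ℕ → ℂ → ℂ := fun n y => Gn p d (n + 1 + n0) (h (n + 1)) y - Gn p d (n + n0) (h n) y with hf
  refine ⟨fun y => Gn p d (0 + n0) (h 0) y + ∑' n, f n y, fun K hK => ?_⟩
  rcases K.eq_empty_or_nonempty with rfl | hKe
  · exact tendstoUniformlyOn_empty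
  obtain ⟨Y, hY⟩ := hK.isBounded.exists_norm_le
  set W : ℝ := ∑ a, |(w a : ℝ)| with hWdef
  have hW : ∀ a, |(w a : ℝ)| ≤ W := fun a =>
    Finset.single_le_sum (f := fun a => |(w a : ℝ)|) (fun _ _ => abs_nonneg _) (Finset.mem_univ a)
  have hW0 : 0 ≤ W := Finset.sum_nonneg fun _ _ => abs_nonneg _
  set Y' := max Y 0
  have hY0 : 0 ≤ Y' := le_max_right _ _
  have hY' : ∀ y ∈ K, ‖y‖ ≤ Y' := fun y hy => (hY y hy).trans (le_max_left _ _)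
  set D' := max D 0
  have hD' : 0 ≤ D' := le_max_right _ _
  have hq1 : ∀ n, (1 : ℝ) ≤ (p : ℝ) ^ n := fun n => by exact_mod_cast Nat.one_le_pow _ _ hp0
  have hsupp' : ∀ n j, h n j ≠ 0 → |(j : ℝ)| ≤ D' * (p : ℝ) ^ (n + n0) := fun n j hj =>
    (hsupp n j hj).trans (by gcongr; exact le_max_left _ _)
  set b : ℕ → ℝ := fun n => mass (h n) / ((p : ℝ) ^ (n + n0)) ^ d with hb
  have hmass0 : ∀ n, 0 ≤ mass (h n) := fun n => by
    rw [mass_eq]; exact Finset.sum_nonneg fun j _ => hpos n j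
  have hb0 : ∀ n, 0 ≤ b n := fun n => div_nonneg (hmass0 n) (by positivity)
  have hC0 : 0 ≤ C := by
    have := (hmass0 0).trans (hT 0)
    exact nonneg_of_mul_nonneg_left this (by positivity)
  set E1 := Real.exp (Y' * (D' + W)) with hE1
  set E2 := Real.exp (Y' * D') * (Y' * W * Real.exp (Y' * W)) with hE2
  have hE10 : 0 ≤ E1 := Real.exp_nonneg _
  have hE20 : 0 ≤ E2 := by positivity
  set u : ℕ → ℝ := fun n => E1 * (2 * C / (p : ℝ) ^ n + (b n - b (n + 1))) + E2 * C / (p : ℝ) ^ n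
    with hu
  have hfu : ∀ n, ∀ y ∈ K, ‖f n y‖ ≤ u n := by
    intro n y hy
    set q := (p : ℝ) ^ (n + n0) with hq
    have hq0 : 0 < q := by positivity
    set g := ∑ a, (h n).mapDomain (fun j => p * j + w a) with hg
    have hpq : (p : ℝ) ^ (n + 1 + n0) = p * q := by rw [hq]; ring
    have hmg : mass g = (p : ℝ) ^ d * mass (h n) := by
      rw [hg, mass_sum]
      simp [mass_mapDomain, hα]
    have step1 : ‖pair (h (n + 1)) (wt p (n + 1 + n0) y) - pair g (wt p (n + 1 + n0) y)‖ ≤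
        E1 * (2 * (C * q ^ d / q) + mass g - mass (h (n + 1))) := by
      refine norm_pair_sub_le _ _ (τ n) (hτ n) (hrec n) _ (hτT n) _ E1 hE10 ?_
      intro j hj
      refine norm_wt_le _ _ hp0 _ _ _ _ ?_ (hY' y hy)
      rcases hj with hj | hj
      · refine (hsupp' _ _ hj).trans ?_
        gcongr
        linarith
      · have : ∃ a ∈ Finset.univ, ((h n).mapDomain (fun j => p * j + w a)) j ≠ 0 := by
          apply Finset.exists_ne_zero_of_sum_ne_zero
          rwa [Finsupp.finsetSum_apply] at hj
        obtain ⟨a, -, ha⟩ := this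
        have hm := Finsupp.mapDomain_support (Finsupp.mem_support_iff.2 ha)
        obtain ⟨i, hi, rfl⟩ := Finset.mem_image.1 hm
        have hi' := hsupp' n i (Finsupp.mem_support_iff.1 hi)
        push_cast
        refine (abs_add_le _ _).trans ?_
        rw [add_mul, abs_mul, Nat.abs_cast, hpq]
        have h1 : (p : ℝ) * |(i : ℝ)| ≤ D' * (p * q) := by
          calc (p : ℝ) * |(i : ℝ)| ≤ p * (D' * q) := by gcongr
            _ = _ := by ring
        have h2 : W ≤ W * (p * q) := by
          rw [← hpq]
          exact le_mul_of_one_le_right hW0 (hq1 _)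
        linarith [hW a]
    have step2 : ‖pair g (wt p (n + 1 + n0) y) - (p : ℂ) ^ d * pair (h n) (wt p (n + n0) y)‖ ≤
        (p : ℝ) ^ d * (E2 / q * mass (h n)) := by
      have h1 : pair g (wt p (n + 1 + n0) y) - (p : ℂ) ^ d * pair (h n) (wt p (n + n0) y) =
          ∑ a, pair (h n) (fun j => wt p (n + 1 + n0) y (p * j + w a) - wt p (n + n0) y j) := by
        rw [hg, pair_sum]
        simp_rw [← pair_sub_weight, Finset.sum_sub_distrib, pair_mapDomain]
        simp [hα]
      rw [h1]
      refine (norm_sum_le _ _).trans ((Finset.sum_le_card_nsmul _ _ (E2 / q * mass (h n)) ?_).trans ?_)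
      · intro a _
        refine norm_pair_le_mass _ (hpos n) _ _ fun j hj => ?_
        have hj' := hsupp' n j (Finsupp.mem_support_iff.1 hj)
        have e1 : wt p (n + n0) y j = wt p (n + 1 + n0) y (p * j) := by
          rw [← wt_mul p (n + n0) hp0]; congr 1; ring
        rw [e1]
        refine (wt_shift p (n + 1 + n0) hp0 y (p * j) (w a) D' W Y' ?_ (hW a) (hY' y hy)).trans ?_
        · push_cast
          rw [abs_mul, Nat.abs_cast, hpq]
          calc (p : ℝ) * |(j : ℝ)| ≤ p * (D' * q) := by gcongr
            _ = _ := by ring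
        · rw [hpq]
          apply div_le_div_of_nonneg_left hE20 hq0
          nlinarith
      · simp [hα]
    have key : f n y = (1 / (p : ℂ) ^ (n + 1 + n0)) ^ d *
        ((pair (h (n + 1)) (wt p (n + 1 + n0) y) - pair g (wt p (n + 1 + n0) y)) +
        (pair g (wt p (n + 1 + n0) y) - (p : ℂ) ^ d * pair (h n) (wt p (n + n0) y))) := by
      have hpc : (p : ℂ) ≠ 0 := by exact_mod_cast hp0.ne'
      rw [hf]
      simp only [Gn]
      rw [sub_add_sub_cancel, mul_sub]
      congr 1
      rw [← mul_assoc, ← mul_pow]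
      congr 2
      field_simp
      ring
    rw [key, norm_mul]
    have hn : ‖(1 / (p : ℂ) ^ (n + 1 + n0)) ^ d‖ = 1 / (p * q) ^ d := by
      rw [norm_pow, norm_div, norm_pow, Complex.norm_natCast, norm_one, hpq, div_pow, one_pow]
    rw [hn]
    have hpq0 : 0 < ((p : ℝ) * q) ^ d := by positivity
    have tot := (norm_add_le _ _).trans (add_le_add step1 step2)
    calc _ ≤ 1 / (p * q) ^ d * (E1 * (2 * (C * q ^ d / q) + mass g - mass (h (n + 1))) +
            (p : ℝ) ^ d * (E2 / q * mass (h n))) := by gcongr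
      _ = E1 * (2 * (C / (p : ℝ) ^ d / q) + (b n - b (n + 1))) + E2 / q * b n := by
          rw [hmg, hb]
          simp only [hpq]
          rw [← hq]
          simp only [mul_pow]
          field_simp
          ring
      _ ≤ u n := by
          rw [hu]
          have hqn : (p : ℝ) ^ n ≤ q := by
            rw [hq]; exact pow_le_pow_right₀ (by linarith) (by omega)
          have hbn : b n ≤ C := by
            rw [hb]; simp only
            rw [div_le_iff₀ (by positivity)]
            exact hT n
          have e1 : 2 * (C / (p : ℝ) ^ d / q) ≤ 2 * C / (p : ℝ) ^ n := by
            rw [mul_div_assoc]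
            gcongr
            exact div_le_self hC0 (hq1 d)
          have e2 : E2 / q * b n ≤ E2 * C / (p : ℝ) ^ n := by
            have hbn0 := hb0 n
            calc E2 / q * b n ≤ E2 / (p : ℝ) ^ n * C := by gcongr
              _ = _ := by ring
          exact add_le_add (mul_le_mul_of_nonneg_left (add_le_add e1 le_rfl) hE10) e2
  have hsum : Summable u := by
    have hgeo : Summable (fun n : ℕ => 1 / (p : ℝ) ^ n) := by
      have : Summable (fun n : ℕ => (1 / (p : ℝ)) ^ n) :=
        summable_geometric_of_lt_one (by positivity) (by
          rw [div_lt_one (by linarith)]; linarith)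
      refine this.congr fun n => by rw [div_pow, one_pow]
    have hu' : u = fun n => (E1 * 2 * C + E2 * C) * (1 / (p : ℝ) ^ n) + E1 * (b n - b (n + 1)) := by
      funext n; rw [hu]; ring
    have hu0 : ∀ n, 0 ≤ u n := fun n => (norm_nonneg _).trans (hfu n _ hKe.some_mem)
    refine summable_of_sum_range_le (c := (E1 * 2 * C + E2 * C) * (∑' n : ℕ, 1 / (p : ℝ) ^ n) + E1 * b 0)
      hu0 fun n => ?_
    rw [hu', Finset.sum_add_distrib, ← Finset.mul_sum, ← Finset.mul_sum, Finset.sum_range_sub']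
    have hs := hgeo.sum_le_tsum (Finset.range n) (fun i _ => by positivity)
    have := hb0 n
    refine add_le_add (mul_le_mul_of_nonneg_left hs (by positivity))
      (mul_le_mul_of_nonneg_left (by linarith) hE10)
  have h1 := tendstoUniformlyOn_tsum_nat hsum hfu
  have h2 : TendstoUniformlyOn (fun n y => Gn p d (0 + n0) (h 0) y + ∑ i ∈ Finset.range n, f i y)
      (fun y => Gn p d (0 + n0) (h 0) y + ∑' n, f n y) atTop K := by
    rw [Metric.tendstoUniformlyOn_iff] at h1 ⊢
    intro ε hε
    filter_upwards [h1 ε hε] with n hn y hy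
    simpa using hn y hy
  refine h2.congr (Eventually.of_forall fun n y _ => ?_)
  simp only [hf]
  rw [Finset.sum_range_sub (fun n => Gn p d (n + n0) (h n) y)]
  ring
end ana

section hsop

variable {k R : Type*} [Field k] [CommRing R] [Algebra k R] (𝒜 : ℤ → Submodule k R) [GradedAlgebra 𝒜]

/-- homogeneous of positive degree -/
def HPos (x : R) : Prop := ∃ t : ℕ, 0 < t ∧ x ∈ 𝒜 (t : ℤ)

/-- Prime `P` misses some homogeneous element of positive degree. -/
lemma hom_prime_avoid (n : ℕ) : ∀ S : Finset (Ideal R), S.card = n → (∀ P ∈ S, P.IsPrime) →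
    (∀ P ∈ S, ∃ z, HPos 𝒜 z ∧ z ∉ P) → ∃ x, HPos 𝒜 x ∧ ∀ P ∈ S, x ∉ P := by
  classical
  induction n with
  | zero =>
    intro S hS _ _
    rw [Finset.card_eq_zero] at hS
    subst hS
    exact ⟨0, ⟨1, one_pos, Submodule.zero_mem _⟩, by simp⟩
  | succ n ih =>
    intro S hS hprime hmiss
    by_cases hinc : ∃ P ∈ S, ∃ Q ∈ S, P ≠ Q ∧ ∀ t : ℤ, ∀ r ∈ 𝒜 t, r ∈ P → r ∈ Q
    · obtain ⟨P, hP, Q, hQ, hne, hPQ⟩ := hinc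
      obtain ⟨x, hx, hxS⟩ := ih (S.erase P) (by rw [Finset.card_erase_of_mem hP, hS]; rfl)
        (fun P' hP' => hprime _ (Finset.mem_of_mem_erase hP'))
        (fun P' hP' => hmiss _ (Finset.mem_of_mem_erase hP'))
      refine ⟨x, hx, fun P' hP' hmem => ?_⟩
      by_cases h : P' = P
      · subst h
        obtain ⟨t, ht, hxt⟩ := hx
        exact hxS Q (Finset.mem_erase.2 ⟨hne.symm, hQ⟩) (hPQ _ _ hxt hmem)
      · exact hxS P' (Finset.mem_erase.2 ⟨h, hP'⟩) hmem
    · push Not at hinc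
      have hne : S.Nonempty := by rw [← Finset.card_pos, hS]; omega
      obtain ⟨Q, hQ⟩ := hne
      obtain ⟨x, hx, hxS⟩ := ih (S.erase Q) (by rw [Finset.card_erase_of_mem hQ, hS]; rfl)
        (fun P' hP' => hprime _ (Finset.mem_of_mem_erase hP'))
        (fun P' hP' => hmiss _ (Finset.mem_of_mem_erase hP'))
      by_cases hxQ : x ∈ Q
      swap
      · refine ⟨x, hx, fun P' hP' hmem => ?_⟩
        by_cases h : P' = Q
        · subst h; exact hxQ hmem
        · exact hxS P' (Finset.mem_erase.2 ⟨h, hP'⟩) hmem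
      obtain ⟨z, ⟨tz, htz, hz⟩, hzQ⟩ := hmiss Q hQ
      have hQp := hprime Q hQ
      have hz0 : z ∈ 𝒜 (tz : ℤ) := hz
      -- a homogeneous element of positive degree in all the other primes, not in Q
      have hw : ∀ T ⊆ S.erase Q, ∃ w, HPos 𝒜 w ∧ w ∉ Q ∧ ∀ P ∈ T, w ∈ P := by
        intro T
        induction T using Finset.induction_on with
        | empty => intro _; exact ⟨z, ⟨tz, htz, hz⟩, hzQ, by simp⟩
        | insert P T hPT ihT =>
          intro hT
          rw [Finset.insert_subset_iff] at hT
          obtain ⟨w, ⟨tw, htw, hw⟩, hwQ, hwT⟩ := ihT hT.2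
          have hPm := Finset.mem_erase.1 hT.1
          obtain ⟨t, r, hr, hrP, hrQ⟩ := hinc P hPm.2 Q hQ hPm.1
          -- multiply by a large power of z to make degree positive
          have hdeg : r * z ^ (t.natAbs + 1) * w ∈ 𝒜 (t + (t.natAbs + 1) • (tz : ℤ) + tw) :=
            SetLike.mul_mem_graded (SetLike.mul_mem_graded hr (SetLike.pow_mem_graded _ hz)) hw
          have hpos : 0 < t + (t.natAbs + 1) • (tz : ℤ) + tw := by
            have h1 : (1 : ℤ) ≤ tz := by exact_mod_cast htz
            have h2 : (0 : ℤ) < tw := by exact_mod_cast htw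
            have h3 : ((t.natAbs + 1 : ℕ) : ℤ) ≤ (t.natAbs + 1) • (tz : ℤ) := by
              rw [nsmul_eq_mul]
              exact le_mul_of_one_le_right (by positivity) h1
            push_cast at h3
            have h4 : -t ≤ |t| := neg_le_abs t
            linarith
          refine ⟨r * z ^ (t.natAbs + 1) * w, ⟨(t + (t.natAbs + 1) • (tz : ℤ) + tw).toNat, ?_, ?_⟩, ?_, ?_⟩
          · omega
          · rw [Int.toNat_of_nonneg hpos.le]; exact hdeg
          · intro h
            rcases hQp.mem_or_mem h with h | h
            · rcases hQp.mem_or_mem h with h | h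
              · exact hrQ h
              · exact hzQ (hQp.mem_of_pow_mem _ h)
            · exact hwQ h
          · intro P' hP'
            rcases Finset.mem_insert.1 hP' with rfl | hP'
            · exact Ideal.mul_mem_right _ _ (Ideal.mul_mem_right _ _ hrP)
            · exact Ideal.mul_mem_left _ _ (hwT P' hP')
      obtain ⟨w, ⟨tw, htw, hw⟩, hwQ, hwS⟩ := hw _ subset_rfl
      obtain ⟨tx, htx, hx'⟩ := hx
      refine ⟨x ^ tw + w ^ tx, ⟨tw * tx, Nat.mul_pos htw htx, ?_⟩, ?_⟩
      · apply Submodule.add_mem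
        · have := SetLike.pow_mem_graded tw hx'
          simpa using this
        · have := SetLike.pow_mem_graded tx hw
          rw [mul_comm]
          simpa using this
      · intro P hP h
        have hPp := hprime P hP
        by_cases hPQ : P = Q
        · subst hPQ
          have h2 : w ^ tx ∈ P := by
            have := P.sub_mem h (P.pow_mem_of_mem hxQ tw htw)
            simpa using this
          exact hwQ (hPp.mem_of_pow_mem _ h2)
        · have hPS := Finset.mem_erase.2 ⟨hPQ, hP⟩
          have h2 : x ^ tw ∈ P := by
            have := P.sub_mem h (P.pow_mem_of_mem (hwS P hPS) tx htx)
            simpa using this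
          exact hxS P hPS (hPp.mem_of_pow_mem _ h2)


lemma maximal_of_hpos (h𝒜neg : ∀ t : ℤ, t < 0 → 𝒜 t = ⊥)
    (h𝒜zero : ∀ x ∈ 𝒜 0, ∃ c : k, algebraMap k R c = x)
    (Q : Ideal R) (hQ : Q.IsPrime) (h : ∀ z, HPos 𝒜 z → z ∈ Q) : Q.IsMaximal := by
  rw [Ideal.isMaximal_iff]
  refine ⟨fun h1 => hQ.ne_top (Q.eq_top_iff_one.2 h1), fun J x hQJ hxQ hxJ => ?_⟩
  have hdec : x - grP 𝒜 0 x ∈ Q := by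
    have : x - grP 𝒜 0 x ∈ Q.restrictScalars k := by
      apply grP_ind 𝒜
      intro j
      rw [map_sub]
      by_cases hj : j = 0
      · subst hj
        rw [grP_same 𝒜 (grP_mem 𝒜 0 x), sub_self]; exact zero_mem _
      · rw [grP_ne 𝒜 (grP_mem 𝒜 0 x) (Ne.symm hj), sub_zero]
        rcases lt_or_gt_of_ne hj with hj | hj
        · have := grP_mem 𝒜 j x
          rw [h𝒜neg j hj, Submodule.mem_bot] at this
          rw [this]; exact zero_mem _
        · refine h _ ⟨j.toNat, by omega, ?_⟩
          rw [Int.toNat_of_nonneg hj.le]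
          exact grP_mem 𝒜 j x
    exact this
  obtain ⟨c, hc⟩ := h𝒜zero _ (grP_mem 𝒜 0 x)
  have hc0 : c ≠ 0 := by
    rintro rfl
    rw [map_zero] at hc
    rw [← hc, sub_zero] at hdec
    exact hxQ hdec
  have hcJ : algebraMap k R c ∈ J := by
    rw [hc]
    have := J.sub_mem hxJ (hQJ hdec)
    simpa using this
  have := J.mul_mem_left (algebraMap k R c⁻¹) hcJ
  rwa [← map_mul, inv_mul_cancel₀ hc0, map_one] at this

lemma dim_step (h𝒜neg : ∀ t : ℤ, t < 0 → 𝒜 t = ⊥)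
    (h𝒜zero : ∀ x ∈ 𝒜 0, ∃ c : k, algebraMap k R c = x)
    [IsNoetherianRing R] (d : ℕ) (𝔞 : Ideal R) (hd : ringKrullDim (R ⧸ 𝔞) ≤ (d + 1 : ℕ)) :
    ∃ x, HPos 𝒜 x ∧ ringKrullDim (R ⧸ (𝔞 ⊔ Ideal.span {x})) ≤ d := by
  classical
  have hfin := Ideal.finite_minimalPrimes_of_isNoetherianRing R 𝔞
  obtain ⟨x, hx, hxS⟩ := hom_prime_avoid 𝒜 _
    (hfin.toFinset.filter (fun P => ∃ z, HPos 𝒜 z ∧ z ∉ P)) rfl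
    (fun P hP => by
      rw [Finset.mem_filter, Set.Finite.mem_toFinset] at hP
      exact hP.1.1.1)
    (fun P hP => (Finset.mem_filter.1 hP).2)
  refine ⟨x, hx, ?_⟩
  rw [ringKrullDim_quotient] at hd ⊢
  refine iSup_le fun s => ?_
  set Z := PrimeSpectrum.zeroLocus (R := R) (𝔞 : Set R) with hZ
  have hsub : ∀ P ∈ PrimeSpectrum.zeroLocus (R := R) ((𝔞 ⊔ Ideal.span {x} : Ideal R) : Set R),
      P ∈ Z := fun P hP => by
    rw [PrimeSpectrum.mem_zeroLocus] at hP ⊢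
    exact fun a ha => hP (Ideal.mem_sup_left ha)
  obtain ⟨Q, hQ, hQle⟩ := Ideal.exists_minimalPrimes_le (I := 𝔞) (J := s.head.1.asIdeal)
    (fun a ha => (hsub _ s.head.2) ha)
  have hxhead : x ∈ s.head.1.asIdeal := by
    have := s.head.2
    rw [PrimeSpectrum.mem_zeroLocus] at this
    exact this (Ideal.mem_sup_right (Ideal.mem_span_singleton_self x))
  by_cases hmiss : ∃ z, HPos 𝒜 z ∧ z ∉ Q
  · have hxQ : x ∉ Q := hxS Q (by
      rw [Finset.mem_filter, Set.Finite.mem_toFinset]; exact ⟨hQ, hmiss⟩)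
    let s' : LTSeries Z := s.map (fun P => ⟨P.1, hsub P.1 P.2⟩) (fun _ _ h => h)
    let Q' : Z := ⟨⟨Q, hQ.1.1⟩, hQ.1.2⟩
    have hlt : Q' < s'.head := by
      have : Q < s.head.1.asIdeal := lt_of_le_of_ne hQle (fun h => hxQ (h ▸ hxhead))
      exact this
    have := (le_iSup (fun s : LTSeries Z => (s.length : WithBot ℕ∞)) (s'.cons Q' hlt)).trans hd
    have h2 : (s'.cons Q' hlt).length = s.length + 1 := by rw [RelSeries.cons_length]; rfl
    rw [h2] at this
    have h3 : s.length + 1 ≤ d + 1 := by exact_mod_cast this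
    have h4 : s.length ≤ d := by omega
    exact_mod_cast h4
  · push Not at hmiss
    have hmax := maximal_of_hpos 𝒜 h𝒜neg h𝒜zero Q hQ.1.1 hmiss
    have hlen : s.length = 0 := by
      by_contra hne
      have hlt : s.head < s.last := s.strictMono (Fin.pos_iff_ne_zero.2 (by
        intro h; apply hne; simpa [Fin.ext_iff] using h))
      have hlt' : s.head.1.asIdeal < s.last.1.asIdeal := hlt
      have := hmax.eq_of_le s.last.1.isPrime.ne_top (hQle.trans hlt'.le)
      rw [← this] at hlt'
      exact absurd hQle hlt'.not_ge
    rw [hlen]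
    exact_mod_cast Nat.zero_le d

theorem hsop_exists (h𝒜neg : ∀ t : ℤ, t < 0 → 𝒜 t = ⊥)
    (h𝒜zero : ∀ x ∈ 𝒜 0, ∃ c : k, algebraMap k R c = x)
    [Algebra.FiniteType k R] (d : ℕ) : ∀ (𝔞 : Ideal R),
    ringKrullDim (R ⧸ 𝔞) ≤ (d : ℕ) →
    ∃ (x : Fin d → R) (δ : Fin d → ℕ), (∀ i, 0 < δ i) ∧ (∀ i, x i ∈ 𝒜 (δ i)) ∧
      Module.Finite k (R ⧸ (𝔞 ⊔ Ideal.span (Set.range x))) := by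
  have : IsNoetherianRing R := Algebra.FiniteType.isNoetherianRing k R
  induction d with
  | zero =>
    intro 𝔞 hd
    refine ⟨Fin.elim0, Fin.elim0, fun i => i.elim0, fun i => i.elim0, ?_⟩
    rw [Set.range_eq_empty, Ideal.span_empty, sup_bot_eq]
    rw [Module.finite_iff_krullDimLE_zero, Ring.krullDimLE_iff]
    exact hd
  | succ d ih =>
    intro 𝔞 hd
    obtain ⟨x, ⟨t, ht, hxt⟩, hdx⟩ := dim_step 𝒜 h𝒜neg h𝒜zero d 𝔞 hd
    obtain ⟨y, δ, hδ, hy, hfin⟩ := ih _ hdx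
    refine ⟨Fin.cons x y, Fin.cons t δ, ?_, ?_, ?_⟩
    · intro i; refine Fin.cases ht hδ i
    · intro i; refine Fin.cases hxt hy i
    · rw [Fin.range_cons, Ideal.span_insert, ← sup_assoc]
      exact hfin

lemma pow_mem_I (h𝒜neg : ∀ t : ℤ, t < 0 → 𝒜 t = ⊥)
    (I : Ideal R) (hI : Ideal.IsHomogeneous 𝒜 I) (hIfl : IsFiniteLength R (R ⧸ I))
    (x : R) (t : ℕ) (ht : 0 < t) (hx : x ∈ 𝒜 (t : ℤ)) : ∃ n, x ^ n ∈ I := by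
  have hA : IsArtinian R (R ⧸ I) := (isFiniteLength_iff_isNoetherian_isArtinian.1 hIfl).2
  obtain ⟨n, y, hy⟩ := IsArtinian.exists_pow_succ_smul_dvd x (1 : R ⧸ I)
  obtain ⟨r, rfl⟩ := Ideal.Quotient.mk_surjective y
  refine ⟨n, ?_⟩
  have h1 : x ^ (n + 1) * r - x ^ n ∈ I := by
    rw [← Ideal.Quotient.eq_zero_iff_mem, map_sub, sub_eq_zero]
    simpa [Algebra.smul_def] using hy
  have h2 := hI (n * t : ℕ) h1
  have hxn : x ^ n ∈ 𝒜 ((n * t : ℕ) : ℤ) := by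
    have := SetLike.pow_mem_graded n hx
    simpa using this
  have hxn1 : x ^ (n + 1) ∈ 𝒜 (((n + 1) * t : ℕ) : ℤ) := by
    have := SetLike.pow_mem_graded (n + 1) hx
    simpa using this
  have h3 : (DirectSum.decompose 𝒜 (x ^ (n + 1) * r) ((n * t : ℕ) : ℤ) : R) = 0 := by
    have e : ((n * t : ℕ) : ℤ) = (((n + 1) * t : ℕ) : ℤ) + (-(t : ℤ)) := by push_cast; ring
    rw [e, DirectSum.coe_decompose_mul_add_of_left_mem 𝒜 hxn1]
    have : ((DirectSum.decompose 𝒜 r (-(t : ℤ)) : 𝒜 (-(t : ℤ))) : R) = 0 := by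
      have hm : grP 𝒜 (-(t : ℤ)) r ∈ 𝒜 (-(t : ℤ)) := grP_mem 𝒜 _ r
      rw [h𝒜neg _ (by omega), Submodule.mem_bot] at hm
      exact hm
    rw [this, mul_zero]
  rw [DirectSum.decompose_sub, DirectSum.sub_apply, AddSubgroupClass.coe_sub, h3,
    DirectSum.decompose_of_mem_same 𝒜 hxn, zero_sub] at h2
  simpa using h2

end hsop

section gens

variable {k R V : Type*} [Field k] [CommRing R] [Algebra k R] [AddCommGroup V] [Module R V]
  [Module k V] [IsScalarTower k R V] {d : ℕ}

/-- the `A`-module structure -/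
abbrev modA (k : Type*) {R : Type*} (V : Type*) [Field k] [CommRing R] [Algebra k R] [AddCommGroup V] [Module R V]
    {d : ℕ} (x : Fin d → R) : Module (MvPolynomial (Fin d) k) V :=
  Module.compHom V (MvPolynomial.aeval (R := k) x).toRingHom

lemma aeval_smul_mem (x : Fin d → R) (U : Submodule k V) (hU : ∀ u ∈ U, ∀ i, x i • u ∈ U)
    (P : MvPolynomial (Fin d) k) : ∀ u ∈ U, MvPolynomial.aeval x P • u ∈ U := by
  induction P using MvPolynomial.induction_on with
  | C a => intro u hu; rw [MvPolynomial.aeval_C, algebraMap_smul]; exact U.smul_mem a hu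
  | add P Q hP hQ => intro u hu; rw [map_add, add_smul]; exact U.add_mem (hP u hu) (hQ u hu)
  | mul_X P i hP =>
    intro u hu; rw [map_mul, MvPolynomial.aeval_X, mul_smul]; exact hP _ (hU u hu i)

/-- a `k`-subspace closed under the `x i` as an `A`-submodule -/
def subA (x : Fin d → R) (U : Submodule k V) (hU : ∀ u ∈ U, ∀ i, x i • u ∈ U) :
    letI := modA k V x; Submodule (MvPolynomial (Fin d) k) V :=
  letI := modA k V x
  { carrier := U
    add_mem' := fun ha hb => U.add_mem ha hb
    zero_mem' := U.zero_mem
    smul_mem' := fun c u hu => aeval_smul_mem x U hU c u hu }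

lemma gen_exists {ι : Type*} [Fintype ι] (x : Fin d → R) (G : ι → V) (W : Submodule R V)
    (hG : GenBy x G ⊤ (W.restrictScalars k)) (U : Submodule k V) (hU : ∀ u ∈ U, ∀ i, x i • u ∈ U) :
    ∃ (m : ℕ) (G' : Fin m → V), (∀ i, G' i ∈ U) ∧ GenBy x G' U (W.restrictScalars k) := by
  letI := modA k V x
  have hWx : ∀ w ∈ W.restrictScalars k, ∀ i, x i • w ∈ W.restrictScalars k :=
    fun w hw i => W.smul_mem (x i) hw
  let WA := subA x (W.restrictScalars k) hWx
  have hfin : Module.Finite (MvPolynomial (Fin d) k) (V ⧸ WA) := by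
    refine Module.Finite.of_surjective
      (Fintype.linearCombination (MvPolynomial (Fin d) k) (fun i => WA.mkQ (G i))) ?_
    intro v
    obtain ⟨v, rfl⟩ := WA.mkQ_surjective v
    obtain ⟨c, hc⟩ := hG v trivial
    refine ⟨c, ?_⟩
    rw [Fintype.linearCombination_apply]
    simp only [← map_smul, ← map_sum]
    symm
    rw [← sub_eq_zero, ← map_sub, Submodule.mkQ_apply, Submodule.Quotient.mk_eq_zero]
    exact hc
  have hnoeth : IsNoetherian (MvPolynomial (Fin d) k) (V ⧸ WA) := isNoetherian_of_isNoetherianRing_of_finite _ _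
  obtain ⟨m, g, hg⟩ := Submodule.fg_iff_exists_fin_generating_family.1
    (hnoeth.noetherian ((subA x U hU).map WA.mkQ))
  have hgm : ∀ i, ∃ u ∈ U, WA.mkQ u = g i := by
    intro i
    have : g i ∈ (subA x U hU).map WA.mkQ := by
      rw [← hg]; exact Submodule.subset_span ⟨i, rfl⟩
    exact this
  choose G' hG' hG'g using hgm
  refine ⟨m, G', hG', fun u hu => ?_⟩
  have : WA.mkQ u ∈ Submodule.span (MvPolynomial (Fin d) k) (Set.range g) := by
    rw [hg]; exact ⟨u, hu, rfl⟩
  obtain ⟨c, hc⟩ := (Submodule.mem_span_range_iff_exists_fun _).1 this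
  refine ⟨c, ?_⟩
  have h2 : WA.mkQ (u - ∑ i, c i • G' i) = 0 := by
    rw [map_sub, ← hc, map_sum]
    simp only [map_smul, hG'g, sub_self]
  rw [Submodule.mkQ_apply, Submodule.Quotient.mk_eq_zero] at h2
  exact h2

lemma gen_homog {ι : Type} [Fintype ι] (𝒱 : ℤ → Submodule k V) [DirectSum.Decomposition 𝒱]
    (x : Fin d → R) (G : ι → V) (U W : Submodule k V) (hG : GenBy x G U W) :
    ∃ (ι' : Type) (_ : Fintype ι') (G' : ι' → V) (γ : ι' → ℤ), GenBy x G' U W ∧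
      ∀ a, G' a ∈ 𝒱 (γ a) ∧ ∃ i, G' a = grP 𝒱 (γ a) (G i) := by
  choose s hs using fun i => grP_sum 𝒱 (G i)
  refine ⟨Σ i, s i, inferInstance, fun a => grP 𝒱 a.2.1 (G a.1), fun a => a.2.1, ?_, ?_⟩
  · intro u hu
    obtain ⟨c, hc⟩ := hG u hu
    refine ⟨fun a => c a.1, ?_⟩
    have : ∑ a : (Σ i, s i), MvPolynomial.aeval x (c a.1) • grP 𝒱 a.2.1 (G a.1) =
        ∑ i, MvPolynomial.aeval x (c i) • G i := by
      rw [Fintype.sum_sigma]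
      refine Finset.sum_congr rfl fun i _ => ?_
      simp only
      rw [← Finset.smul_sum]
      congr 1
      conv_rhs => rw [hs i]
      exact Finset.sum_coe_sort (s i) (fun j => grP 𝒱 j (G i))
    rw [this]
    exact hc
  · intro a
    exact ⟨grP_mem 𝒱 _ _, a.1, rfl⟩

lemma gen_exists_homog {ι : Type*} [Fintype ι] (𝒱 : ℤ → Submodule k V) [DirectSum.Decomposition 𝒱]
    (x : Fin d → R) (G : ι → V) (W : Submodule R V)
    (hG : GenBy x G ⊤ (W.restrictScalars k)) (U : Submodule k V) (hU : ∀ u ∈ U, ∀ i, x i • u ∈ U)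
    (hgr : IsGr 𝒱 U) :
    ∃ (ι' : Type) (_ : Fintype ι') (G' : ι' → V) (γ : ι' → ℤ), (∀ a, G' a ∈ U) ∧
      (∀ a, G' a ∈ 𝒱 (γ a)) ∧ GenBy x G' U (W.restrictScalars k) := by
  obtain ⟨m, G1, h1, h2⟩ := gen_exists x G W hG U hU
  obtain ⟨ι', i1, G', γ, h3, h4⟩ := gen_homog 𝒱 x G1 U _ h2
  refine ⟨ι', i1, G', γ, fun a => ?_, fun a => (h4 a).1, h3⟩
  obtain ⟨-, i, hi⟩ := h4 a
  rw [hi]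
  exact hgr _ (h1 i) _

lemma nakayama (𝒜 : ℤ → Submodule k R) [GradedAlgebra 𝒜] (h𝒜neg : ∀ t : ℤ, t < 0 → 𝒜 t = ⊥)
    (𝔞 : Ideal R) (h𝔞 : IsGr 𝒜 (𝔞.restrictScalars k)) (x : Fin d → R) (δ : Fin d → ℕ)
    (hδ : ∀ i, 0 < δ i) (hx : ∀ i, x i ∈ 𝒜 (δ i))
    (hfin : Module.Finite k (R ⧸ (𝔞 ⊔ Ideal.span (Set.range x)))) :
    ∃ (m : ℕ) (G : Fin m → R), GenBy x G ⊤ (𝔞.restrictScalars k) := by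
  classical
  letI := modA k R x
  obtain ⟨m, g, hg⟩ := Submodule.fg_iff_exists_fin_generating_family.1 hfin.fg_top
  choose G hGg using fun i => Ideal.Quotient.mk_surjective (g i)
  choose s hs using fun i => grP_sum 𝒜 (G i)
  let T : Finset R := Finset.univ.biUnion fun i => (s i).image (fun j => grP 𝒜 j (G i))
  have h𝔞x : ∀ w ∈ 𝔞.restrictScalars k, ∀ i, x i • w ∈ 𝔞.restrictScalars k :=
    fun w hw i => 𝔞.smul_mem (x i) hw
  let 𝔞A := subA x (𝔞.restrictScalars k) h𝔞x
  let N : Submodule (MvPolynomial (Fin d) k) R := Submodule.span _ (T : Set R) ⊔ 𝔞A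
  have hCk : ∀ (c : k) (r : R), r ∈ N → c • r ∈ N := by
    intro c r hr
    have := N.smul_mem (MvPolynomial.C c) hr
    have e : (MvPolynomial.C c : MvPolynomial (Fin d) k) • r = c • r := by
      show MvPolynomial.aeval x (MvPolynomial.C c) • r = _
      rw [MvPolynomial.aeval_C, algebraMap_smul]
    rwa [e] at this
  have hXN : ∀ i (r : R), r ∈ N → r * x i ∈ N := by
    intro i r hr
    have := N.smul_mem (MvPolynomial.X i) hr
    have e : (MvPolynomial.X i : MvPolynomial (Fin d) k) • r = r * x i := by
      show MvPolynomial.aeval x (MvPolynomial.X i) • r = _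
      rw [MvPolynomial.aeval_X, smul_eq_mul, mul_comm]
    rwa [e] at this
  have hGt : ∀ i t, grP 𝒜 t (G i) ∈ N := by
    intro i t
    by_cases ht : t ∈ s i
    · exact Submodule.mem_sup_left (Submodule.subset_span
        (by simp only [T, Finset.coe_biUnion, Set.mem_iUnion]
            exact ⟨i, Finset.mem_coe.2 (Finset.mem_univ i), Finset.mem_coe.2 (Finset.mem_image_of_mem _ ht)⟩))
    · rw [hs i, map_sum, Finset.sum_eq_zero]
      · exact zero_mem _
      · intro j hj
        exact grP_ne 𝒜 (grP_mem 𝒜 _ _) (fun h => ht (h ▸ hj))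
  have hall : ∀ n : ℕ, ∀ t : ℤ, t < n → ∀ r ∈ 𝒜 t, r ∈ N := by
    intro n
    induction n with
    | zero =>
      intro t ht r hr
      rw [h𝒜neg t (by simpa using ht), Submodule.mem_bot] at hr
      rw [hr]; exact zero_mem _
    | succ n ih =>
      intro t ht r hr
      have h1 : Ideal.Quotient.mk (𝔞 ⊔ Ideal.span (Set.range x)) r ∈ Submodule.span k (Set.range g) := by
        rw [hg]; trivial
      obtain ⟨c, hc⟩ := (Submodule.mem_span_range_iff_exists_fun _).1 h1
      have h2 : r - ∑ i, c i • G i ∈ 𝔞 ⊔ Ideal.span (Set.range x) := by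
        rw [← Ideal.Quotient.eq_zero_iff_mem, map_sub, ← hc, map_sum, sub_eq_zero]
        refine Finset.sum_congr rfl fun i _ => ?_
        rw [← hGg i]
        rfl
      obtain ⟨a, ha, z, hz, haz⟩ := Submodule.mem_sup.1 h2
      obtain ⟨y, hy⟩ := (Ideal.mem_span_range_iff_exists_fun).1 hz
      have h3 : r = ∑ i, c i • G i + a + ∑ j, y j * x j := by
        rw [hy, add_assoc, haz]; ring
      have h4 : r = ∑ i, c i • grP 𝒜 t (G i) + grP 𝒜 t a + ∑ j, grP 𝒜 (t - δ j) (y j) * x j := by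
        conv_lhs => rw [← grP_same 𝒜 hr, h3]
        simp only [map_add, map_sum, map_smul]
        congr 1
        refine Finset.sum_congr rfl fun j _ => ?_
        rw [grP_apply, grP_apply]
        have e : t = (t - δ j) + δ j := by ring
        conv_lhs => rw [e]
        exact DirectSum.coe_decompose_mul_add_of_right_mem 𝒜 (hx j)
      rw [h4]
      refine N.add_mem (N.add_mem (N.sum_mem fun i _ => hCk _ _ (hGt i t)) ?_) (N.sum_mem fun j _ => ?_)
      · exact Submodule.mem_sup_right (h𝔞 a ha t)
      · refine hXN j _ (ih (t - δ j) ?_ _ (grP_mem 𝒜 _ _))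
        have := hδ j
        push_cast at ht
        omega
  have htop : ∀ r : R, r ∈ N := by
    intro r
    obtain ⟨s, hs⟩ := grP_sum 𝒜 r
    rw [hs]
    exact N.sum_mem fun j _ => hall (j.toNat + 1) j (by push_cast; omega) _ (grP_mem 𝒜 _ _)
  obtain ⟨m', G', hG'⟩ : ∃ (m' : ℕ) (G' : Fin m' → R), Set.range G' = (T : Set R) := by
    refine ⟨T.card, fun i => T.equivFin.symm i, ?_⟩
    rw [Set.range_comp' Subtype.val T.equivFin.symm]
    simp
  refine ⟨m', G', fun u _ => ?_⟩
  obtain ⟨z, hz, a, ha, hza⟩ := Submodule.mem_sup.1 (htop u)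
  rw [← hG'] at hz
  obtain ⟨c, hc⟩ := (Submodule.mem_span_range_iff_exists_fun _).1 hz
  refine ⟨c, ?_⟩
  have : u - ∑ i, MvPolynomial.aeval x (c i) • G' i = a := by
    rw [← hza, ← hc]
    exact add_sub_cancel_left _ _
  rw [this]; exact ha

end gens

section ranks

variable {A S : Type*} [CommRing A] [IsDomain A] [IsNoetherianRing A] [AddCommGroup S] [Module A S]
  [Module.Finite A S]

lemma finrank_le_of_smul {X Y : Submodule A S} (f : A) (hf : f ≠ 0) (h : ∀ u ∈ X, f • u ∈ Y) :
    Module.finrank A X ≤ Module.finrank A Y := by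
  have h1 := Submodule.finrank_quotient_add_finrank (Y.submoduleOf X)
  have h2 : Module.finrank A (X ⧸ Y.submoduleOf X) = 0 := by
    rw [Module.finrank_eq_zero_iff]
    intro q
    obtain ⟨u, rfl⟩ := (Y.submoduleOf X).mkQ_surjective q
    refine ⟨f, hf, ?_⟩
    rw [← map_smul, Submodule.mkQ_apply, Submodule.Quotient.mk_eq_zero]
    exact h u u.2
  rw [← h1, h2, zero_add]
  have h3 : Module.finrank A (Y.submoduleOf X) =
      Module.finrank A ((Y.submoduleOf X).map X.subtype) :=
    (LinearEquiv.finrank_eq (Submodule.equivMapOfInjective X.subtype X.injective_subtype _))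
  rw [h3]
  apply Submodule.finrank_mono
  rintro _ ⟨u, hu, rfl⟩
  exact hu

lemma exists_smul_of_finrank_le {X Y : Submodule A S} (hXY : X ≤ Y)
    (h : Module.finrank A Y ≤ Module.finrank A X) : ∃ f : A, f ≠ 0 ∧ ∀ u ∈ Y, f • u ∈ X := by
  have h1 := Submodule.finrank_quotient_add_finrank (X.submoduleOf Y)
  have h3 : Module.finrank A (X.submoduleOf Y) = Module.finrank A X :=
    LinearEquiv.finrank_eq (Submodule.submoduleOfEquivOfLe hXY)
  have h2 : Module.finrank A (Y ⧸ X.submoduleOf Y) = 0 := by omega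
  rw [Module.finrank_eq_zero_iff_isTorsion] at h2
  obtain ⟨f, hf, hf0⟩ := Submodule.annihilator_top_inter_nonZeroDivisors h2
  refine ⟨f, nonZeroDivisors.ne_zero hf0, fun u hu => ?_⟩
  have h4 := (Submodule.mem_annihilator.1 hf) ((X.submoduleOf Y).mkQ ⟨u, hu⟩) trivial
  rw [← map_smul, Submodule.mkQ_apply, Submodule.Quotient.mk_eq_zero] at h4
  exact h4

lemma finrank_sup_le' (X Y : Submodule A S) :
    Module.finrank A (X ⊔ Y : Submodule A S) ≤ Module.finrank A X + Module.finrank A Y := by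
  have h := Submodule.rank_sup_add_rank_inf_eq X Y
  simp only [← Module.finrank_eq_rank] at h
  norm_cast at h
  omega

lemma stab_chain (E : ℕ → Submodule A S) (hE : ∀ n, E (n + 1) ≤ E n) :
    ∃ e, ∃ f : A, f ≠ 0 ∧ ∀ u ∈ E e, f • u ∈ E (e + 1) := by
  by_contra hcon
  have hlt : ∀ e, Module.finrank A (E (e + 1)) < Module.finrank A (E e) := by
    intro e
    by_contra hge
    exact hcon ⟨e, exists_smul_of_finrank_le (hE e) (not_lt.1 hge)⟩
  have : ∀ n, Module.finrank A (E n) + n ≤ Module.finrank A (E 0) := by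
    intro n
    induction n with
    | zero => simp
    | succ n ih => have := hlt n; omega
  have := this (Module.finrank A (E 0) + 1)
  omega

lemma exists_gen_rank (Q : Type*) [AddCommGroup Q] [Module A Q] [Module.Finite A Q] :
    ∃ (v : Fin (Module.finrank A Q) → Q) (g : A), g ≠ 0 ∧
      ∀ q : Q, g • q ∈ Submodule.span A (Set.range v) := by
  obtain ⟨v, hv⟩ := exists_linearIndependent_of_le_finrank (R := A) (M := Q) le_rfl
  obtain ⟨g, hg, h⟩ := exists_smul_of_finrank_le (X := Submodule.span A (Set.range v)) (Y := ⊤) le_top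
    (by rw [finrank_span_eq_card hv]; simp)
  exact ⟨v, g, hg, fun q => h q trivial⟩

end ranks

section rankalg

variable {A S : Type*} [CommRing A] [IsDomain A] [IsNoetherianRing A] [CommRing S] [Algebra A S]
  [Module.Finite A S]

/-- span of `p`-th powers -/
def Fpow (A : Type*) {S : Type*} [CommRing A] [CommRing S] [Algebra A S] (p : ℕ) (X : Submodule A S) :
    Submodule A S := Submodule.span A ((fun s => s ^ p) '' (X : Set S))

lemma reg_rank (p : ℕ) [Fact p.Prime] [CharP S p] (J B : Submodule A S) (hJB : J ≤ B)
    (hFJ : Fpow A p J ≤ J) (f : A) (hf : f ≠ 0) (hfB : ∀ b ∈ B, f • b ∈ Fpow A p B) :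
    ∃ f' : A, f' ≠ 0 ∧ ∀ j ∈ J, f' • j ∈ Fpow A p J := by
  apply exists_smul_of_finrank_le hFJ
  have h1 := finrank_le_of_smul f hf hfB
  have h2 := Submodule.finrank_quotient_add_finrank (J.submoduleOf B)
  have h3 : Module.finrank A (J.submoduleOf B) = Module.finrank A J :=
    LinearEquiv.finrank_eq (Submodule.submoduleOfEquivOfLe hJB)
  obtain ⟨v, g, hg, hv⟩ := exists_gen_rank (A := A) (B ⧸ J.submoduleOf B)
  choose b hb using fun i => (J.submoduleOf B).mkQ_surjective (v i)
  set T : Submodule A S := Submodule.span A (Set.range fun i => (b i : S) ^ p) with hT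
  have h4 : ∀ u ∈ Fpow A p B, g ^ p • u ∈ Fpow A p J ⊔ T := by
    intro u hu
    unfold Fpow at hu
    induction hu using Submodule.span_induction with
    | zero => rw [smul_zero]; exact zero_mem _
    | add y z _ _ hy hz => rw [smul_add]; exact add_mem hy hz
    | smul a y _ hy => rw [smul_comm]; exact Submodule.smul_mem _ _ hy
    | mem y hy =>
      obtain ⟨c, hc, rfl⟩ := hy
      simp only
      obtain ⟨a, ha⟩ := (Submodule.mem_span_range_iff_exists_fun _).1 (hv ((J.submoduleOf B).mkQ ⟨c, hc⟩))
      have h5 : (J.submoduleOf B).mkQ (g • ⟨c, hc⟩ - ∑ i, a i • b i) = 0 := by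
        rw [map_sub, map_smul, ← ha, map_sum]
        simp [← hb]
      rw [Submodule.mkQ_apply, Submodule.Quotient.mk_eq_zero] at h5
      set j : S := B.subtype (g • ⟨c, hc⟩ - ∑ i, a i • b i) with hj
      have h6 : g • c = j + ∑ i, a i • (b i : S) := by
        rw [hj]; simp
      rw [← smul_pow, h6, add_pow_char, sum_pow_char]
      refine Submodule.add_mem_sup (Submodule.subset_span ⟨j, h5, rfl⟩) (Submodule.sum_mem _ fun i _ => ?_)
      rw [smul_pow]
      exact Submodule.smul_mem _ _ (Submodule.subset_span ⟨i, rfl⟩)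
  have h5 := finrank_le_of_smul (g ^ p) (pow_ne_zero _ hg) h4
  have h6 := finrank_sup_le' (Fpow A p J) T
  have h7 : Module.finrank A T ≤ Module.finrank A (B ⧸ J.submoduleOf B) := by
    refine (finrank_range_le_card (R := A) (fun i => (b i : S) ^ p)).trans ?_
    simp
  omega

end rankalg

section stab

variable {k R : Type*} [Field k] [CommRing R] [Algebra k R] {d : ℕ}

/-- The subalgebra `k[x, R^{p^e}]`. -/
def Rsub (k : Type*) {R : Type*} [Field k] [CommRing R] [Algebra k R] {d : ℕ} (x : Fin d → R)
    (p e : ℕ) : Subalgebra k R :=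
  Algebra.adjoin k (Set.range x ∪ Set.range (fun r : R => r ^ (p ^ e)))

lemma x_mem_Rsub (x : Fin d → R) (p e : ℕ) (i : Fin d) : x i ∈ Rsub k x p e :=
  Algebra.subset_adjoin (Or.inl ⟨i, rfl⟩)

lemma pow_mem_Rsub (x : Fin d → R) (p e : ℕ) (r : R) : r ^ (p ^ e) ∈ Rsub k x p e :=
  Algebra.subset_adjoin (Or.inr ⟨r, rfl⟩)

lemma Rsub_succ_le (x : Fin d → R) (p e : ℕ) : Rsub k x p (e + 1) ≤ Rsub k x p e := by
  apply Algebra.adjoin_le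
  rintro _ (⟨i, rfl⟩ | ⟨r, rfl⟩)
  · exact x_mem_Rsub x p e i
  · have : r ^ (p ^ (e + 1)) = (r ^ p) ^ (p ^ e) := by rw [← pow_mul]; congr 1; ring
    simp only [this]
    exact pow_mem_Rsub x p e _

/-- the `k`-span of `x^a b^p`, `b ∈ U` -/
def Npow (x : Fin d → R) (p : ℕ) (U : Submodule k R) : Submodule k R :=
  Submodule.span k {z | ∃ a : Fin d →₀ ℕ, ∃ b ∈ U, z = xmon x a * b ^ p}

lemma xmon_add (x : Fin d → R) (a b : Fin d →₀ ℕ) : xmon x (a + b) = xmon x a * xmon x b := by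
  simp [xmon, pow_add, Finset.prod_mul_distrib]

lemma xmon_single (x : Fin d → R) (i : Fin d) : xmon x (Finsupp.single i 1) = x i := by
  rw [xmon, Finset.prod_eq_single i]
  · simp
  · intro j _ hj; simp [Finsupp.single_apply, hj.symm]
  · simp

lemma xmon_zero (x : Fin d → R) : xmon x 0 = 1 := by simp [xmon]

lemma xmon_mem_sub (x : Fin d → R) (B : Subalgebra k R) (hx : ∀ i, x i ∈ B) (a : Fin d →₀ ℕ) :
    xmon x a ∈ B := B.prod_mem fun i _ => B.pow_mem (hx i) _

lemma aeval_mem_sub (x : Fin d → R) (B : Subalgebra k R) (hx : ∀ i, x i ∈ B)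
    (P : MvPolynomial (Fin d) k) : MvPolynomial.aeval x P ∈ B := by
  have := aeval_smul_mem x (Subalgebra.toSubmodule B)
    (fun u hu i => B.mul_mem (hx i) hu) P 1 B.one_mem
  simpa using this

lemma Npow_x (x : Fin d → R) (p : ℕ) (U : Submodule k R) :
    ∀ u ∈ Npow x p U, ∀ i, x i • u ∈ Npow x p U := by
  intro u hu i
  unfold Npow at hu
  induction hu using Submodule.span_induction with
  | zero => rw [smul_zero]; exact zero_mem _
  | add y z _ _ hy hz => rw [smul_add]; exact add_mem hy hz
  | smul a y _ hy => rw [smul_comm]; exact Submodule.smul_mem _ _ hy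
  | mem y hy =>
    obtain ⟨a, b, hb, rfl⟩ := hy
    refine Submodule.subset_span ⟨Finsupp.single i 1 + a, b, hb, ?_⟩
    rw [xmon_add, xmon_single, smul_eq_mul, mul_assoc]

lemma Rsub_le_Npow (x : Fin d → R) (p e : ℕ) :
    Subalgebra.toSubmodule (Rsub k x p (e + 1)) ≤ Npow x p (Subalgebra.toSubmodule (Rsub k x p e)) := by
  rw [Rsub, Algebra.adjoin_eq_span]
  apply Submodule.span_mono
  intro z hz
  induction hz using Submonoid.closure_induction with
  | one => exact ⟨0, 1, (Rsub k x p e).one_mem, by simp [xmon_zero]⟩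
  | mul y z _ _ hy hz =>
    obtain ⟨a, b, hb, rfl⟩ := hy
    obtain ⟨a', b', hb', rfl⟩ := hz
    exact ⟨a + a', b * b', (Rsub k x p e).mul_mem hb hb', by rw [xmon_add]; ring⟩
  | mem y hy =>
    rcases hy with ⟨i, rfl⟩ | ⟨r, rfl⟩
    · exact ⟨Finsupp.single i 1, 1, (Rsub k x p e).one_mem, by simp [xmon_single]⟩
    · exact ⟨0, r ^ (p ^ e), pow_mem_Rsub x p e r, by
        simp only [xmon_zero, one_mul, ← pow_mul]; rfl⟩

/-- algebra structure over the polynomial ring -/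
abbrev algA (k : Type*) {R : Type*} [Field k] [CommRing R] [Algebra k R] {d : ℕ} (x : Fin d → R) :
    Algebra (MvPolynomial (Fin d) k) R := (MvPolynomial.aeval (R := k) x).toRingHom.toAlgebra

/-- image in `R ⧸ 𝔞` as an `A`-submodule -/
def imgA (x : Fin d → R) (𝔞 : Ideal R) (U : Submodule k R) (hU : ∀ u ∈ U, ∀ i, x i • u ∈ U) :
    letI := algA k x; Submodule (MvPolynomial (Fin d) k) (R ⧸ 𝔞) :=
  letI := algA k x
  { carrier := Ideal.Quotient.mk 𝔞 '' U
    add_mem' := by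
      rintro _ _ ⟨a, ha, rfl⟩ ⟨b, hb, rfl⟩
      exact ⟨a + b, U.add_mem ha hb, map_add _ _ _⟩
    zero_mem' := ⟨0, U.zero_mem, map_zero _⟩
    smul_mem' := by
      rintro c _ ⟨a, ha, rfl⟩
      exact ⟨MvPolynomial.aeval x c • a, aeval_smul_mem x U hU c a ha, rfl⟩ }

lemma smul_mk (x : Fin d → R) (𝔞 : Ideal R) (c : MvPolynomial (Fin d) k) (r : R) :
    letI := algA k x
    c • (Ideal.Quotient.mk 𝔞 r) = Ideal.Quotient.mk 𝔞 (MvPolynomial.aeval x c * r) := rfl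

lemma finA (x : Fin d → R) (𝔞 : Ideal R) {ι : Type*} [Fintype ι] (G : ι → R)
    (hG : GenBy x G ⊤ (𝔞.restrictScalars k)) :
    letI := algA k x; Module.Finite (MvPolynomial (Fin d) k) (R ⧸ 𝔞) := by
  letI := algA k x
  refine Module.Finite.of_surjective
    (Fintype.linearCombination (MvPolynomial (Fin d) k) (fun i => Ideal.Quotient.mk 𝔞 (G i))) ?_
  intro v
  obtain ⟨v, rfl⟩ := Ideal.Quotient.mk_surjective v
  obtain ⟨c, hc⟩ := hG v trivial
  refine ⟨c, ?_⟩
  rw [Fintype.linearCombination_apply]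
  simp only [smul_mk, ← map_sum]
  symm
  rw [← sub_eq_zero, ← map_sub, Ideal.Quotient.eq_zero_iff_mem]
  exact hc

lemma stab_R (x : Fin d → R) (p : ℕ) (𝔞 : Ideal R) {ι : Type*} [Fintype ι] (G : ι → R)
    (hG : GenBy x G ⊤ (𝔞.restrictScalars k)) :
    ∃ e, ∃ f : MvPolynomial (Fin d) k, f ≠ 0 ∧ ∀ b ∈ Rsub k x p e, ∃ r ∈ Rsub k x p (e + 1),
      MvPolynomial.aeval x f * b - r ∈ 𝔞 := by
  letI := algA k x
  have hfin := finA x 𝔞 G hG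
  have hcl : ∀ e, ∀ u ∈ Subalgebra.toSubmodule (Rsub k x p e), ∀ i,
      x i • u ∈ Subalgebra.toSubmodule (Rsub k x p e) :=
    fun e u hu i => (Rsub k x p e).mul_mem (x_mem_Rsub x p e i) hu
  obtain ⟨e, f, hf, h⟩ := stab_chain (A := MvPolynomial (Fin d) k)
    (fun e => imgA x 𝔞 (Subalgebra.toSubmodule (Rsub k x p e)) (hcl e))
    (fun e => Set.image_mono (Rsub_succ_le x p e))
  refine ⟨e, f, hf, fun b hb => ?_⟩
  obtain ⟨r, hr, hre⟩ := h _ ⟨b, hb, rfl⟩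
  refine ⟨r, hr, ?_⟩
  rw [smul_mk] at hre
  rw [← Ideal.Quotient.eq_zero_iff_mem, map_sub, hre, sub_self]

lemma Fpow_img (x : Fin d → R) (p : ℕ) (𝔞 : Ideal R) (U : Submodule k R)
    (hU : ∀ u ∈ U, ∀ i, x i • u ∈ U) :
    letI := algA k x
    Fpow (MvPolynomial (Fin d) k) p (imgA x 𝔞 U hU) = imgA x 𝔞 (Npow x p U) (Npow_x x p U) := by
  letI := algA k x
  apply le_antisymm
  · refine Submodule.span_le.2 ?_
    rintro _ ⟨_, ⟨b, hb, rfl⟩, rfl⟩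
    exact ⟨b ^ p, Submodule.subset_span ⟨0, b, hb, by rw [xmon_zero, one_mul]⟩, map_pow _ _ _⟩
  · rintro _ ⟨r, hr, rfl⟩
    change r ∈ Npow x p U at hr
    unfold Npow at hr
    induction hr using Submodule.span_induction with
    | zero => rw [map_zero]; exact zero_mem _
    | add y z _ _ hy hz => rw [map_add]; exact add_mem hy hz
    | smul a y _ hy =>
      have := Submodule.smul_mem _ (MvPolynomial.C a) hy
      rw [smul_mk, MvPolynomial.aeval_C, ← Algebra.smul_def] at this
      exact this
    | mem y hy =>
      obtain ⟨a, b, hb, rfl⟩ := hy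
      have h1 : Ideal.Quotient.mk 𝔞 b ^ p ∈ Fpow (MvPolynomial (Fin d) k) p (imgA x 𝔞 U hU) :=
        Submodule.subset_span ⟨_, ⟨b, hb, rfl⟩, rfl⟩
      have := Submodule.smul_mem _ (MvPolynomial.monomial a (1 : k)) h1
      rw [← map_pow, smul_mk, aeval_xmon, one_smul] at this
      exact this

lemma Npow_le (x : Fin d → R) (p : ℕ) (hp : 0 < p) (B : Subalgebra k R) (hx : ∀ i, x i ∈ B)
    (J : Submodule k R) (hJB : ∀ j ∈ J, j ∈ B) (hJ : ∀ b ∈ B, ∀ j ∈ J, b * j ∈ J) : Npow x p J ≤ J := by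
  refine Submodule.span_le.2 ?_
  rintro _ ⟨a, b, hb, rfl⟩
  obtain ⟨m, rfl⟩ : ∃ m, p = m + 1 := ⟨p - 1, by omega⟩
  rw [pow_succ, ← mul_assoc]
  exact hJ _ (B.mul_mem (xmon_mem_sub x B hx a) (B.pow_mem (hJB b hb) m)) _ hb

lemma reg_R1 (x : Fin d → R) (p : ℕ) [Fact p.Prime] [CharP k p] (𝔞 : Ideal R) [Nontrivial (R ⧸ 𝔞)]
    {ι : Type*} [Fintype ι] (G : ι → R) (hG : GenBy x G ⊤ (𝔞.restrictScalars k))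
    (B : Subalgebra k R) (hx : ∀ i, x i ∈ B) (f : MvPolynomial (Fin d) k) (hf : f ≠ 0)
    (hfB : ∀ b ∈ B, ∃ r ∈ Npow x p (Subalgebra.toSubmodule B), MvPolynomial.aeval x f * b - r ∈ 𝔞)
    (J : Submodule k R) (hJB : ∀ j ∈ J, j ∈ B) (hJ : ∀ b ∈ B, ∀ j ∈ J, b * j ∈ J) :
    ∃ f' : MvPolynomial (Fin d) k, f' ≠ 0 ∧ ∀ j ∈ J, ∃ r ∈ Npow x p J,
      MvPolynomial.aeval x f' * j - r ∈ 𝔞 := by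
  letI := algA k x
  have hfin := finA x 𝔞 G hG
  have hp0 : 0 < p := (Fact.out : p.Prime).pos
  have : CharP (R ⧸ 𝔞) p := charP_of_injective_algebraMap (algebraMap k (R ⧸ 𝔞)).injective p
  have hJx : ∀ u ∈ J, ∀ i, x i • u ∈ J := fun u hu i => hJ _ (hx i) _ hu
  have hBx : ∀ u ∈ Subalgebra.toSubmodule B, ∀ i, x i • u ∈ Subalgebra.toSubmodule B :=
    fun u hu i => B.mul_mem (hx i) hu
  obtain ⟨f', hf', h⟩ := reg_rank (A := MvPolynomial (Fin d) k) p (imgA x 𝔞 J hJx) (imgA x 𝔞 _ hBx)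
    (Set.image_mono hJB)
    (by rw [Fpow_img]; exact Set.image_mono (Npow_le x p hp0 B hx J hJB hJ))
    f hf
    (by
      rintro _ ⟨b, hb, rfl⟩
      obtain ⟨r, hr, hre⟩ := hfB b hb
      rw [Fpow_img, smul_mk]
      refine ⟨r, hr, ?_⟩
      rw [← Ideal.Quotient.eq_zero_iff_mem, map_sub, sub_eq_zero] at hre
      exact hre.symm)
  refine ⟨f', hf', fun j hj => ?_⟩
  have h1 := h _ ⟨j, hj, rfl⟩
  rw [Fpow_img] at h1
  obtain ⟨r, hr, hre⟩ := h1
  refine ⟨r, hr, ?_⟩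
  rw [smul_mk] at hre
  rw [← Ideal.Quotient.eq_zero_iff_mem, map_sub, hre, sub_self]

lemma det_mem (B : Subalgebra k R) (J : Submodule k R) (hJB : ∀ j ∈ J, j ∈ B)
    (hJ : ∀ b ∈ B, ∀ j ∈ J, b * j ∈ J) {m : ℕ} (C : Matrix (Fin m) (Fin m) R) (hC : ∀ i j, C i j ∈ J)
    (s : R) (hs : s ∈ B) :
    s ^ m - (Matrix.det (Matrix.scalar (Fin m) s - C)) ∈ J := by
  let J' : Ideal B :=
    { carrier := {b | (b : R) ∈ J}
      add_mem' := fun ha hb => J.add_mem ha hb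
      zero_mem' := J.zero_mem
      smul_mem' := fun c b hb => hJ c c.2 b hb }
  let C' : Matrix (Fin m) (Fin m) B := fun i j => ⟨C i j, hJB _ (hC i j)⟩
  have h1 : (⟨s, hs⟩ : B) ^ m - Matrix.det (Matrix.scalar (Fin m) (⟨s, hs⟩ : B) - C') ∈ J' := by
    rw [← Ideal.Quotient.eq_zero_iff_mem, map_sub, RingHom.map_det, RingHom.mapMatrix_apply,
      Matrix.map_sub _ (map_sub _)]
    have : C'.map (Ideal.Quotient.mk J') = 0 := by
      ext i j
      exact Ideal.Quotient.eq_zero_iff_mem.2 (hC i j)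
    rw [this, sub_zero, Matrix.scalar_apply, Matrix.diagonal_map (map_zero _), Matrix.det_diagonal,
      map_pow, Finset.prod_const, Finset.card_univ, Fintype.card_fin]
    exact sub_self _
  have h2 : ((⟨s, hs⟩ ^ m - Matrix.det (Matrix.scalar (Fin m) (⟨s, hs⟩ : B) - C') : B) : R) ∈ J := h1
  have h3 : ((Matrix.det (Matrix.scalar (Fin m) (⟨s, hs⟩ : B) - C') : B) : R) =
      Matrix.det (Matrix.scalar (Fin m) s - C) := by
    have := RingHom.map_det B.val.toRingHom (Matrix.scalar (Fin m) (⟨s, hs⟩ : B) - C')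
    refine this.trans ?_
    congr 1
    ext i j
    show B.val ((Matrix.scalar (Fin m) (⟨s, hs⟩ : B) - C') i j) = _
    rw [Matrix.sub_apply, Matrix.sub_apply, map_sub]
    by_cases hij : i = j
    · subst hij; simp [C']
    · simp [C', hij]
  rw [← h3]
  exact h2

lemma reg_R (x : Fin d → R) (p : ℕ) [Fact p.Prime] [CharP k p] (𝔞 : Ideal R) [Nontrivial (R ⧸ 𝔞)]
    {ι : Type*} [Fintype ι] (G : ι → R) (hG : GenBy x G ⊤ (𝔞.restrictScalars k))
    (B : Subalgebra k R) (hx : ∀ i, x i ∈ B) (f : MvPolynomial (Fin d) k) (hf : f ≠ 0)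
    (hfB : ∀ b ∈ B, ∃ r ∈ Npow x p (Subalgebra.toSubmodule B), MvPolynomial.aeval x f * b - r ∈ 𝔞)
    (J : Submodule k R) (hJB : ∀ j ∈ J, j ∈ B) (hJ : ∀ b ∈ B, ∀ j ∈ J, b * j ∈ J) :
    ∃ s : MvPolynomial (Fin d) k, s ≠ 0 ∧ ∃ u ∈ J, ∀ j ∈ J, (MvPolynomial.aeval x s - u) * j ∈ 𝔞 := by
  obtain ⟨f', hf', h⟩ := reg_R1 x p 𝔞 G hG B hx f hf hfB J hJB hJ
  obtain ⟨m, g, hgJ, hg⟩ := gen_exists x G 𝔞 hG J (fun u hu i => hJ _ (hx i) _ hu)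
  have hp2 : 2 ≤ p := (Fact.out : p.Prime).two_le
  have hN : ∀ r ∈ Npow x p J, ∃ c : Fin m → R, (∀ i, c i ∈ J) ∧ r - ∑ i, c i * g i ∈ 𝔞 := by
    intro r hr
    unfold Npow at hr
    induction hr using Submodule.span_induction with
    | zero => exact ⟨0, fun _ => J.zero_mem, by simp⟩
    | add y z _ _ hy hz =>
      obtain ⟨c, hc, h1⟩ := hy
      obtain ⟨c', hc', h2⟩ := hz
      refine ⟨c + c', fun i => J.add_mem (hc i) (hc' i), ?_⟩
      have := 𝔞.add_mem h1 h2
      convert this using 1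
      simp only [Pi.add_apply, add_mul, Finset.sum_add_distrib]
      ring
    | smul a y _ hy =>
      obtain ⟨c, hc, h1⟩ := hy
      refine ⟨a • c, fun i => J.smul_mem a (hc i), ?_⟩
      have := 𝔞.mul_mem_left (algebraMap k R a) h1
      convert this using 1
      simp only [Pi.smul_apply, Algebra.smul_def, mul_sub, Finset.mul_sum, mul_assoc]
    | mem y hy =>
      obtain ⟨a, b, hb, rfl⟩ := hy
      obtain ⟨c, hc⟩ := hg b hb
      obtain ⟨q, rfl⟩ : ∃ q, p = q + 2 := ⟨p - 2, by omega⟩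
      refine ⟨fun i => (xmon x a * b ^ q * MvPolynomial.aeval x (c i)) * b, fun i => ?_, ?_⟩
      · exact hJ _ (B.mul_mem (B.mul_mem (xmon_mem_sub x B hx a) (B.pow_mem (hJB b hb) q))
          (aeval_mem_sub x B hx _)) _ hb
      · have := 𝔞.mul_mem_left (xmon x a * b ^ (q + 1)) hc
        convert this using 1
        rw [mul_sub, Finset.mul_sum]
        congr 1
        · ring
        · refine Finset.sum_congr rfl fun i _ => ?_
          rw [smul_eq_mul]; ring
  choose r hrN hr using h
  choose c hcJ hc using hN
  set s := MvPolynomial.aeval x f' with hs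
  let C : Matrix (Fin m) (Fin m) R := fun i l => c (r (g i) (hgJ i)) (hrN _ _) l
  set D := Matrix.scalar (Fin m) s - C with hD
  have hDg : ∀ i, (D.mulVec g) i ∈ 𝔞 := by
    intro i
    have h1 := 𝔞.add_mem (hr (g i) (hgJ i)) (hc _ (hrN (g i) (hgJ i)))
    convert h1 using 1
    rw [hD, Matrix.sub_mulVec, Pi.sub_apply, Matrix.scalar_apply, Matrix.mulVec_diagonal, sub_add_sub_cancel]
    rfl
  have hdet : ∀ i, D.det * g i ∈ 𝔞 := by
    intro i
    have h1 : (D.adjugate.mulVec (D.mulVec g)) i = D.det * g i := by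
      rw [Matrix.mulVec_mulVec, Matrix.adjugate_mul, Matrix.smul_mulVec, Matrix.one_mulVec]
      rfl
    rw [← h1]
    unfold Matrix.mulVec dotProduct
    exact 𝔞.sum_mem fun l _ => 𝔞.mul_mem_left _ (hDg l)
  refine ⟨f' ^ m, pow_ne_zero _ hf', s ^ m - D.det,
    det_mem B J hJB hJ C (fun i l => hcJ _ _ l) s (aeval_mem_sub x B hx _), fun j hj => ?_⟩
  rw [map_pow, ← hs, sub_sub_cancel]
  obtain ⟨a, ha⟩ := hg j hj
  have h1 : D.det * j = D.det * (j - ∑ i, MvPolynomial.aeval x (a i) • g i) +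
      ∑ i, MvPolynomial.aeval x (a i) * (D.det * g i) := by
    rw [mul_sub, Finset.mul_sum]
    have : ∀ i, D.det * MvPolynomial.aeval x (a i) • g i = MvPolynomial.aeval x (a i) * (D.det * g i) := by
      intro i; rw [smul_eq_mul]; ring
    simp only [this]
    ring
  rw [h1]
  exact 𝔞.add_mem (𝔞.mul_mem_left _ ha) (𝔞.sum_mem fun i _ => 𝔞.mul_mem_left _ (hdet i))

end stab

section Qn

variable {k R V : Type*} [Field k] [CommRing R] [Algebra k R]
  [AddCommGroup V] [Module R V] [Module k V] [IsScalarTower k R V]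

/-- the `k`-span of `f^q • u`, `f ∈ I`, `u ∈ U` -/
def Qn (I : Ideal R) (q : ℕ) (U : Submodule k V) : Submodule k V :=
  Submodule.span k {z | ∃ f ∈ I, ∃ u ∈ U, z = f ^ q • u}

lemma Qn_mem {I : Ideal R} {q : ℕ} {U : Submodule k V} {f : R} (hf : f ∈ I) {u : V} (hu : u ∈ U) :
    f ^ q • u ∈ Qn I q U := Submodule.subset_span ⟨f, hf, u, hu, rfl⟩

lemma Qn_mono (I : Ideal R) (q : ℕ) {U U' : Submodule k V} (h : U ≤ U') : Qn I q U ≤ Qn I q U' := by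
  apply Submodule.span_mono
  rintro _ ⟨f, hf, u, hu, rfl⟩
  exact ⟨f, hf, u, h hu, rfl⟩

lemma Qn_stable (I : Ideal R) (q : ℕ) (U : Submodule k V) (r : R) (h : ∀ u ∈ U, r • u ∈ U) :
    ∀ z ∈ Qn I q U, r • z ∈ Qn I q U := by
  intro z hz
  unfold Qn at hz
  induction hz using Submodule.span_induction with
  | zero => rw [smul_zero]; exact zero_mem _
  | add y z _ _ hy hz => rw [smul_add]; exact add_mem hy hz
  | smul c y _ hy => rw [smul_comm]; exact Submodule.smul_mem _ _ hy
  | mem z hz =>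
    obtain ⟨f, hf, u, hu, rfl⟩ := hz
    rw [smul_comm]
    exact Qn_mem hf (h u hu)

lemma Qn_pow (I : Ideal R) (q : ℕ) (U : Submodule k V) {d : ℕ} (x : Fin d → R)
    (hU : ∀ u ∈ U, ∀ i, x i • u ∈ U) (c : ℕ) (j : Fin d) (hc : x j ^ c ∈ I)
    (P : MvPolynomial (Fin d) k) (u : V) (hu : u ∈ U) :
    MvPolynomial.aeval x (MvPolynomial.X j ^ (c * q) * P) • u ∈ Qn I q U := by
  rw [map_mul, map_pow, MvPolynomial.aeval_X, pow_mul, mul_smul]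
  exact Qn_mem hc (aeval_smul_mem x U hU P u hu)

lemma bracket_eq_Qn (I : Ideal R) (q : ℕ) (hb : Ideal R)
    (hbd : hb = Ideal.span ((fun x : R => x ^ q) '' (I : Set R))) :
    (hb • (⊤ : Submodule R V)).restrictScalars k = Qn I q (⊤ : Submodule k V) := by
  subst hbd
  apply le_antisymm
  · intro z hz
    rw [Submodule.restrictScalars_mem] at hz
    refine Submodule.smul_induction_on hz ?_ ?_
    · intro r hr v _
      induction hr using Submodule.span_induction generalizing v with
      | zero => rw [zero_smul]; exact zero_mem _
      | add a b _ _ ha hb => rw [add_smul]; exact add_mem (ha v trivial) (hb v trivial)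
      | smul a b _ hb => rw [smul_eq_mul, mul_comm, mul_smul]; exact hb _ trivial
      | mem a ha =>
        obtain ⟨f, hf, rfl⟩ := ha
        exact Qn_mem hf trivial
    · intro y z hy hz
      exact add_mem hy hz
  · unfold Qn
    rw [Submodule.span_le]
    rintro _ ⟨f, hf, u, -, rfl⟩
    have h1 : f ^ q ∈ Ideal.span ((fun x : R => x ^ q) '' (I : Set R)) :=
      Ideal.subset_span ⟨f, hf, rfl⟩
    have h2 : u ∈ (⊤ : Submodule R V) := trivial
    have h3 : f ^ q • u ∈ (Ideal.span ((fun x : R => x ^ q) '' (I : Set R))) •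
        (⊤ : Submodule R V) := Submodule.smul_mem_smul h1 h2
    rw [SetLike.mem_coe, Submodule.restrictScalars_mem]
    exact h3

lemma grP_hom_mem (𝒱 : ℤ → Submodule k V) [DirectSum.Decomposition 𝒱] (W : Submodule k V) {v : V}
    {i : ℤ} (hv : v ∈ 𝒱 i) (hW : v ∈ W) (j : ℤ) : grP 𝒱 j v ∈ W := by
  by_cases hij : i = j
  · subst hij; rw [grP_same 𝒱 hv]; exact hW
  · rw [grP_ne 𝒱 hv hij]; exact zero_mem _

lemma sum_pow_p {p : ℕ} [Fact p.Prime] [CharP R p] (n : ℕ) {ι : Type*} (s : Finset ι) (g : ι → R) :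
    (∑ i ∈ s, g i) ^ p ^ n = ∑ i ∈ s, g i ^ p ^ n := by
  have : ExpChar R p := ExpChar.prime Fact.out
  exact sum_pow_char_pow p n s g

lemma Qn_isGr (p : ℕ) [Fact p.Prime] [CharP R p] (𝒜 : ℤ → Submodule k R) [GradedAlgebra 𝒜]
    (𝒱 : ℤ → Submodule k V) [DirectSum.Decomposition 𝒱]
    (h𝒱 : ∀ (a b : ℤ), ∀ r ∈ 𝒜 a, ∀ x ∈ 𝒱 b, r • x ∈ 𝒱 (a + b))
    (I : Ideal R) (hI : Ideal.IsHomogeneous 𝒜 I) (n : ℕ) (U : Submodule k V) (hU : IsGr 𝒱 U) :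
    IsGr 𝒱 (Qn I (p ^ n) U) := by
  apply IsGr.span
  rintro _ ⟨f, hf, u, hu, rfl⟩ j
  obtain ⟨s, hs⟩ := grP_sum 𝒜 f
  obtain ⟨t, ht⟩ := grP_sum 𝒱 u
  have hfI : ∀ i, grP 𝒜 i f ∈ I := fun i => by
    rw [grP_apply]; exact hI i hf
  rw [hs, sum_pow_p, ht, Finset.sum_smul, map_sum]
  refine Submodule.sum_mem _ fun i _ => ?_
  rw [Finset.smul_sum, map_sum]
  refine Submodule.sum_mem _ fun l _ => ?_
  exact grP_hom_mem 𝒱 (Qn I (p ^ n) U)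
    (h𝒱 _ _ _ (SetLike.pow_mem_graded (p ^ n) (grP_mem 𝒜 i f)) _ (grP_mem 𝒱 l u))
    (Qn_mem (hfI i) (hU u hu l)) j

end Qn

section gradedB

variable {k R : Type*} [Field k] [CommRing R] [Algebra k R] {d : ℕ}
  (𝒜 : ℤ → Submodule k R) [GradedAlgebra 𝒜]

lemma adjoin_isGr (S : Set R)
    (hS : ∀ s ∈ S, ∀ j, grP 𝒜 j s ∈ Algebra.adjoin k S) :
    IsGr 𝒜 (Subalgebra.toSubmodule (Algebra.adjoin k S)) := by
  intro r hr
  rw [Subalgebra.mem_toSubmodule] at hr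
  simp only [Subalgebra.mem_toSubmodule]
  induction hr using Algebra.adjoin_induction with
  | mem r hr => exact hS r hr
  | algebraMap c =>
    intro j
    exact grP_hom_mem 𝒜 (Subalgebra.toSubmodule (Algebra.adjoin k S))
      (SetLike.algebraMap_mem_graded 𝒜 c) (Subalgebra.algebraMap_mem _ c) j
  | add a b _ _ ha hb => intro j; rw [map_add]; exact add_mem (ha j) (hb j)
  | mul a b _ _ ha hb =>
    intro j
    obtain ⟨s, hs⟩ := grP_sum 𝒜 a
    obtain ⟨t, ht⟩ := grP_sum 𝒜 b
    rw [hs, ht, Finset.sum_mul_sum, map_sum]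
    refine Subalgebra.sum_mem _ fun i _ => ?_
    rw [map_sum]
    refine Subalgebra.sum_mem _ fun l _ => ?_
    exact grP_hom_mem 𝒜 (Subalgebra.toSubmodule (Algebra.adjoin k S))
      (SetLike.mul_mem_graded (grP_mem 𝒜 i a) (grP_mem 𝒜 l b))
      (Subalgebra.mul_mem _ (ha i) (hb l)) j

lemma Rsub_isGr (p : ℕ) [Fact p.Prime] [CharP R p] (x : Fin d → R) (δ : Fin d → ℕ)
    (hx : ∀ i, x i ∈ 𝒜 (δ i)) (e : ℕ) :
    IsGr 𝒜 (Subalgebra.toSubmodule (Rsub k x p e)) := by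
  apply adjoin_isGr
  rintro _ (⟨i, rfl⟩ | ⟨r, rfl⟩) j
  · exact grP_hom_mem 𝒜 (Subalgebra.toSubmodule (Rsub k x p e)) (hx i) (x_mem_Rsub x p e i) j
  · obtain ⟨s, hs⟩ := grP_sum 𝒜 r
    simp only []
    rw [hs, sum_pow_p, map_sum]
    refine Subalgebra.sum_mem _ fun i _ => ?_
    exact grP_hom_mem 𝒜 (Subalgebra.toSubmodule (Rsub k x p e))
      (SetLike.pow_mem_graded (p ^ e) (grP_mem 𝒜 i r)) (pow_mem_Rsub x p e _) j

/-- total weight -/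
def wtx (δ : Fin d → ℕ) (a : Fin d →₀ ℕ) : ℤ := ((∑ i, a i * δ i : ℕ) : ℤ)

/-- The degree-`i` piece of `x^a B^p` -/
def Nai (x : Fin d → R) (p : ℕ) (δ : Fin d → ℕ) (U : Submodule k R) (a : Fin d →₀ ℕ) (i : ℤ) :
    Submodule k R :=
  Submodule.span k {z | ∃ b ∈ U, ∃ j : ℤ, b ∈ 𝒜 j ∧ (p : ℤ) * j + wtx δ a = i ∧ z = xmon x a * b ^ p}

lemma Npow_grP (p : ℕ) [Fact p.Prime] [CharP R p] (x : Fin d → R) (δ : Fin d → ℕ)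
    (hx : ∀ i, x i ∈ 𝒜 (δ i)) (B : Subalgebra k R) (hxB : ∀ i, x i ∈ B)
    (hB : IsGr 𝒜 (Subalgebra.toSubmodule B)) (i : ℤ) (z : R)
    (hz : z ∈ Npow x p (Subalgebra.toSubmodule B)) :
    grP 𝒜 i z ∈ (expBox d p).sup (fun a => Nai 𝒜 x p δ (Subalgebra.toSubmodule B) a i) := by
  have hp : 0 < p := (Fact.out : p.Prime).pos
  unfold Npow at hz
  induction hz using Submodule.span_induction with
  | zero => rw [map_zero]; exact zero_mem _
  | add y z _ _ hy hz => rw [map_add]; exact add_mem hy hz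
  | smul c y _ hy => rw [map_smul]; exact Submodule.smul_mem _ _ hy
  | mem z hz =>
    obtain ⟨a, b, hb, rfl⟩ := hz
    obtain ⟨a', a'', ha', haa⟩ : ∃ a' a'' : Fin d →₀ ℕ, a' ∈ expBox d p ∧ a = a' + p • a'' := by
      refine ⟨Finsupp.equivFunOnFinite.symm (fun i => a i % p),
        Finsupp.equivFunOnFinite.symm (fun i => a i / p), ?_, ?_⟩
      · rw [mem_expBox]; intro i; simpa using Nat.mod_lt _ hp
      · ext i; simp [Nat.mod_add_div]
    have hxp : xmon x a * b ^ p = xmon x a' * (xmon x a'' * b) ^ p := by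
      have : xmon x (p • a'') = xmon x a'' ^ p := by
        simp [xmon, ← Finset.prod_pow, ← pow_mul, mul_comm]
      rw [haa, xmon_add, this, mul_pow, mul_assoc]
    have hb' : xmon x a'' * b ∈ Subalgebra.toSubmodule B :=
      B.mul_mem (xmon_mem_sub x B hxB a'') hb
    obtain ⟨s, hs⟩ := grP_sum 𝒜 (xmon x a'' * b)
    have h1 := sum_pow_p (p := p) 1 s (fun j => grP 𝒜 j (xmon x a'' * b))
    rw [pow_one] at h1
    rw [hxp, hs, h1, Finset.mul_sum, map_sum]
    refine Submodule.sum_mem _ fun j _ => ?_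
    have hdeg : xmon x a' * (grP 𝒜 j (xmon x a'' * b)) ^ p ∈ 𝒜 ((p : ℤ) * j + wtx δ a') := by
      rw [add_comm]
      refine SetLike.mul_mem_graded (xmon_mem 𝒜 x δ hx a') ?_
      have := SetLike.pow_mem_graded p (grP_mem 𝒜 j (xmon x a'' * b))
      simpa using this
    by_cases hij : (p : ℤ) * j + wtx δ a' = i
    · rw [hij] at hdeg
      rw [grP_same 𝒜 hdeg]
      refine (Finset.le_sup (f := fun a => Nai 𝒜 x p δ (Subalgebra.toSubmodule B) a i) ha') ?_
      exact Submodule.subset_span ⟨_, hB _ hb' j, j, grP_mem 𝒜 j _, hij, rfl⟩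
    · rw [grP_ne 𝒜 hdeg hij]; exact zero_mem _

lemma Nai_le (p : ℕ) (x : Fin d → R) (δ : Fin d → ℕ) (U : Submodule k R) (i : ℤ) (a : Fin d →₀ ℕ) :
    Nai 𝒜 x p δ U a i ≤ Npow x p U := by
  apply Submodule.span_mono
  rintro _ ⟨b, hb, j, -, -, rfl⟩
  exact ⟨a, b, hb, rfl⟩

lemma Npow_isGr (p : ℕ) [Fact p.Prime] [CharP R p] (x : Fin d → R) (δ : Fin d → ℕ)
    (hx : ∀ i, x i ∈ 𝒜 (δ i)) (B : Subalgebra k R) (hxB : ∀ i, x i ∈ B)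
    (hB : IsGr 𝒜 (Subalgebra.toSubmodule B)) : IsGr 𝒜 (Npow x p (Subalgebra.toSubmodule B)) := by
  intro z hz i
  exact (Finset.sup_le fun a _ => Nai_le 𝒜 p x δ _ i a) (Npow_grP 𝒜 p x δ hx B hxB hB i z hz)

/-- the Frobenius-semilinear map `b ↦ x^a b^p` -/
def phiF (p : ℕ) [ExpChar k p] [ExpChar R p] (g : R) : R →ₛₗ[frobenius k p] R where
  toFun b := g * b ^ p
  map_add' a b := by rw [add_pow_expChar, mul_add]
  map_smul' c b := by rw [smul_pow, frobenius_def, mul_smul_comm]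

lemma rd_Nai (p : ℕ) [ExpChar k p] [ExpChar R p] (hp : 0 < p) (x : Fin d → R) (δ : Fin d → ℕ)
    (U W W' : Submodule k R) (a : Fin d →₀ ℕ)
    (hW : ∀ w ∈ W, xmon x a * w ^ p ∈ W') (i j : ℤ) (hij : (p : ℤ) * j + wtx δ a = i) :
    rd (Nai 𝒜 x p δ U a i) W' ≤ rd (U ⊓ 𝒜 j) W := by
  refine le_trans (rd_mono_left W' ?_) (rd_semilinear (phiF p (xmon x a)) (U ⊓ 𝒜 j) W W' hW)
  apply Submodule.span_mono
  rintro _ ⟨b, hb, j', hbj, hj', rfl⟩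
  have : j' = j := by
    have h0 : (p : ℤ) * j' = p * j := by linarith
    exact mul_left_cancel₀ (by exact_mod_cast hp.ne') h0
  subst this
  exact ⟨b, ⟨hb, hbj⟩, rfl⟩

lemma Nai_bot (p : ℕ) (x : Fin d → R) (δ : Fin d → ℕ)
    (U : Submodule k R) (a : Fin d →₀ ℕ) (i : ℤ) (h : ∀ j : ℤ, (p : ℤ) * j + wtx δ a ≠ i) :
    Nai 𝒜 x p δ U a i = ⊥ := by
  rw [eq_bot_iff]
  apply Submodule.span_le.2
  rintro _ ⟨b, hb, j', hbj, hj', rfl⟩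
  exact absurd hj' (h j')

end gradedB

section mkF

/-- package a finitely supported `ℕ∞`-valued function as a real finsupp -/
def mkF (φ : ℤ → ℕ∞) : ℤ →₀ ℝ :=
  open Classical in
  if h : (Function.support (fun j => ((φ j).toNat : ℝ))).Finite then
    Finsupp.ofSupportFinite _ h else 0

lemma mkF_apply (φ : ℤ → ℕ∞) (L : ℕ) (h : ∀ j : ℤ, (L : ℤ) < |j| → φ j = 0) (j : ℤ) :
    mkF φ j = (φ j).toNat := by
  have hf : (Function.support (fun j => ((φ j).toNat : ℝ))).Finite := by
    refine (Set.finite_Icc (-(L : ℤ)) L).subset fun j hj => ?_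
    rw [Function.mem_support] at hj
    by_contra hc
    apply hj
    have : (L : ℤ) < |j| := by
      rw [Set.mem_Icc, ← abs_le] at hc; exact not_le.1 hc
    rw [h j this]; simp
  unfold mkF
  rw [dif_pos hf]; rfl

lemma mkF_sum_le (φ : ℤ → ℕ∞) (C : ℕ) (s : Finset ℤ) (h : ∑ j ∈ s, φ j ≤ C) :
    ∑ j ∈ s, ((φ j).toNat : ℝ) ≤ C := by
  have hne : ∀ j ∈ s, φ j ≠ ⊤ := fun j hj hjt => by
    have := Finset.single_le_sum (f := φ) (fun _ _ => zero_le) hj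
    rw [hjt] at this
    exact absurd (this.trans h) (by simp)
  have : ((∑ j ∈ s, (φ j).toNat : ℕ) : ℕ∞) ≤ C := by
    rw [Nat.cast_sum]
    refine le_trans (le_of_eq ?_) h
    exact Finset.sum_congr rfl fun j hj => ENat.natCast_toNat (hne j hj)
  exact_mod_cast this

end mkF

section cyclic

/-- The data used for the cyclic case. -/
structure Ctx {k R : Type} [Field k] [CommRing R] [Algebra k R] (𝒜 : ℤ → Submodule k R)
    [GradedAlgebra 𝒜] (p d : ℕ) where
  x : Fin d → R
  δ : Fin d → ℕ
  hx : ∀ i, x i ∈ 𝒜 (δ i)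
  𝔞 : Ideal R
  I : Ideal R
  hI : Ideal.IsHomogeneous 𝒜 I
  c : ℕ
  hc : 0 < c
  hxc : ∀ i, x i ^ c ∈ I
  B : Subalgebra k R
  hxB : ∀ i, x i ∈ B
  hBgr : IsGr 𝒜 (Subalgebra.toSubmodule B)
  f : MvPolynomial (Fin d) k
  hf : f ≠ 0
  hfB : ∀ b ∈ B, ∃ r ∈ Npow x p (Subalgebra.toSubmodule B), MvPolynomial.aeval x f * b - r ∈ 𝔞
  ι : Type
  fι : Fintype ι
  G : ι → R
  γ : ι → ℤ
  hGB : ∀ i, G i ∈ B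
  hGγ : ∀ i, G i ∈ 𝒜 (γ i)
  hG : GenBy x G (Subalgebra.toSubmodule B) (𝔞.restrictScalars k)

variable {k R : Type} [Field k] [CommRing R] [Algebra k R] {𝒜 : ℤ → Submodule k R}
    [GradedAlgebra 𝒜] {p d : ℕ}

/-- `B` as a submodule -/
def Ctx.U (T : Ctx 𝒜 p d) : Submodule k R := Subalgebra.toSubmodule T.B

/-- `J + I^{[p^n]}B` -/
def Ctx.W (T : Ctx 𝒜 p d) (J : Submodule k R) (n : ℕ) : Submodule k R :=
  J ⊔ Qn T.I (p ^ n) T.U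

/-- Hypotheses on the ideal `J` of `B`. -/
structure Ctx.Good (T : Ctx 𝒜 p d) (J : Submodule k R) : Prop where
  hJB : ∀ j ∈ J, j ∈ T.B
  hJ : ∀ b ∈ T.B, ∀ j ∈ J, b * j ∈ J
  hgr : IsGr 𝒜 J
  h𝔞 : ∀ b ∈ T.B, b ∈ T.𝔞 → b ∈ J

attribute [instance] Ctx.fι

lemma Ctx.U_x (T : Ctx 𝒜 p d) : ∀ u ∈ T.U, ∀ i, T.x i • u ∈ T.U :=
  fun _ hu i => T.B.mul_mem (T.hxB i) hu

lemma Ctx.genBy (T : Ctx 𝒜 p d) {J : Submodule k R} (hJ : T.Good J) (W : Submodule k R)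
    (hW : J ≤ W) : GenBy T.x T.G T.U W := by
  intro u hu
  obtain ⟨c, hc⟩ := T.hG u hu
  refine ⟨c, hW (hJ.h𝔞 _ ?_ hc)⟩
  refine T.B.sub_mem hu (T.B.sum_mem fun i _ => ?_)
  exact T.B.mul_mem (aeval_mem_sub T.x T.B T.hxB _) (T.hGB i)

lemma Ctx.hxW (T : Ctx 𝒜 p d) (J : Submodule k R) (n : ℕ) :
    ∀ (i : T.ι) (j : Fin d) (P : MvPolynomial (Fin d) k),
      (MvPolynomial.aeval T.x) (MvPolynomial.X j ^ (T.c * p ^ n) * P) • T.G i ∈ T.W J n :=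
  fun i j P => (le_sup_right : _ ≤ T.W J n)
    (Qn_pow T.I (p ^ n) T.U T.x T.U_x T.c j (T.hxc j) P _ (T.hGB i))

lemma Ctx.rd_le (T : Ctx 𝒜 p d) {J : Submodule k R} (hJ : T.Good J) (n : ℕ) :
    rd T.U (T.W J n) ≤ ((Fintype.card T.ι * T.c ^ d * (p ^ n) ^ d : ℕ) : ℕ∞) := by
  have := rd_bound T.x (T.c * p ^ n) T.G T.U (T.W J n) (T.genBy hJ _ le_sup_left) (T.hxW J n)
  rwa [mul_pow, ← mul_assoc] at this

variable [Fact p.Prime] [CharP R p]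

lemma Ctx.W_isGr (T : Ctx 𝒜 p d) {J : Submodule k R} (hJ : T.Good J) (n : ℕ) :
    IsGr 𝒜 (T.W J n) :=
  hJ.hgr.sup (Qn_isGr p 𝒜 𝒜 (fun _ _ _ hr _ hx => SetLike.mul_mem_graded hr hx) T.I T.hI n T.U
    T.hBgr)

lemma Ctx.supp (T : Ctx 𝒜 p d) : ∃ D : ℕ, ∀ J, T.Good J → ∀ n (j : ℤ),
    ((D * p ^ n : ℕ) : ℤ) < |j| → rd (T.U ⊓ 𝒜 j) (T.W J n) = 0 := by
  obtain ⟨D, hD⟩ := rd_supp 𝒜 𝒜 (fun _ _ _ hr _ hx => SetLike.mul_mem_graded hr hx) T.x T.δ T.hx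
    T.G T.γ T.hGγ T.U
  refine ⟨D * T.c, fun J hJ n j hj => rd_eq_zero ?_⟩
  have hp : 0 < p := (Fact.out : p.Prime).pos
  exact hD (T.c * p ^ n) (T.W J n) (Nat.mul_pos T.hc (pow_pos hp n)) (T.W_isGr hJ n)
    (T.genBy hJ _ le_sup_left) (T.hxW J n) j (by rwa [← mul_assoc])

variable [CharP k p]

lemma Ctx.W_pow (T : Ctx 𝒜 p d) {J : Submodule k R} (hJ : T.Good J) (n : ℕ) (a : Fin d →₀ ℕ) :
    ∀ w ∈ T.W J n, xmon T.x a * w ^ p ∈ T.W J (n + 1) := by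
  have hp : p.Prime := Fact.out
  have : ExpChar R p := ExpChar.prime hp
  have : ExpChar k p := ExpChar.prime hp
  have hle : T.W J n ≤ (T.W J (n + 1)).comap (phiF p (xmon T.x a)) := by
    refine sup_le ?_ ?_
    · intro w hw
      refine (le_sup_left : J ≤ T.W J (n + 1)) ?_
      show xmon T.x a * w ^ p ∈ J
      have : xmon T.x a * w ^ p = (xmon T.x a * w ^ (p - 1)) * w := by
        rw [mul_assoc, pow_sub_one_mul hp.ne_zero]
      rw [this]
      exact hJ.hJ _ (T.B.mul_mem (xmon_mem_sub T.x T.B T.hxB a) (T.B.pow_mem (hJ.hJB w hw) _)) _ hw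
    · unfold Qn
      rw [Submodule.span_le]
      rintro _ ⟨f, hf, u, hu, rfl⟩
      refine (le_sup_right : _ ≤ T.W J (n + 1)) ?_
      show xmon T.x a * (f ^ p ^ n • u) ^ p ∈ _
      have : xmon T.x a * (f ^ p ^ n • u) ^ p = f ^ p ^ (n + 1) • (xmon T.x a * u ^ p) := by
        rw [smul_eq_mul, smul_eq_mul, mul_pow, ← pow_mul, ← pow_succ]; ring
      rw [this]
      exact Qn_mem hf (T.B.mul_mem (xmon_mem_sub T.x T.B T.hxB a) (T.B.pow_mem hu _))
  exact hle

lemma Ctx.hrec (T : Ctx 𝒜 p d) {J : Submodule k R} (hJ : T.Good J) (n : ℕ) (i : ℤ) :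
    rd (T.U ⊓ 𝒜 i) (T.W J (n + 1)) ≤
      ∑ a ∈ expBox d p, rd (Nai 𝒜 T.x p T.δ T.U a i) (T.W J (n + 1)) +
        rd (T.U ⊓ 𝒜 i) (Npow T.x p T.U ⊔ T.W J (n + 1)) := by
  refine (rd_le_add _ _ (Npow T.x p T.U ⊔ T.W J (n + 1))).trans ?_
  gcongr
  refine le_trans ?_ (rd_finset_sup_le (expBox d p) _ _)
  rw [← rd_sup_right ((expBox d p).sup _)]
  refine rd_mono_left _ ?_
  rintro v ⟨⟨-, hvi⟩, hv⟩
  rw [← grP_same 𝒜 hvi]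
  obtain ⟨z, hz, w, hw, rfl⟩ := Submodule.mem_sup.1 hv
  rw [map_add]
  exact Submodule.add_mem_sup (Npow_grP 𝒜 p T.x T.δ T.hx T.B T.hxB T.hBgr i z hz)
    (T.W_isGr hJ (n + 1) w hw i)

lemma Ctx.tors (T : Ctx 𝒜 p d) : ∃ C : ℕ, ∀ J, T.Good J → ∀ n,
    rd T.U (Npow T.x p T.U ⊔ T.W J n) * ((T.c * p ^ n : ℕ) : ℕ∞) ≤
      ((C * (T.c * p ^ n) ^ d : ℕ) : ℕ∞) := by
  obtain ⟨C, hC⟩ := rd_torsion (V := R) (ι := T.ι) T.x T.f T.hf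
  have hp : 0 < p := (Fact.out : p.Prime).pos
  refine ⟨C, fun J hJ n => hC (T.c * p ^ n) T.G T.U _ (T.genBy hJ _ ?_) ?_ ?_⟩
  · exact le_trans le_sup_left le_sup_right
  · intro i P
    have hb : MvPolynomial.aeval T.x P * T.G i ∈ T.B :=
      T.B.mul_mem (aeval_mem_sub T.x T.B T.hxB _) (T.hGB i)
    obtain ⟨r, hr, hra⟩ := T.hfB _ hb
    have hrB : r ∈ T.B := Npow_le T.x p hp T.B T.hxB T.U (fun _ h => h)
      (fun b hb j hj => T.B.mul_mem hb hj) hr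
    have h1 := hJ.h𝔞 _ (T.B.sub_mem (T.B.mul_mem (aeval_mem_sub T.x T.B T.hxB T.f) hb) hrB) hra
    have h2 : MvPolynomial.aeval T.x (T.f * P) • T.G i =
        r + (MvPolynomial.aeval T.x T.f * (MvPolynomial.aeval T.x P * T.G i) - r) := by
      rw [map_mul, smul_eq_mul]; ring
    rw [h2]
    exact Submodule.add_mem_sup hr ((le_sup_left : J ≤ T.W J n) h1)
  · intro i j P
    exact (le_sup_right : T.W J n ≤ _) (T.hxW J n i j P)

/-- graded Hilbert function of `B/(J+I^{[p^n]}B)` -/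
def Ctx.h (T : Ctx 𝒜 p d) (J : Submodule k R) (n : ℕ) : ℤ →₀ ℝ :=
  mkF (fun j => rd (T.U ⊓ 𝒜 j) (T.W J n))

lemma mass_mkF_le (φ : ℤ → ℕ∞) (L : ℕ) (h : ∀ j : ℤ, (L : ℤ) < |j| → φ j = 0) (C : ℕ)
    (hC : ∀ s : Finset ℤ, ∑ j ∈ s, φ j ≤ C) : mass (mkF φ) ≤ C := by
  rw [mass_eq, Finset.sum_congr rfl fun j _ => mkF_apply φ L h j]
  exact mkF_sum_le φ C _ (hC _)

lemma Ctx.conv (T : Ctx 𝒜 p d) {J : Submodule k R} (hJ : T.Good J) :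
    ∃ F : ℂ → ℂ, ∀ K : Set ℂ, IsCompact K →
      TendstoUniformlyOn (fun n y => Gn p d n (T.h J n) y) F atTop K := by
  have hp : p.Prime := Fact.out
  have : ExpChar R p := ExpChar.prime hp
  have : ExpChar k p := ExpChar.prime hp
  obtain ⟨D, hD⟩ := T.supp
  obtain ⟨C, hC⟩ := T.tors
  have happ : ∀ n j, T.h J n j = ((rd (T.U ⊓ 𝒜 j) (T.W J n)).toNat : ℝ) := fun n j =>
    mkF_apply _ (D * p ^ n) (hD J hJ n) j
  have hfinU : ∀ n, rd T.U (T.W J n) ≠ ⊤ := fun n =>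
    ne_top_of_le_ne_top (ENat.natCast_ne_top _) (T.rd_le hJ n)
  have hfin : ∀ n j, rd (T.U ⊓ 𝒜 j) (T.W J n) ≠ ⊤ := fun n j =>
    ne_top_of_le_ne_top (hfinU n) (rd_mono_left _ inf_le_left)
  set τ : ℕ → ℤ → ℕ∞ := fun n i => rd (T.U ⊓ 𝒜 i) (Npow T.x p T.U ⊔ T.W J (n + 1)) with hτ
  have hτfin : ∀ n i, τ n i ≠ ⊤ := fun n i =>
    ne_top_of_le_ne_top (hfin (n + 1) i) (rd_anti le_sup_right)
  have key := conv_cyc p d 0 hp.two_le (α := {b // b ∈ expBox d p})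
    (by rw [Fintype.card_coe, card_expBox]) (fun a => wtx T.δ a.1) (fun n => T.h J n)
    (fun n i => ((τ n i).toNat : ℝ))
    ((Fintype.card T.ι * T.c ^ d : ℕ) + (C * T.c ^ d * p ^ d : ℕ)) D ?_ ?_ ?_ ?_ ?_ ?_
  · simpa using key
  · intro n j; rw [happ]; positivity
  · intro n j hj
    by_contra hlt
    apply hj
    rw [happ, hD J hJ n j]
    · simp
    · rw [not_le, add_zero] at hlt
      have : ((D * p ^ n : ℕ) : ℝ) < ((|j| : ℤ) : ℝ) := by push_cast; exact hlt
      exact_mod_cast this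
  · intro n
    have h1 : mass (T.h J n) ≤ ((Fintype.card T.ι * T.c ^ d * (p ^ n) ^ d : ℕ) : ℝ) :=
      mass_mkF_le _ (D * p ^ n) (hD J hJ n) _ fun s =>
        (rd_sum_gr T.U (T.W J n) (T.W_isGr hJ n) s).trans (T.rd_le hJ n)
    refine h1.trans ?_
    rw [add_zero, add_mul]
    push_cast
    have : (0 : ℝ) ≤ (C * T.c ^ d * p ^ d : ℝ) * (p ^ n) ^ d := by positivity
    linarith
  · intro n j; positivity
  · intro n i
    rw [happ]
    have hNai : ∀ a ∈ expBox d p,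
        rd (Nai 𝒜 T.x p T.δ T.U a i) (T.W J (n + 1)) ≠ ⊤ ∧
        ((rd (Nai 𝒜 T.x p T.δ T.U a i) (T.W J (n + 1))).toNat : ℝ) ≤
          (Finsupp.mapDomain (fun j => (p : ℤ) * j + wtx T.δ a) (T.h J n)) i := by
      intro a ha
      have hinj : Function.Injective (fun j => (p : ℤ) * j + wtx T.δ a) := by
        intro j j' hjj
        have h0 : (p : ℤ) * j = p * j' := by simpa using hjj
        exact mul_left_cancel₀ (by exact_mod_cast hp.ne_zero) h0
      by_cases hex : ∃ j : ℤ, (p : ℤ) * j + wtx T.δ a = i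
      · obtain ⟨j, hj⟩ := hex
        have h1 := rd_Nai 𝒜 p hp.pos T.x T.δ T.U (T.W J n) (T.W J (n + 1)) a (T.W_pow hJ n a) i j hj
        refine ⟨ne_top_of_le_ne_top (hfin n j) h1, ?_⟩
        rw [← hj, Finsupp.mapDomain_apply hinj, happ, hj]
        exact_mod_cast ENat.toNat_le_toNat h1 (hfin n j)
      · push Not at hex
        rw [Nai_bot 𝒜 p T.x T.δ T.U a i hex, rd_eq_zero bot_le]
        refine ⟨by simp, ?_⟩
        rw [Finsupp.mapDomain_of_notMem_range]
        · simp
        · rintro ⟨j, hj⟩; exact hex j hj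
    have h1 := T.hrec hJ n i
    have h2 : (rd (T.U ⊓ 𝒜 i) (T.W J (n + 1))).toNat ≤
        ∑ a ∈ expBox d p, (rd (Nai 𝒜 T.x p T.δ T.U a i) (T.W J (n + 1))).toNat +
          (τ n i).toNat := by
      rw [← Nat.cast_le (α := ℕ∞), ENat.natCast_toNat (hfin (n + 1) i)]
      refine h1.trans (le_of_eq ?_)
      rw [Nat.cast_add, Nat.cast_sum, ENat.natCast_toNat (hτfin n i)]
      congr 1
      exact Finset.sum_congr rfl fun a ha => (ENat.natCast_toNat (hNai a ha).1).symm
    have h3 : ((rd (T.U ⊓ 𝒜 i) (T.W J (n + 1))).toNat : ℝ) ≤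
        ∑ a ∈ expBox d p, ((rd (Nai 𝒜 T.x p T.δ T.U a i) (T.W J (n + 1))).toNat : ℝ) +
          ((τ n i).toNat : ℝ) := by exact_mod_cast h2
    refine h3.trans ?_
    gcongr
    rw [Finsupp.finsetSum_apply]
    rw [Finset.sum_coe_sort (expBox d p)
      (fun a => (Finsupp.mapDomain (fun j => (p : ℤ) * j + wtx T.δ a) (T.h J n)) i)]
    exact Finset.sum_le_sum fun a ha => (hNai a ha).2
  · intro n s
    have hN : IsGr 𝒜 (Npow T.x p T.U ⊔ T.W J (n + 1)) :=
      (Npow_isGr 𝒜 p T.x T.δ T.hx T.B T.hxB T.hBgr).sup (T.W_isGr hJ (n + 1))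
    have hsum := rd_sum_gr T.U _ hN s
    have hf2 : rd T.U (Npow T.x p T.U ⊔ T.W J (n + 1)) ≠ ⊤ :=
      ne_top_of_le_ne_top (hfinU (n + 1)) (rd_anti le_sup_right)
    obtain ⟨r, hr⟩ := ENat.ne_top_iff_exists.1 hf2
    have h1 : ∑ j ∈ s, ((τ n j).toNat : ℝ) ≤ r := by
      apply mkF_sum_le
      rw [hr]; exact hsum
    have h2 := hC J hJ (n + 1)
    rw [← hr] at h2
    have h3 : r * (T.c * p ^ (n + 1)) ≤ C * (T.c * p ^ (n + 1)) ^ d := by exact_mod_cast h2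
    have h4 : r * p ^ n ≤ C * T.c ^ d * p ^ d * (p ^ n) ^ d := by
      calc r * p ^ n ≤ r * (T.c * p ^ (n + 1)) := by
            gcongr
            rw [pow_succ]
            nlinarith [T.hc, hp.pos, Nat.pos_of_ne_zero (pow_ne_zero n hp.ne_zero),
              Nat.mul_pos T.hc hp.pos]
        _ ≤ _ := h3
        _ = _ := by rw [mul_pow, pow_succ, mul_pow]; ring
    refine h1.trans ?_
    have hpn : (0 : ℝ) < (p : ℝ) ^ (n + 0) := by
      have : (0 : ℝ) < p := by exact_mod_cast hp.pos
      positivity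
    rw [le_div_iff₀ hpn, add_zero]
    have h5 : (r : ℝ) * p ^ n ≤ C * T.c ^ d * p ^ d * (p ^ n) ^ d := by exact_mod_cast h4
    push_cast
    have : (0 : ℝ) ≤ (Fintype.card T.ι * T.c ^ d : ℝ) * (p ^ n) ^ d := by positivity
    nlinarith

end cyclic

section modpart

variable {k R M : Type} [Field k] [CommRing R] [Algebra k R] {𝒜 : ℤ → Submodule k R}
    [GradedAlgebra 𝒜] {p d : ℕ}
    [AddCommGroup M] [Module R M] [Module k M] [IsScalarTower k R M]

/-- `b ↦ b • m` -/
def psi (k : Type) {R M : Type} [Field k] [CommRing R] [Algebra k R]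
    [AddCommGroup M] [Module R M] [Module k M] [IsScalarTower k R M] (m : M) : R →ₗ[k] M :=
  (LinearMap.toSpanSingleton R M m).restrictScalars k

lemma psi_apply (m : M) (r : R) : psi k m r = r • m := rfl

/-- multiplication by `r` -/
def mulL (k : Type) {R : Type} (M : Type) [Field k] [CommRing R] [Algebra k R]
    [AddCommGroup M] [Module R M] [Module k M] [IsScalarTower k R M] (r : R) : M →ₗ[k] M :=
  (LinearMap.lsmul R M r).restrictScalars k

lemma mulL_apply (m : M) (r : R) : mulL k M r m = r • m := rfl

variable {ℳ : ℤ → Submodule k M} [DirectSum.Decomposition ℳ]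

lemma grP_psi (h𝒱 : ∀ (a b : ℤ), ∀ r ∈ 𝒜 a, ∀ x ∈ ℳ b, r • x ∈ ℳ (a + b))
    (m : M) (μ : ℤ) (hm : m ∈ ℳ μ) (j : ℤ) (r : R) :
    grP ℳ j (psi k m r) = psi k m (grP 𝒜 (j - μ) r) := by
  have h : r ∈ LinearMap.ker (grP ℳ j ∘ₗ psi k m - psi k m ∘ₗ grP 𝒜 (j - μ)) := by
    apply grP_ind 𝒜
    intro i
    rw [LinearMap.mem_ker, LinearMap.sub_apply, LinearMap.comp_apply, LinearMap.comp_apply, sub_eq_zero]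
    have h1 := grP_mem 𝒜 i r
    have h2 : psi k m (grP 𝒜 i r) ∈ ℳ (i + μ) := h𝒱 _ _ _ h1 _ hm
    by_cases hij : i = j - μ
    · rw [← hij, grP_same 𝒜 h1]
      exact grP_same ℳ (by rwa [show i + μ = j by omega] at h2)
    · rw [grP_ne 𝒜 h1 hij, map_zero, grP_ne ℳ h2 (by omega)]
  rw [LinearMap.mem_ker, LinearMap.sub_apply, LinearMap.comp_apply, LinearMap.comp_apply,
    sub_eq_zero] at h
  exact h

lemma IsGr.map_psi (h𝒱 : ∀ (a b : ℤ), ∀ r ∈ 𝒜 a, ∀ x ∈ ℳ b, r • x ∈ ℳ (a + b))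
    {m : M} {μ : ℤ} (hm : m ∈ ℳ μ) {U : Submodule k R} (hU : IsGr 𝒜 U) :
    IsGr ℳ (U.map (psi k m)) := by
  rintro _ ⟨u, hu, rfl⟩ j
  rw [grP_psi h𝒱 m μ hm]
  exact ⟨_, hU u hu _, rfl⟩

lemma IsGr.comap_psi (h𝒱 : ∀ (a b : ℤ), ∀ r ∈ 𝒜 a, ∀ x ∈ ℳ b, r • x ∈ ℳ (a + b))
    {m : M} {μ : ℤ} (hm : m ∈ ℳ μ) {N : Submodule k M} (hN : IsGr ℳ N) :
    IsGr 𝒜 (N.comap (psi k m)) := by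
  intro u hu j
  have := hN _ hu (j + μ)
  rw [grP_psi h𝒱 m μ hm, add_sub_cancel_right] at this
  exact this

/-- The ideal `(N : m) ∩ B`. -/
def Ctx.J (T : Ctx 𝒜 p d) (N : Submodule k M) (m : M) : Submodule k R :=
  T.U ⊓ N.comap (psi k m)

/-- a graded `B`-submodule -/
structure Ctx.Sub (T : Ctx 𝒜 p d) (ℳ : ℤ → Submodule k M) [DirectSum.Decomposition ℳ]
    (N : Submodule k M) : Prop where
  hgr : IsGr ℳ N
  hB : ∀ b ∈ T.B, ∀ v ∈ N, b • v ∈ N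

lemma Ctx.J_good (T : Ctx 𝒜 p d)
    (h𝒱 : ∀ (a b : ℤ), ∀ r ∈ 𝒜 a, ∀ x ∈ ℳ b, r • x ∈ ℳ (a + b))
    (h0 : ∀ a ∈ T.𝔞, ∀ v : M, a • v = 0)
    {N : Submodule k M} (hN : T.Sub ℳ N) {m : M} {μ : ℤ} (hm : m ∈ ℳ μ) : T.Good (T.J N m) where
  hJB j hj := hj.1
  hJ b hb j hj := by
    refine ⟨T.B.mul_mem hb hj.1, ?_⟩
    show (b * j) • m ∈ N
    rw [mul_smul]
    exact hN.hB b hb _ hj.2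
  hgr := IsGr.inf T.hBgr (IsGr.comap_psi h𝒱 hm hN.hgr)
  h𝔞 b hb hba := by
    refine ⟨hb, ?_⟩
    show b • m ∈ N
    rw [h0 b hba]; exact zero_mem _

lemma Ctx.sub_next (T : Ctx 𝒜 p d)
    (h𝒱 : ∀ (a b : ℤ), ∀ r ∈ 𝒜 a, ∀ x ∈ ℳ b, r • x ∈ ℳ (a + b))
    {N : Submodule k M} (hN : T.Sub ℳ N) {m : M} {μ : ℤ} (hm : m ∈ ℳ μ) :
    T.Sub ℳ (N ⊔ T.U.map (psi k m)) where
  hgr := hN.hgr.sup (IsGr.map_psi h𝒱 hm T.hBgr)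
  hB b hb v hv := by
    obtain ⟨w, hw, _, ⟨u, hu, rfl⟩, rfl⟩ := Submodule.mem_sup.1 hv
    rw [smul_add]
    refine Submodule.add_mem_sup (hN.hB b hb w hw) ⟨b * u, T.B.mul_mem hb hu, ?_⟩
    rw [psi_apply, psi_apply, mul_smul]

lemma Qn_sup_map (I : Ideal R) (q : ℕ) (N : Submodule k M) (U : Submodule k R) (m : M) :
    Qn I q (N ⊔ U.map (psi k m)) ≤ Qn I q N ⊔ (Qn I q U).map (psi k m) := by
  conv_lhs => unfold Qn
  rw [Submodule.span_le]
  rintro _ ⟨f, hf, v, hv, rfl⟩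
  obtain ⟨w, hw, _, ⟨u, hu, rfl⟩, rfl⟩ := Submodule.mem_sup.1 hv
  rw [smul_add]
  refine Submodule.add_mem_sup (Qn_mem hf hw) ⟨f ^ q • u, Qn_mem hf hu, ?_⟩
  rw [psi_apply, psi_apply, smul_assoc]

lemma Qn_map_psi (I : Ideal R) (q : ℕ) (U : Submodule k R) (N : Submodule k M) (m : M)
    (h : ∀ u ∈ U, u • m ∈ N) : ∀ β ∈ Qn I q U, psi k m β ∈ Qn I q N := by
  intro β hβ
  have : Qn I q U ≤ (Qn I q N).comap (psi k m) := by
    conv_lhs => unfold Qn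
    rw [Submodule.span_le]
    rintro _ ⟨f, hf, u, hu, rfl⟩
    show (f ^ q • u) • m ∈ Qn I q N
    rw [smul_assoc]
    exact Qn_mem hf (h u hu)
  exact this hβ

lemma Ctx.Qn_le (T : Ctx 𝒜 p d) {N : Submodule k M} (hB : ∀ b ∈ T.B, ∀ v ∈ N, b • v ∈ N) (n : ℕ)
    (hn : ∀ r : R, r ^ p ^ n ∈ T.B) : Qn T.I (p ^ n) N ≤ N := by
  unfold Qn
  rw [Submodule.span_le]
  rintro _ ⟨f, hf, u, hu, rfl⟩
  exact hB _ (hn f) _ hu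

/-- generators of submodules of `M` -/
lemma Ctx.sub_gen (T : Ctx 𝒜 p d) {ι : Type} [Fintype ι] (m : ι → M)
    (hm : GenBy T.x m ⊤ ((⊥ : Submodule R M).restrictScalars k))
    {N : Submodule k M} (hN : T.Sub ℳ N) :
    ∃ (ι' : Type) (_ : Fintype ι') (G' : ι' → M), (∀ a, G' a ∈ N) ∧
      ∀ W, GenBy T.x G' N W := by
  obtain ⟨ι', fi, G', γ, h1, -, h3⟩ := gen_exists_homog ℳ T.x m ⊥ hm N
    (fun u hu i => hN.hB _ (T.hxB i) u hu) hN.hgr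
  refine ⟨ι', fi, G', h1, fun W u hu => ?_⟩
  obtain ⟨c, hc⟩ := h3 u hu
  refine ⟨c, ?_⟩
  have h0 : u - ∑ i, MvPolynomial.aeval T.x (c i) • G' i = 0 := by simpa using hc
  rw [h0]; exact zero_mem _

lemma Ctx.sub_fin (T : Ctx 𝒜 p d) {ι : Type} [Fintype ι] (m : ι → M)
    (hm : GenBy T.x m ⊤ ((⊥ : Submodule R M).restrictScalars k))
    {N : Submodule k M} (hN : T.Sub ℳ N) (n : ℕ) :
    rd N (Qn T.I (p ^ n) N) ≠ ⊤ := by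
  obtain ⟨ι', fi, G', h1, h2⟩ := T.sub_gen m hm hN
  refine ne_top_of_le_ne_top (ENat.natCast_ne_top _)
    (rd_bound T.x (T.c * p ^ n) G' N _ (h2 _) fun i j P => ?_)
  exact Qn_pow T.I (p ^ n) N T.x (fun u hu i => hN.hB _ (T.hxB i) u hu) T.c j (T.hxc j) P _ (h1 i)

lemma Ctx.sub_tors (T : Ctx 𝒜 p d) {ι : Type} [Fintype ι] (m : ι → M)
    (hm : GenBy T.x m ⊤ ((⊥ : Submodule R M).restrictScalars k))
    {N : Submodule k M} (hN : T.Sub ℳ N) (s : MvPolynomial (Fin d) k) (hs : s ≠ 0) :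
    ∃ C : ℕ, ∀ n, rd N (N.map (mulL k M (MvPolynomial.aeval T.x s)) ⊔ Qn T.I (p ^ n) N) *
      ((T.c * p ^ n : ℕ) : ℕ∞) ≤ ((C * (T.c * p ^ n) ^ d : ℕ) : ℕ∞) := by
  obtain ⟨ι', fi, G', h1, h2⟩ := T.sub_gen m hm hN
  obtain ⟨C, hC⟩ := rd_torsion (V := M) (ι := ι') T.x s hs
  refine ⟨C, fun n => hC _ G' N _ (h2 _) (fun i P => ?_) (fun i j P => ?_)⟩
  · refine (le_sup_left : N.map _ ≤ _) ⟨MvPolynomial.aeval T.x P • G' i,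
      hN.hB _ (aeval_mem_sub T.x T.B T.hxB P) _ (h1 i), ?_⟩
    rw [mulL_apply, map_mul, mul_smul]
  · exact (le_sup_right : Qn T.I (p ^ n) N ≤ _) (Qn_pow T.I (p ^ n) N T.x
      (fun u hu i => hN.hB _ (T.hxB i) u hu) T.c j (T.hxc j) P _ (h1 i))

/-- lower bound for one step of the filtration -/
lemma Ctx.lower_step [Fact p.Prime] [CharP k p] (T : Ctx 𝒜 p d) [Nontrivial (R ⧸ T.𝔞)]
    {ιR : Type} [Fintype ιR] (GR : ιR → R)
    (hGR : GenBy T.x GR ⊤ (T.𝔞.restrictScalars k))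
    (h𝒱 : ∀ (a b : ℤ), ∀ r ∈ 𝒜 a, ∀ x ∈ ℳ b, r • x ∈ ℳ (a + b))
    (h0 : ∀ a ∈ T.𝔞, ∀ v : M, a • v = 0)
    {ι : Type} [Fintype ι] (mm : ι → M)
    (hmm : GenBy T.x mm ⊤ ((⊥ : Submodule R M).restrictScalars k))
    {N : Submodule k M} (hN : T.Sub ℳ N) {m : M} {μ : ℤ} (hm : m ∈ ℳ μ) (e : ℕ)
    (he : ∀ n, e ≤ n → ∀ r : R, r ^ p ^ n ∈ T.B) :
    ∃ (C : ℕ) (X : ℕ → ℕ∞), (∀ n, X n * ((T.c * p ^ n : ℕ) : ℕ∞) ≤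
        ((C * (T.c * p ^ n) ^ d : ℕ) : ℕ∞)) ∧
      ∀ n, e ≤ n → rd T.U (T.W (T.J N m) n) + rd N (Qn T.I (p ^ n) N) ≤
        rd (N ⊔ T.U.map (psi k m)) (Qn T.I (p ^ n) (N ⊔ T.U.map (psi k m))) + X n := by
  have hJ := T.J_good h𝒱 h0 hN hm
  obtain ⟨s, hs, u, hu, hsu⟩ := reg_R T.x p T.𝔞 GR hGR T.B T.hxB T.f T.hf T.hfB (T.J N m)
    hJ.hJB hJ.hJ
  obtain ⟨C, hC⟩ := T.sub_tors mm hmm hN s hs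
  refine ⟨C, _, hC, fun n hn => ?_⟩
  set N' := N ⊔ T.U.map (psi k m) with hN'
  have hQN : Qn T.I (p ^ n) N ≤ N := T.Qn_le hN.hB n (he n hn)
  have hQU : Qn T.I (p ^ n) T.U ≤ T.U :=
    T.Qn_le (fun b hb v hv => T.B.mul_mem hb hv) n (he n hn)
  have hQN' := Qn_sup_map T.I (p ^ n) N T.U m
  rw [← hN'] at hQN'
  have h1 : rd T.U (T.W (T.J N m) n) ≤ rd N' (N ⊔ Qn T.I (p ^ n) N') := by
    refine le_trans ?_ (rd_mono_left _ (le_sup_right : T.U.map (psi k m) ≤ N'))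
    rw [rd_map]
    apply rd_anti_inf
    rintro b ⟨hb, hb'⟩
    have hb2 : psi k m b ∈ N ⊔ (Qn T.I (p ^ n) T.U).map (psi k m) := by
      refine (sup_le le_sup_left (hQN'.trans ?_) : N ⊔ Qn T.I (p ^ n) N' ≤ _) hb'
      exact sup_le_sup_right hQN _
    obtain ⟨v, hv, _, ⟨β, hβ, rfl⟩, hvb⟩ := Submodule.mem_sup.1 hb2
    have : b = (b - β) + β := by ring
    rw [this]
    refine Submodule.add_mem_sup ⟨sub_mem hb (hQU hβ), ?_⟩ hβ
    show psi k m (b - β) ∈ N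
    rw [map_sub, ← hvb, add_sub_cancel_right]
    exact hv
  have h2 : N ⊓ Qn T.I (p ^ n) N' ≤
      N ⊓ (Qn T.I (p ^ n) N).comap (mulL k M (MvPolynomial.aeval T.x s)) := by
    rintro z ⟨hz, hz'⟩
    refine ⟨hz, ?_⟩
    show MvPolynomial.aeval T.x s • z ∈ Qn T.I (p ^ n) N
    have hsB := aeval_mem_sub T.x T.B T.hxB s
    obtain ⟨q', hq', _, ⟨β, hβ, rfl⟩, rfl⟩ := Submodule.mem_sup.1 (hQN' hz')
    have hβJ : β ∈ T.J N m := by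
      refine ⟨hQU hβ, ?_⟩
      show psi k m β ∈ N
      have := sub_mem hz (hQN hq')
      rwa [add_sub_cancel_left] at this
    rw [smul_add]
    refine add_mem (Qn_stable T.I (p ^ n) N _ (hN.hB _ hsB) _ hq') ?_
    have h3 := h0 _ (hsu β hβJ) m
    rw [sub_mul, sub_smul, sub_eq_zero] at h3
    rw [psi_apply, ← mul_smul, h3, mul_comm, mul_smul]
    have hum : u • m ∈ N := hu.2
    exact Qn_map_psi T.I (p ^ n) T.U N (u • m) (fun b hb => hN.hB b hb _ hum) β hβ
  have h3 : rd (N ⊓ Qn T.I (p ^ n) N') (Qn T.I (p ^ n) N) ≤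
      rd N (N.map (mulL k M (MvPolynomial.aeval T.x s)) ⊔ Qn T.I (p ^ n) N) := by
    refine (rd_mono_left _ h2).trans (rd_ker_coker _ ?_ ?_ (T.sub_fin mm hmm hN n))
    · rintro _ ⟨v, hv, rfl⟩
      exact hN.hB _ (aeval_mem_sub T.x T.B T.hxB s) _ hv
    · rintro _ ⟨v, hv, rfl⟩
      exact Qn_stable T.I (p ^ n) N _ (hN.hB _ (aeval_mem_sub T.x T.B T.hxB s)) _ hv
  have h4 := rd_le_add N (Qn T.I (p ^ n) N) (Qn T.I (p ^ n) N')
  have h5 := rd_add (Qn T.I (p ^ n) N') (le_sup_left : N ≤ N')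
  rw [h5]
  calc _ ≤ rd N' (N ⊔ Qn T.I (p ^ n) N') +
        (rd N (N.map (mulL k M (MvPolynomial.aeval T.x s)) ⊔ Qn T.I (p ^ n) N) +
          rd N (Qn T.I (p ^ n) N')) := add_le_add h1 (h4.trans (by gcongr))
    _ = _ := by ring

/-- upper bound for one step of the filtration -/
lemma Ctx.upper_step [Fact p.Prime] [CharP R p] (T : Ctx 𝒜 p d)
    (h𝒱 : ∀ (a b : ℤ), ∀ r ∈ 𝒜 a, ∀ x ∈ ℳ b, r • x ∈ ℳ (a + b))
    (h0 : ∀ a ∈ T.𝔞, ∀ v : M, a • v = 0)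
    {N : Submodule k M} (hN : T.Sub ℳ N) {m : M} {μ : ℤ} (hm : m ∈ ℳ μ) (n : ℕ) (j : ℤ) :
    rd ((N ⊔ T.U.map (psi k m)) ⊓ ℳ j) (Qn T.I (p ^ n) (⊤ : Submodule k M)) ≤
      rd (N ⊓ ℳ j) (Qn T.I (p ^ n) (⊤ : Submodule k M)) +
        rd (T.U ⊓ 𝒜 (j - μ)) (T.W (T.J N m) n) := by
  set Q := Qn T.I (p ^ n) (⊤ : Submodule k M)
  have hJ := T.J_good h𝒱 h0 hN hm
  rw [rd_add Q (inf_le_inf_right (ℳ j) (le_sup_left : N ≤ N ⊔ T.U.map (psi k m)))]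
  gcongr
  have h1 : (N ⊔ T.U.map (psi k m)) ⊓ ℳ j ≤
      (T.U ⊓ 𝒜 (j - μ)).map (psi k m) ⊔ (N ⊓ ℳ j ⊔ Q) := by
    rintro v ⟨hv, hvj⟩
    obtain ⟨w, hw, _, ⟨b, hb, rfl⟩, rfl⟩ := Submodule.mem_sup.1 hv
    rw [← grP_same ℳ hvj, map_add, grP_psi h𝒱 m μ hm, add_comm]
    refine Submodule.add_mem_sup ⟨_, ⟨T.hBgr b hb _, grP_mem 𝒜 _ _⟩, rfl⟩ ?_
    exact (le_sup_left : N ⊓ ℳ j ≤ _) ⟨hN.hgr w hw j, grP_mem ℳ _ _⟩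
  refine (rd_mono_left _ h1).trans ?_
  rw [rd_sup_right, rd_map]
  apply rd_anti_inf
  rintro b ⟨⟨-, hbj⟩, hbW⟩
  obtain ⟨a, ha, β, hβ, rfl⟩ := Submodule.mem_sup.1 hbW
  show psi k m (a + β) ∈ N ⊓ ℳ j ⊔ Q
  rw [← grP_same 𝒜 hbj, map_add, map_add]
  refine Submodule.add_mem_sup ⟨(hJ.hgr a ha (j - μ)).2, ?_⟩ ?_
  · have := h𝒱 _ _ _ (grP_mem 𝒜 (j - μ) a) _ hm
    rw [sub_add_cancel] at this
    exact this
  · refine Qn_map_psi T.I (p ^ n) T.U ⊤ m (fun _ _ => trivial) _ ?_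
    exact Qn_isGr p 𝒜 𝒜 (fun _ _ _ hr _ hx => SetLike.mul_mem_graded hr hx) T.I T.hI n T.U
      T.hBgr β hβ _

/-- the filtration -/
def Ctx.Ml (T : Ctx 𝒜 p d) (m : ℕ → M) : ℕ → Submodule k M
  | 0 => ⊥
  | l + 1 => T.Ml m l ⊔ T.U.map (psi k (m l))

lemma Ctx.Ml_sub (T : Ctx 𝒜 p d)
    (h𝒱 : ∀ (a b : ℤ), ∀ r ∈ 𝒜 a, ∀ x ∈ ℳ b, r • x ∈ ℳ (a + b))
    (m : ℕ → M) (μ : ℕ → ℤ) (hm : ∀ l, m l ∈ ℳ (μ l)) (l : ℕ) : T.Sub ℳ (T.Ml m l) := by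
  induction l with
  | zero =>
    constructor
    · intro w hw j
      have : w = 0 := by simpa [Ctx.Ml] using hw
      rw [this, map_zero]; exact zero_mem _
    · intro b _ v hv
      have : v = 0 := by simpa [Ctx.Ml] using hv
      rw [this, smul_zero]; exact zero_mem _
  | succ l ih => exact T.sub_next h𝒱 ih (hm l)

lemma Ctx.Ml_mem (T : Ctx 𝒜 p d) (m : ℕ → M) (g l : ℕ) (hl : l < g) (b : R) (hb : b ∈ T.B) :
    b • m l ∈ T.Ml m g := by
  induction g with
  | zero => omega
  | succ g ih =>
    by_cases h : l = g
    · subst h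
      exact (le_sup_right : T.U.map (psi k (m l)) ≤ _) ⟨b, hb, rfl⟩
    · exact (le_sup_left : T.Ml m g ≤ _) (ih (by omega))

lemma Ctx.lower [Fact p.Prime] [CharP k p] (T : Ctx 𝒜 p d) [Nontrivial (R ⧸ T.𝔞)]
    {ιR : Type} [Fintype ιR] (GR : ιR → R)
    (hGR : GenBy T.x GR ⊤ (T.𝔞.restrictScalars k))
    (h𝒱 : ∀ (a b : ℤ), ∀ r ∈ 𝒜 a, ∀ x ∈ ℳ b, r • x ∈ ℳ (a + b))
    (h0 : ∀ a ∈ T.𝔞, ∀ v : M, a • v = 0)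
    {ι : Type} [Fintype ι] (mm : ι → M)
    (hmm : GenBy T.x mm ⊤ ((⊥ : Submodule R M).restrictScalars k))
    (m : ℕ → M) (μ : ℕ → ℤ) (hm : ∀ l, m l ∈ ℳ (μ l)) (e : ℕ)
    (he : ∀ n, e ≤ n → ∀ r : R, r ^ p ^ n ∈ T.B) (g : ℕ) :
    ∃ (C : ℕ) (X : ℕ → ℕ∞), (∀ n, X n * ((T.c * p ^ n : ℕ) : ℕ∞) ≤
        ((C * (T.c * p ^ n) ^ d : ℕ) : ℕ∞)) ∧
      ∀ n, e ≤ n → ∑ l ∈ Finset.range g, rd T.U (T.W (T.J (T.Ml m l) (m l)) n) ≤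
        rd (T.Ml m g) (Qn T.I (p ^ n) (T.Ml m g)) + X n := by
  induction g with
  | zero => exact ⟨0, fun _ => 0, by simp, by simp⟩
  | succ g ih =>
    obtain ⟨C, X, h1, h2⟩ := ih
    obtain ⟨C', X', h1', h2'⟩ := T.lower_step GR hGR h𝒱 h0 mm hmm (T.Ml_sub h𝒱 m μ hm g) (hm g) e he
    refine ⟨C + C', fun n => X n + X' n, fun n => ?_, fun n hn => ?_⟩
    · rw [add_mul, add_mul, Nat.cast_add]
      exact add_le_add (h1 n) (h1' n)
    · rw [Finset.sum_range_succ]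
      calc _ ≤ rd (T.Ml m g) (Qn T.I (p ^ n) (T.Ml m g)) + X n +
            rd T.U (T.W (T.J (T.Ml m g) (m g)) n) := by gcongr; exact h2 n hn
        _ = (rd T.U (T.W (T.J (T.Ml m g) (m g)) n) +
            rd (T.Ml m g) (Qn T.I (p ^ n) (T.Ml m g))) + X n := by ring
        _ ≤ (rd (T.Ml m (g + 1)) (Qn T.I (p ^ n) (T.Ml m (g + 1))) + X' n) + X n := by
            exact add_le_add (h2' n hn) le_rfl
        _ = _ := by ring

lemma Ctx.upper [Fact p.Prime] [CharP R p] (T : Ctx 𝒜 p d)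
    (h𝒱 : ∀ (a b : ℤ), ∀ r ∈ 𝒜 a, ∀ x ∈ ℳ b, r • x ∈ ℳ (a + b))
    (h0 : ∀ a ∈ T.𝔞, ∀ v : M, a • v = 0)
    (m : ℕ → M) (μ : ℕ → ℤ) (hm : ∀ l, m l ∈ ℳ (μ l)) (n : ℕ) (j : ℤ) (g : ℕ) :
    rd (T.Ml m g ⊓ ℳ j) (Qn T.I (p ^ n) (⊤ : Submodule k M)) ≤
      ∑ l ∈ Finset.range g, rd (T.U ⊓ 𝒜 (j - μ l)) (T.W (T.J (T.Ml m l) (m l)) n) := by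
  induction g with
  | zero =>
    rw [rd_eq_zero]
    · exact zero_le
    · exact (inf_le_left : _ ≤ T.Ml m 0).trans bot_le
  | succ g ih =>
    rw [Finset.sum_range_succ]
    refine (T.upper_step h𝒱 h0 (T.Ml_sub h𝒱 m μ hm g) (hm g) n j).trans ?_
    gcongr

end modpart

section analysis

theorem conv_sum (p d e g : ℕ) (hp : 2 ≤ p) (h : ℕ → ℕ → ℤ →₀ ℝ) (μ : ℕ → ℤ) (H : ℕ → ℤ →₀ ℝ)
    (C D : ℝ) (hD0 : 0 ≤ D)
    (hpos : ∀ l n j, 0 ≤ h l n j)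
    (hsupp : ∀ l n j, h l n j ≠ 0 → |(j : ℝ)| ≤ D * (p : ℝ) ^ n)
    (hT : ∀ l n, mass (h l n) ≤ C * ((p : ℝ) ^ n) ^ d)
    (hHsupp : ∀ n j, H n j ≠ 0 → |(j : ℝ)| ≤ D * (p : ℝ) ^ n)
    (hle : ∀ n j, H n j ≤ ∑ l ∈ Finset.range g, h l n (j - μ l))
    (hmass : ∀ n, e ≤ n → ∑ l ∈ Finset.range g, mass (h l n) ≤
      mass (H n) + C * ((p : ℝ) ^ n) ^ d / (p : ℝ) ^ n)
    (hconv : ∀ l, ∃ F : ℂ → ℂ, ∀ K : Set ℂ, IsCompact K →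
      TendstoUniformlyOn (fun n y => Gn p d n (h l n) y) F atTop K) :
    ∃ F : ℂ → ℂ, ∀ K : Set ℂ, IsCompact K →
      TendstoUniformlyOn (fun n y => Gn p d n (H n) y) F atTop K := by
  have hp0 : 0 < p := by omega
  choose F hF using hconv
  refine ⟨fun y => ∑ l ∈ Finset.range g, F l y, fun K hK => ?_⟩
  obtain ⟨Y, hY⟩ := hK.isBounded.exists_norm_le
  set W : ℝ := ∑ l ∈ Finset.range g, |(μ l : ℝ)| with hW
  have hWl : ∀ l ∈ Finset.range g, |(μ l : ℝ)| ≤ W := fun l hl =>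
    Finset.single_le_sum (f := fun l => |(μ l : ℝ)|) (fun _ _ => abs_nonneg _) hl
  have hW0 : 0 ≤ W := Finset.sum_nonneg fun _ _ => abs_nonneg _
  set G : ℕ → ℤ →₀ ℝ := fun n => ∑ l ∈ Finset.range g, (h l n).mapDomain (fun j => j + μ l) with hG
  have hGa : ∀ n j, G n j = ∑ l ∈ Finset.range g, h l n (j - μ l) := by
    intro n j
    rw [hG, Finsupp.finsetSum_apply]
    refine Finset.sum_congr rfl fun l _ => ?_
    have hinj : Function.Injective (fun j : ℤ => j + μ l) := add_left_injective _
    have := Finsupp.mapDomain_apply hinj (h l n) (j - μ l)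
    simpa using this
  have hmG : ∀ n, mass (G n) = ∑ l ∈ Finset.range g, mass (h l n) := by
    intro n; rw [hG, mass_sum]; exact Finset.sum_congr rfl fun l _ => mass_mapDomain _ _
  set E : ℝ := Real.exp (Y * (D + W)) with hE
  set E1 : ℝ := Real.exp (Y * D) * (Y * W * Real.exp (Y * W)) with hE1
  set E0 : ℝ := E * C + g * (E1 * C) with hE0
  have herr : ∀ n, e ≤ n → ∀ y ∈ K,
      ‖Gn p d n (H n) y - ∑ l ∈ Finset.range g, Gn p d n (h l n) y‖ ≤ E0 / (p : ℝ) ^ n := by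
    intro n hn y hy
    have hq : (0 : ℝ) < (p : ℝ) ^ n := by
      have : (0 : ℝ) < p := by exact_mod_cast hp0
      positivity
    have hq1 : (1 : ℝ) ≤ (p : ℝ) ^ n := by exact_mod_cast Nat.one_le_pow _ _ hp0
    have hYy := hY y hy
    have hY0 : 0 ≤ Y := (norm_nonneg y).trans hYy
    have h1 : ‖pair (H n) (wt p n y) - pair (G n) (wt p n y)‖ ≤
        E * (C * ((p : ℝ) ^ n) ^ d / (p : ℝ) ^ n) := by
      refine (norm_pair_sub_le (H n) (G n) (fun _ => 0) (fun _ => le_rfl)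
        (fun j => by rw [add_zero, hGa]; exact hle n j) 0 (fun s => by simp) (wt p n y) E
        (Real.exp_pos _).le ?_).trans ?_
      · intro j hj
        refine norm_wt_le p n hp0 y j (D + W) Y ?_ hYy
        rcases hj with hj | hj
        · refine (hHsupp n j hj).trans ?_
          gcongr; linarith
        · rw [hGa] at hj
          obtain ⟨l, hl, hlj⟩ := Finset.exists_ne_zero_of_sum_ne_zero hj
          have h2 := hsupp l n _ hlj
          have h3 := hWl l hl
          push_cast at h2
          have h4 : |(j : ℝ)| ≤ |(j : ℝ) - μ l| + |(μ l : ℝ)| := by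
            have := abs_add_le ((j : ℝ) - μ l) (μ l)
            simpa using this
          nlinarith
      · have := hmass n hn
        gcongr
        rw [hmG]; linarith
    have h2 : ‖pair (G n) (wt p n y) - ∑ l ∈ Finset.range g, pair (h l n) (wt p n y)‖ ≤
        g * ((E1 / (p : ℝ) ^ n) * (C * ((p : ℝ) ^ n) ^ d)) := by
      rw [hG, pair_sum, ← Finset.sum_sub_distrib]
      refine (norm_sum_le _ _).trans ?_
      have : ∀ l ∈ Finset.range g, ‖pair ((h l n).mapDomain (fun j => j + μ l)) (wt p n y) -
          pair (h l n) (wt p n y)‖ ≤ (E1 / (p : ℝ) ^ n) * (C * ((p : ℝ) ^ n) ^ d) := by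
        intro l hl
        rw [pair_mapDomain, pair_sub_weight]
        refine (norm_pair_le_mass (h l n) (hpos l n) _ (E1 / (p : ℝ) ^ n) ?_).trans ?_
        · intro j hj
          exact wt_shift p n hp0 y j (μ l) D W Y (hsupp l n j (Finsupp.mem_support_iff.1 hj))
            (hWl l hl) hYy
        · have : 0 ≤ E1 := by positivity
          exact mul_le_mul_of_nonneg_left (hT l n) (by positivity)
      refine (Finset.sum_le_sum this).trans ?_
      rw [Finset.sum_const, Finset.card_range, nsmul_eq_mul]
    have h3 : Gn p d n (H n) y - ∑ l ∈ Finset.range g, Gn p d n (h l n) y =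
        (1 / (p : ℂ) ^ n) ^ d * ((pair (H n) (wt p n y) - pair (G n) (wt p n y)) +
          (pair (G n) (wt p n y) - ∑ l ∈ Finset.range g, pair (h l n) (wt p n y))) := by
      unfold Gn
      rw [← Finset.mul_sum]; ring
    rw [h3, norm_mul]
    have h4 : ‖(1 / (p : ℂ) ^ n) ^ d‖ = (1 / (p : ℝ) ^ n) ^ d := by simp
    rw [h4]
    calc _ ≤ (1 / (p : ℝ) ^ n) ^ d * (E * (C * ((p : ℝ) ^ n) ^ d / (p : ℝ) ^ n) +
          g * ((E1 / (p : ℝ) ^ n) * (C * ((p : ℝ) ^ n) ^ d))) := by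
          gcongr
          exact (norm_add_le _ _).trans (add_le_add h1 h2)
      _ = E0 / (p : ℝ) ^ n := by
          rw [hE0, one_div, inv_pow]
          field_simp
  have hsum : TendstoUniformlyOn (fun n y => ∑ l ∈ Finset.range g, Gn p d n (h l n) y)
      (fun y => ∑ l ∈ Finset.range g, F l y) atTop K := by
    clear_value G W E E1 E0
    clear hle hmass herr hWl hGa hmG hW hG hE0
    induction g with
    | zero =>
      simp only [Finset.range_zero, Finset.sum_empty]
      intro u hu
      exact Filter.Eventually.of_forall fun n y _ => refl_mem_uniformity hu
    | succ g ih =>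
      simp only [Finset.sum_range_succ]
      exact ih.add (hF g K hK)
  have hzero : TendstoUniformlyOn (fun n y => Gn p d n (H n) y -
      ∑ l ∈ Finset.range g, Gn p d n (h l n) y) (fun _ => 0) atTop K := by
    rw [Metric.tendstoUniformlyOn_iff]
    intro ε hε
    have hlim : Tendsto (fun n : ℕ => E0 / (p : ℝ) ^ n) atTop (nhds 0) := by
      apply Tendsto.div_atTop tendsto_const_nhds
      exact tendsto_pow_atTop_atTop_of_one_lt (by exact_mod_cast hp)
    filter_upwards [hlim.eventually_lt_const hε, eventually_ge_atTop e] with n hn hne y hy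
    rw [dist_zero_left]
    exact (herr n hne y hy).trans_lt hn
  have := hsum.add hzero
  refine (this.congr ?_).congr_right ?_
  · filter_upwards with n y _
    simp
  · intro y _
    simp

end analysis

section final

variable {k R M : Type} [Field k] [CommRing R] [Algebra k R] {𝒜 : ℤ → Submodule k R}
    [GradedAlgebra 𝒜] {p d : ℕ}
    [AddCommGroup M] [Module R M] [Module k M] [IsScalarTower k R M]
    {ℳ : ℤ → Submodule k M} [DirectSum.Decomposition ℳ]

lemma ann_isGr (h𝒱 : ∀ (a b : ℤ), ∀ r ∈ 𝒜 a, ∀ x ∈ ℳ b, r • x ∈ ℳ (a + b)) :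
    IsGr 𝒜 ((Module.annihilator R M).restrictScalars k) := by
  intro r hr i
  rw [Submodule.restrictScalars_mem, Module.mem_annihilator] at hr ⊢
  intro v
  have : v ∈ LinearMap.ker (mulL k M (grP 𝒜 i r)) := by
    apply grP_ind ℳ
    intro j
    rw [LinearMap.mem_ker, mulL_apply]
    have h1 := grP_psi h𝒱 (grP ℳ j v) j (grP_mem ℳ j v) (i + j) r
    rw [add_sub_cancel_right, psi_apply, psi_apply, hr, map_zero] at h1
    exact h1.symm
  exact this

lemma gen_M [Module.Finite R M] (x : Fin d → R) {ι : Type} [Fintype ι] (G : ι → R)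
    (hG : GenBy x G ⊤ ((Module.annihilator R M).restrictScalars k)) :
    ∃ (t : ℕ) (mm : ι × Fin t → M), GenBy x mm ⊤ ((⊥ : Submodule R M).restrictScalars k) := by
  obtain ⟨t, s, hs⟩ := Module.Finite.exists_fin (R := R) (M := M)
  refine ⟨t, fun a => G a.1 • s a.2, fun v _ => ?_⟩
  have hv : v ∈ Submodule.span R (Set.range s) := by rw [hs]; trivial
  obtain ⟨r, hr⟩ := (Submodule.mem_span_range_iff_exists_fun R).1 hv
  choose c hc using fun j => hG (r j) trivial
  refine ⟨fun a => c a.2 a.1, ?_⟩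
  have h1 : ∀ j, r j • s j = ∑ i, MvPolynomial.aeval x (c j i) • G i • s j := by
    intro j
    have h2 := hc j
    rw [Submodule.restrictScalars_mem, Module.mem_annihilator] at h2
    have h3 := h2 (s j)
    rw [sub_smul, sub_eq_zero, Finset.sum_smul] at h3
    rw [h3]
    exact Finset.sum_congr rfl fun i _ => by rw [smul_assoc]
  have h4 : v - ∑ a : ι × Fin t, MvPolynomial.aeval x (c a.2 a.1) • G a.1 • s a.2 = 0 := by
    rw [sub_eq_zero, Fintype.sum_prod_type, Finset.sum_comm, ← hr]
    exact Finset.sum_congr rfl fun j _ => h1 j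
  rw [h4]; exact zero_mem _

lemma quotPieceDim_eq (N : Submodule R M) (j : ℤ) :
    quotPieceDim k ℳ N j = (rd (ℳ j) (N.restrictScalars k)).toNat := by
  unfold quotPieceDim rd
  have h1 : (ℳ j).map (N.mkQ.restrictScalars k) =
      ((ℳ j).map (N.restrictScalars k).mkQ).map
        (Submodule.Quotient.restrictScalarsEquiv k N).toLinearMap := by
    rw [← Submodule.map_comp]; rfl
  rw [h1]
  have h2 := LinearEquiv.finrank_map_eq (Submodule.Quotient.restrictScalarsEquiv k N)
    ((ℳ j).map (N.restrictScalars k).mkQ)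
  refine Eq.trans h2 ?_
  rw [Module.length_eq_rank]
  simp [Module.finrank]

lemma FnGen_eq (I : Ideal R) (n : ℕ) (L : ℕ)
    (hL : ∀ j : ℤ, (L : ℤ) < |j| → rd (ℳ j) (Qn I (p ^ n) (⊤ : Submodule k M)) = 0) (y : ℂ) :
    FnGen k ℳ I p d n y =
      Gn p d n (mkF fun j => rd (ℳ j) (Qn I (p ^ n) (⊤ : Submodule k M))) y := by
  have happ := mkF_apply _ L hL
  unfold FnGen Gn
  congr 1
  rw [pair_eq, tsum_eq_sum (s := (mkF fun j => rd (ℳ j) (Qn I (p ^ n) (⊤ : Submodule k M))).support)]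
  · refine Finset.sum_congr rfl fun j _ => ?_
    rw [happ, quotPieceDim_eq, bracket_eq_Qn I (p ^ n) (bracketPow I (p ^ n)) rfl, Complex.real_smul]
    simp [wt]
  · intro j hj
    rw [Finsupp.notMem_support_iff, happ] at hj
    rw [quotPieceDim_eq, bracket_eq_Qn I (p ^ n) (bracketPow I (p ^ n)) rfl]
    have : (rd (ℳ j) (Qn I (p ^ n) (⊤ : Submodule k M))).toNat = 0 := by exact_mod_cast hj
    rw [this]; simp

lemma Gn_diff (n : ℕ) (h : ℤ →₀ ℝ) : Differentiable ℂ (fun y => Gn p d n h y) := by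
  unfold Gn
  simp only [pair_eq, wt]
  fun_prop

lemma rd_top_le (W : Submodule k M) (L : ℕ)
    (hL : ∀ j : ℤ, (L : ℤ) < |j| → ℳ j ≤ W) :
    rd ⊤ W ≤ ∑ j ∈ Finset.Icc (-(L : ℤ)) L, rd (ℳ j) W := by
  refine le_trans ?_ (rd_finset_sup_le _ _ _)
  rw [← rd_sup_right (Finset.sup _ _)]
  refine rd_mono_left _ fun v _ => ?_
  apply grP_ind ℳ
  intro j
  by_cases hj : (L : ℤ) < |j|
  · exact (le_sup_right : W ≤ _) (hL j hj (grP_mem ℳ j v))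
  · have hjm : j ∈ Finset.Icc (-(L : ℤ)) L := by
      rw [Finset.mem_Icc]; exact abs_le.1 (not_lt.1 hj)
    exact Submodule.mem_sup_left ((Finset.le_sup (f := fun j => ℳ j) hjm) (grP_mem ℳ j v))

/-- construct the context -/
lemma ctx_exists [Algebra.FiniteType k R] [Fact p.Prime] [CharP R p]
    (h𝒜neg : ∀ t : ℤ, t < 0 → 𝒜 t = ⊥)
    (h𝒜zero : ∀ x ∈ 𝒜 0, ∃ c : k, algebraMap k R c = x)
    (I : Ideal R) (hI : Ideal.IsHomogeneous 𝒜 I) (hIfl : IsFiniteLength R (R ⧸ I))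
    (𝔞 : Ideal R) (h𝔞 : IsGr 𝒜 (𝔞.restrictScalars k)) (hd : ringKrullDim (R ⧸ 𝔞) ≤ d) :
    ∃ T : Ctx 𝒜 p d, T.I = I ∧ T.𝔞 = 𝔞 ∧
      (∃ e, ∀ n, e ≤ n → ∀ r : R, r ^ p ^ n ∈ T.B) ∧
      ∃ (m : ℕ) (G : Fin m → R), GenBy T.x G ⊤ (𝔞.restrictScalars k) := by
  obtain ⟨x, δ, hδ, hx, hfin⟩ := hsop_exists 𝒜 h𝒜neg h𝒜zero d 𝔞 hd
  obtain ⟨m, G, hG⟩ := nakayama 𝒜 h𝒜neg 𝔞 h𝔞 x δ hδ hx hfin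
  obtain ⟨e, f, hf, hfB⟩ := stab_R x p 𝔞 G hG
  choose c hc using fun i => pow_mem_I 𝒜 h𝒜neg I hI hIfl (x i) (δ i) (hδ i) (hx i)
  have hxB := fun i => x_mem_Rsub (k := k) x p e i
  have hgr := Rsub_isGr 𝒜 p x δ hx e
  obtain ⟨ι, fι, GB, γ, h1, h2, h3⟩ := gen_exists_homog 𝒜 x G 𝔞 hG
    (Subalgebra.toSubmodule (Rsub k x p e))
    (fun u hu i => (Rsub k x p e).mul_mem (hxB i) hu) hgr
  refine ⟨{ x := x, δ := δ, hx := hx, 𝔞 := 𝔞, I := I, hI := hI, c := 1 + ∑ i, c i, hc := by omega,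
            hxc := ?_, B := Rsub k x p e, hxB := hxB, hBgr := hgr, f := f, hf := hf, hfB := ?_,
            ι := ι, fι := fι, G := GB, γ := γ, hGB := h1, hGγ := h2, hG := h3 }, rfl, rfl,
            ⟨e, ?_⟩, m, G, hG⟩
  · intro i
    have : c i ≤ ∑ i, c i := Finset.single_le_sum (f := c) (fun _ _ => Nat.zero_le _)
      (Finset.mem_univ i)
    have h' : c i ≤ 1 + ∑ i, c i := by omega
    show x i ^ (1 + ∑ i, c i) ∈ I
    rw [← Nat.sub_add_cancel h', pow_add]
    exact I.mul_mem_left _ (hc i)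
  · intro b hb
    obtain ⟨r, hr, h⟩ := hfB b hb
    exact ⟨r, Rsub_le_Npow x p e hr, h⟩
  · intro n hn r
    have : r ^ p ^ n = (r ^ p ^ (n - e)) ^ p ^ e := by
      rw [← pow_mul, ← pow_add, Nat.sub_add_cancel hn]
    rw [this]
    exact pow_mem_Rsub x p e _

/-- Uniform convergence for modules. -/
lemma conv_M [Module.Finite R M] [Fact p.Prime] [CharP R p] [CharP k p]
    (h𝒱 : ∀ (a b : ℤ), ∀ r ∈ 𝒜 a, ∀ x ∈ ℳ b, r • x ∈ ℳ (a + b))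
    (T : Ctx 𝒜 p d) (h𝔞 : T.𝔞 = Module.annihilator R M) [Nontrivial (R ⧸ T.𝔞)]
    (e : ℕ) (he : ∀ n, e ≤ n → ∀ r : R, r ^ p ^ n ∈ T.B)
    {ιR : Type} [Fintype ιR] (GR : ιR → R) (hGR : GenBy T.x GR ⊤ (T.𝔞.restrictScalars k)) :
    ∃ F : ℂ → ℂ, (∀ K : Set ℂ, IsCompact K →
      TendstoUniformlyOn (fun n y => FnGen k ℳ T.I p d n y) F atTop K) ∧
      ∀ n, Differentiable ℂ (fun y => FnGen k ℳ T.I p d n y) := by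
  have hp : p.Prime := Fact.out
  have h0 : ∀ a ∈ T.𝔞, ∀ v : M, a • v = 0 := by
    intro a ha v
    rw [h𝔞, Module.mem_annihilator] at ha
    exact ha v
  obtain ⟨t, mm, hmm⟩ := gen_M (M := M) T.x GR (by rw [← h𝔞]; exact hGR)
  have htopgr : IsGr ℳ (⊤ : Submodule k M) := fun _ _ _ => trivial
  obtain ⟨ι', fι', G', γ, -, hGγ, hG'⟩ := gen_exists_homog ℳ T.x mm ⊥ hmm ⊤
    (fun _ _ _ => trivial) htopgr
  obtain ⟨D1, hD1⟩ := T.supp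
  obtain ⟨D2, hD2⟩ := rd_supp 𝒜 ℳ h𝒱 T.x T.δ T.hx G' γ hGγ ⊤
  -- the support of the Hilbert function of `M`
  have hQsupp : ∀ n (j : ℤ), ((D2 * T.c * p ^ n : ℕ) : ℤ) < |j| →
      ℳ j ≤ Qn T.I (p ^ n) (⊤ : Submodule k M) := by
    intro n j hj
    have := hD2 (T.c * p ^ n) (Qn T.I (p ^ n) ⊤) (Nat.mul_pos T.hc (pow_pos hp.pos n))
      (Qn_isGr p 𝒜 ℳ h𝒱 T.I T.hI n ⊤ htopgr) ?_ ?_ j (by rwa [← mul_assoc])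
    · rwa [top_inf_eq] at this
    · intro u hu
      obtain ⟨c, hc⟩ := hG' u hu
      refine ⟨c, ?_⟩
      have h1 : u - ∑ i, MvPolynomial.aeval T.x (c i) • G' i = 0 := by simpa using hc
      rw [h1]; exact zero_mem _
    · intro i j P
      exact Qn_pow T.I (p ^ n) ⊤ T.x (fun _ _ _ => trivial) T.c j (T.hxc j) P _ trivial
  -- enumerate the generators
  set g := Fintype.card ι' with hg
  let eq := Fintype.equivFin ι'
  let m : ℕ → M := fun l => if h : l < g then G' (eq.symm ⟨l, h⟩) else 0
  let μ : ℕ → ℤ := fun l => if h : l < g then γ (eq.symm ⟨l, h⟩) else 0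
  have hm : ∀ l, m l ∈ ℳ (μ l) := by
    intro l
    by_cases h : l < g
    · simp only [m, μ, dif_pos h]; exact hGγ _
    · simp only [m, dif_neg h]; exact zero_mem _
  have htop : T.Ml m g = ⊤ := by
    rw [eq_top_iff]
    intro v hv
    obtain ⟨c, hc⟩ := hG' v hv
    have h1 : v - ∑ i, MvPolynomial.aeval T.x (c i) • G' i = 0 := by simpa using hc
    rw [sub_eq_zero.1 h1]
    refine Submodule.sum_mem _ fun i _ => ?_
    have h2 : m (eq i) = G' i := by
      have h3 : (eq i : ℕ) < g := (eq i).2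
      simp only [m, dif_pos h3, Fin.eta, Equiv.symm_apply_apply]
    rw [← h2]
    exact T.Ml_mem m g _ (eq i).2 _ (aeval_mem_sub T.x T.B T.hxB _)
  have hgood : ∀ l, T.Good (T.J (T.Ml m l) (m l)) := fun l =>
    T.J_good h𝒱 h0 (T.Ml_sub h𝒱 m μ hm l) (hm l)
  obtain ⟨C, X, hX, hlow⟩ := T.lower GR hGR h𝒱 h0 mm hmm m μ hm e he g
  rw [htop] at hlow
  set H : ℕ → ℤ →₀ ℝ := fun n => mkF fun j => rd (ℳ j) (Qn T.I (p ^ n) (⊤ : Submodule k M)) with hH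
  have hHz : ∀ n (j : ℤ), ((D2 * T.c * p ^ n : ℕ) : ℤ) < |j| →
      rd (ℳ j) (Qn T.I (p ^ n) (⊤ : Submodule k M)) = 0 := fun n j hj => rd_eq_zero (hQsupp n j hj)
  have hHa : ∀ n j, H n j = ((rd (ℳ j) (Qn T.I (p ^ n) (⊤ : Submodule k M))).toNat : ℝ) :=
    fun n j => mkF_apply _ _ (hHz n) j
  have hha : ∀ l n j, T.h (T.J (T.Ml m l) (m l)) n j =
      ((rd (T.U ⊓ 𝒜 j) (T.W (T.J (T.Ml m l) (m l)) n)).toNat : ℝ) := fun l n j =>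
    mkF_apply _ _ (hD1 _ (hgood l) n) j
  have hUfin : ∀ l n, rd T.U (T.W (T.J (T.Ml m l) (m l)) n) ≠ ⊤ := fun l n =>
    ne_top_of_le_ne_top (ENat.natCast_ne_top _) (T.rd_le (hgood l) n)
  have hUjfin : ∀ l n j, rd (T.U ⊓ 𝒜 j) (T.W (T.J (T.Ml m l) (m l)) n) ≠ ⊤ := fun l n j =>
    ne_top_of_le_ne_top (hUfin l n) (rd_mono_left _ inf_le_left)
  have hMfin : ∀ n, rd ⊤ (Qn T.I (p ^ n) (⊤ : Submodule k M)) ≠ ⊤ := by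
    intro n
    have := T.sub_fin mm hmm (T.Ml_sub h𝒱 m μ hm g) n
    rwa [htop] at this
  have hMjfin : ∀ n j, rd (ℳ j) (Qn T.I (p ^ n) (⊤ : Submodule k M)) ≠ ⊤ := fun n j =>
    ne_top_of_le_ne_top (hMfin n) (rd_mono_left _ le_top)
  have hFn : ∀ n y, FnGen k ℳ T.I p d n y = Gn p d n (H n) y := fun n y =>
    FnGen_eq T.I n _ (hHz n) y
  have hmh : ∀ l n, mass (T.h (T.J (T.Ml m l) (m l)) n) ≤
      ((rd T.U (T.W (T.J (T.Ml m l) (m l)) n)).toNat : ℝ) := by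
    intro l n
    refine mass_mkF_le _ _ (hD1 _ (hgood l) n) _ fun s => ?_
    rw [ENat.natCast_toNat (hUfin l n)]
    exact rd_sum_gr T.U _ (T.W_isGr (hgood l) n) s
  have key := conv_sum p d e g hp.two_le (fun l n => T.h (T.J (T.Ml m l) (m l)) n) μ H
    ((Fintype.card T.ι * T.c ^ d : ℕ) + (C * T.c ^ d : ℕ)) ((D1 + D2 * T.c : ℕ) : ℝ) (by positivity)
    ?_ ?_ ?_ ?_ ?_ ?_ (fun l => T.conv (hgood l))
  · obtain ⟨F, hF⟩ := key
    refine ⟨F, ?_, ?_⟩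
    · intro K hK
      simp only [hFn]
      exact hF K hK
    · intro n
      simp only [hFn]
      exact Gn_diff n (H n)
  · intro l n j; rw [hha]; positivity
  · intro l n j hj
    by_contra hlt
    apply hj
    rw [hha, hD1 _ (hgood l) n j]
    · simp
    · rw [not_le] at hlt
      have h1 : (((D1 + D2 * T.c) * p ^ n : ℕ) : ℝ) < ((|j| : ℤ) : ℝ) := by push_cast at hlt ⊢; exact hlt
      have h2 : (((D1 + D2 * T.c) * p ^ n : ℕ) : ℤ) < |j| := by exact_mod_cast h1
      refine lt_of_le_of_lt ?_ h2
      exact_mod_cast Nat.mul_le_mul_right _ (Nat.le_add_right _ _)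
  · intro l n
    refine (hmh l n).trans ?_
    have h1 := ENat.toNat_le_toNat (T.rd_le (hgood l) n) (ENat.natCast_ne_top _)
    rw [ENat.toNat_natCast] at h1
    have h2 : ((rd T.U (T.W (T.J (T.Ml m l) (m l)) n)).toNat : ℝ) ≤
      ((Fintype.card T.ι * T.c ^ d * (p ^ n) ^ d : ℕ) : ℝ) := by exact_mod_cast h1
    refine h2.trans ?_
    rw [add_mul]
    push_cast
    have : (0 : ℝ) ≤ (C * T.c ^ d : ℝ) * (p ^ n) ^ d := by positivity
    linarith
  · intro n j hj
    by_contra hlt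
    apply hj
    rw [hHa, hHz n j]
    · simp
    · rw [not_le] at hlt
      have h1 : (((D1 + D2 * T.c) * p ^ n : ℕ) : ℝ) < ((|j| : ℤ) : ℝ) := by push_cast at hlt ⊢; exact hlt
      have h2 : (((D1 + D2 * T.c) * p ^ n : ℕ) : ℤ) < |j| := by exact_mod_cast h1
      refine lt_of_le_of_lt ?_ h2
      exact_mod_cast Nat.mul_le_mul_right _ (Nat.le_add_left _ _)
  · intro n j
    rw [hHa]
    have h1 := T.upper h𝒱 h0 m μ hm n j g
    rw [htop, top_inf_eq] at h1
    have h2 : (rd (ℳ j) (Qn T.I (p ^ n) (⊤ : Submodule k M))).toNat ≤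
        ∑ l ∈ Finset.range g, (rd (T.U ⊓ 𝒜 (j - μ l)) (T.W (T.J (T.Ml m l) (m l)) n)).toNat := by
      rw [← Nat.cast_le (α := ℕ∞), ENat.natCast_toNat (hMjfin n j)]
      refine h1.trans (le_of_eq ?_)
      rw [Nat.cast_sum]
      exact Finset.sum_congr rfl fun l _ => (ENat.natCast_toNat (hUjfin l n _)).symm
    simp only [hha]
    exact_mod_cast h2
  · intro n hn
    have hq0 : 0 < T.c * p ^ n := Nat.mul_pos T.hc (pow_pos hp.pos n)
    have hXfin : X n ≠ ⊤ := by
      intro hXt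
      have := hX n
      rw [hXt, ENat.top_mul (by exact_mod_cast hq0.ne')] at this
      exact ENat.natCast_ne_top _ (top_le_iff.1 this)
    obtain ⟨r, hr⟩ := ENat.ne_top_iff_exists.1 hXfin
    have h1 : r * (T.c * p ^ n) ≤ C * (T.c * p ^ n) ^ d := by
      have := hX n
      rw [← hr] at this
      exact_mod_cast this
    have h2 : r * p ^ n ≤ C * T.c ^ d * (p ^ n) ^ d := by
      calc r * p ^ n ≤ r * (T.c * p ^ n) := by
            gcongr; exact Nat.le_mul_of_pos_left _ T.hc
        _ ≤ _ := h1
        _ = _ := by rw [mul_pow]; ring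
    have h3 := hlow n hn
    have h4 := rd_top_le (ℳ := ℳ) (Qn T.I (p ^ n) (⊤ : Submodule k M)) _ (hQsupp n)
    set S := Finset.Icc (-((D2 * T.c * p ^ n : ℕ) : ℤ)) ((D2 * T.c * p ^ n : ℕ) : ℤ) with hS
    have h5 : ∑ l ∈ Finset.range g, (rd T.U (T.W (T.J (T.Ml m l) (m l)) n)).toNat ≤
        ∑ j ∈ S, (rd (ℳ j) (Qn T.I (p ^ n) (⊤ : Submodule k M))).toNat + r := by
      rw [← Nat.cast_le (α := ℕ∞), Nat.cast_add, Nat.cast_sum, Nat.cast_sum,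
        Finset.sum_congr rfl fun l _ => ENat.natCast_toNat (hUfin l n),
        Finset.sum_congr rfl fun j _ => ENat.natCast_toNat (hMjfin n j), hr]
      exact h3.trans (by gcongr)
    have h6 : mass (H n) =
        ∑ j ∈ S, ((rd (ℳ j) (Qn T.I (p ^ n) (⊤ : Submodule k M))).toNat : ℝ) := by
      rw [mass_eq_of_subset (H n) S]
      · exact Finset.sum_congr rfl fun j _ => hHa n j
      · intro j hj
        rw [Finsupp.mem_support_iff] at hj
        by_contra hc
        apply hj
        rw [hHa, hHz n j]
        · simp
        · rw [hS, Finset.mem_Icc, ← abs_le] at hc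
          exact not_le.1 hc
    have h7 : ∑ l ∈ Finset.range g, ((rd T.U (T.W (T.J (T.Ml m l) (m l)) n)).toNat : ℝ) ≤
        mass (H n) + r := by
      rw [h6]; exact_mod_cast h5
    refine (Finset.sum_le_sum fun l _ => hmh l n).trans (h7.trans ?_)
    gcongr
    have hpn : (0 : ℝ) < (p : ℝ) ^ n := by
      have : (0 : ℝ) < p := by exact_mod_cast hp.pos
      positivity
    rw [le_div_iff₀ hpn]
    have h8 : (r : ℝ) * p ^ n ≤ C * T.c ^ d * (p ^ n) ^ d := by exact_mod_cast h2
    push_cast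
    have : (0 : ℝ) ≤ (Fintype.card T.ι * T.c ^ d : ℝ) * (p ^ n) ^ d := by positivity
    nlinarith

end final

theorem frobenius_poincare_exists
    (k R M : Type) [Field k] [CommRing R] [Algebra k R] [Algebra.FiniteType k R]
    (p : ℕ) (hp : p.Prime) [CharP R p]
    (𝒜 : ℤ → Submodule k R) [GradedAlgebra 𝒜]
    (h𝒜neg : ∀ t : ℤ, t < 0 → 𝒜 t = ⊥)
    (h𝒜zero : ∀ x ∈ 𝒜 0, ∃ c : k, algebraMap k R c = x)
    (I : Ideal R) (hI : Ideal.IsHomogeneous 𝒜 I) (hIfl : IsFiniteLength R (R ⧸ I))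
    [AddCommGroup M] [Module R M] [Module k M] [IsScalarTower k R M] [Module.Finite R M]
    (ℳ : ℤ → Submodule k M) [DirectSum.Decomposition ℳ]
    (hℳ : ∀ (a b : ℤ), ∀ r ∈ 𝒜 a, ∀ x ∈ ℳ b, r • x ∈ ℳ (a + b))
    (dM : ℕ) (hdM : ringKrullDim (R ⧸ Module.annihilator R M) = dM) :
    ∃ F : ℂ → ℂ,
      (∀ y : ℂ, Tendsto (fun n : ℕ => FnGen k ℳ I p dM n y) atTop (nhds (F y))) ∧
      (∀ K : Set ℂ, IsCompact K →
        TendstoUniformlyOn (fun n : ℕ => fun y : ℂ => FnGen k ℳ I p dM n y) F atTop K) ∧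
      Differentiable ℂ F := by
  have hfact : Fact p.Prime := ⟨hp⟩
  have hRnt : Nontrivial R := CharP.nontrivial_of_char_ne_one (v := p) hp.ne_one
  have hchk : CharP k p := (RingHom.charP_iff (algebraMap k R)
    (FaithfulSMul.algebraMap_injective k R) p).2 inferInstance
  have hnt : Nontrivial (R ⧸ Module.annihilator R M) := by
    by_contra hc
    rw [not_nontrivial_iff_subsingleton] at hc
    rw [ringKrullDim_eq_bot_of_subsingleton] at hdM
    exact absurd hdM.symm (WithBot.coe_ne_bot)
  obtain ⟨T, hTI, hTa, ⟨e, he⟩, m, G, hG⟩ := ctx_exists (p := p) h𝒜neg h𝒜zero I hI hIfl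
    (Module.annihilator R M) (ann_isGr hℳ) hdM.le
  have hnt' : Nontrivial (R ⧸ T.𝔞) := by rw [hTa]; exact hnt
  obtain ⟨F, hF, hdiff⟩ := conv_M hℳ T hTa e he G (by rw [hTa]; exact hG)
  rw [hTI] at hF hdiff
  refine ⟨F, ?_, hF, ?_⟩
  · intro y
    exact (hF {y} isCompact_singleton).tendsto_at (Set.mem_singleton y)
  · have h1 : TendstoLocallyUniformlyOn (fun n : ℕ => fun y : ℂ => FnGen k ℳ I p dM n y) F atTop
        Set.univ := by
      rw [tendstoLocallyUniformlyOn_iff_forall_isCompact isOpen_univ]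
      exact fun K _ hK => hF K hK
    have h2 := h1.differentiableOn (Filter.Eventually.of_forall fun n =>
      (hdiff n).differentiableOn) isOpen_univ
    exact differentiableOn_univ.1 h2

end
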